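/- arXiv:2509.17587 — 3 statements merged into one kernel-verified Lean document; each statement's English description precedes it below -/
import Mathlib

section
/- The subgroup G of the symmetric group on 44 points generated by the four permutations g1 = (1,2)(43,44), g2 = (1,2)(21,22), g3 = (1,39,13,43,25)(2,40,14,44,26)(3,37,15,41,27)(4,38,16,42,28)(5,35,23,17,31)(6,36,24,18,32)(7,33,21,19,29)(8,34,22,20,30), and g4 = (1,23,27,11,41)(2,24,28,12,42)(3,22,26,10,44,4,21,25,9,43)(5,16,20,40,32,6,15,19,39,31)(7,13,17,37,29)(8,14,18,38,30) has order 16609443840. -/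
/-- `(1,2)(43,44)` as a permutation of 44 points (the label `44` denotes `0 : Fin 44`). -/
def g1 : Equiv.Perm (Fin 44) := c[1, 2] * c[43, 44]

/-- `(1,2)(21,22)`. -/
def g2 : Equiv.Perm (Fin 44) := c[1, 2] * c[21, 22]

/-- `(1,39,13,43,25)(2,40,14,44,26)(3,37,15,41,27)(4,38,16,42,28)(5,35,23,17,31)
(6,36,24,18,32)(7,33,21,19,29)(8,34,22,20,30)`. -/
def g3 : Equiv.Perm (Fin 44) :=
  c[1, 39, 13, 43, 25] * c[2, 40, 14, 44, 26] * c[3, 37, 15, 41, 27] * c[4, 38, 16, 42, 28] *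
    c[5, 35, 23, 17, 31] * c[6, 36, 24, 18, 32] * c[7, 33, 21, 19, 29] * c[8, 34, 22, 20, 30]

/-- `(1,23,27,11,41)(2,24,28,12,42)(3,22,26,10,44,4,21,25,9,43)
(5,16,20,40,32,6,15,19,39,31)(7,13,17,37,29)(8,14,18,38,30)`. -/
def g4 : Equiv.Perm (Fin 44) :=
  c[1, 23, 27, 11, 41] * c[2, 24, 28, 12, 42] * c[3, 22, 26, 10, 44, 4, 21, 25, 9, 43] *
    c[5, 16, 20, 40, 32, 6, 15, 19, 39, 31] * c[7, 13, 17, 37, 29] * c[8, 14, 18, 38, 30]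

/-- `G_MacHale` is the subgroup generated by `g1`, `g2`, `g3`, `g4`. -/
def GMacHale : Subgroup (Equiv.Perm (Fin 44)) := Subgroup.closure {g1, g2, g3, g4}

/-!
The group permutes the 22 blocks `{1, 2}, {3, 4}, …, {43, 44}`, and the image of this action is the
Mathieu group `M11`, acting on the 22 signed coordinates of the ternary Golay code.

The elements fixing every block are exactly the even ones among the `2 ^ 22` permutations that do
so. Indeed all generators are even, and since the blocks form one orbit, all transpositions
`swap (2m - 1) (2m)` are conjugate under the group to `swap 1 2`. This transposition normalises the
group, so the product of two of its conjugates lies in the group. Hence the kernel of the action on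
the blocks has order `2 ^ 21`.

The order `11 * 10 * 9 * 8` of `M11` comes from Witt's construction: starting from the quaternion
group of order 8 acting regularly on 8 letters, one adds a letter and an involution three times, and
after each step the previous group is the stabiliser of the new letter.
-/

namespace GMacHale

open Subgroup DoubleCoset MulAction Equiv Equiv.Perm Pointwise

section RankOne

variable {G : Type*} [Group G] {B K : Subgroup G} {g h : G}

/-- `K` is the union of `B` and the single further double coset `B g B`, as for a
two-transitive group `K` with point stabiliser `B` and an element `g` moving that point. -/
def IsRankOneExtension (B K : Subgroup G) (g : G) : Prop :=
  (K : Set G) = (B : Set G) ∪ doubleCoset g B B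

namespace IsRankOneExtension

theorem mem_iff (hK : IsRankOneExtension B K g) {x : G} :
    x ∈ K ↔ x ∈ B ∨ ∃ b ∈ B, ∃ b' ∈ B, x = b * g * b' := by
  rw [← SetLike.mem_coe, hK, Set.mem_union, mem_doubleCoset]
  rfl

theorem le (hK : IsRankOneExtension B K g) : B ≤ K :=
  fun _ hb ↦ hK.mem_iff.2 (.inl hb)

theorem mem (hK : IsRankOneExtension B K g) : g ∈ K :=
  hK.mem_iff.2 (.inr ⟨1, one_mem B, 1, one_mem B, by simp⟩)

theorem sup_zpowers (hg : g * g ∈ B)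
    (hB : ∀ b ∈ B, g * b * g ∈ (B : Set G) ∪ doubleCoset g B B) :
    IsRankOneExtension B (B ⊔ zpowers g) g := by
  have mul_left {b x : G} (hb : b ∈ B) (hx : x ∈ (B : Set G) ∪ doubleCoset g B B) :
      b * x ∈ (B : Set G) ∪ doubleCoset g B B := by
    refine hx.imp (mul_mem hb) fun hx ↦ ?_
    obtain ⟨c, hc, c', hc', rfl⟩ := mem_doubleCoset.1 hx
    exact mem_doubleCoset.2 ⟨b * c, mul_mem hb hc, c', hc', by group⟩
  have mul_right {b x : G} (hb : b ∈ B) (hx : x ∈ (B : Set G) ∪ doubleCoset g B B) :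
      x * b ∈ (B : Set G) ∪ doubleCoset g B B := by
    refine hx.imp (mul_mem · hb) fun hx ↦ ?_
    obtain ⟨c, hc, c', hc', rfl⟩ := mem_doubleCoset.1 hx
    exact mem_doubleCoset.2 ⟨c, hc, c' * b, mul_mem hc' hb, by group⟩
  have g_mul {x : G} (hx : x ∈ (B : Set G) ∪ doubleCoset g B B) :
      g * x ∈ (B : Set G) ∪ doubleCoset g B B := by
    rcases hx with hx | hx
    · exact .inr (mem_doubleCoset.2 ⟨1, one_mem B, x, hx, by group⟩)
    · obtain ⟨c, hc, c', hc', rfl⟩ := mem_doubleCoset.1 hx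
      simpa only [mul_assoc] using mul_right hc' (hB c hc)
  refine Set.Subset.antisymm (fun x hx ↦ ?_) (Set.union_subset (le_sup_left (a := B)) ?_)
  · rw [← closure_eq B, zpowers_eq_closure, ← Subgroup.closure_union] at hx
    induction hx using closure_induction_left with
    | one => exact .inl (one_mem B)
    | mul_left y hy x _ ih =>
      obtain hy | rfl := hy
      exacts [mul_left hy ih, g_mul ih]
    | inv_mul_cancel y hy x _ ih =>
      obtain hy | rfl := hy
      · exact mul_left (inv_mem hy) ih
      · simpa [mul_assoc] using mul_left (inv_mem hg) (g_mul ih)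
  · intro x hx
    obtain ⟨c, hc, c', hc', rfl⟩ := mem_doubleCoset.1 hx
    exact mul_mem (mul_mem (mem_sup_left hc) (mem_sup_right (mem_zpowers g))) (mem_sup_left hc')

/-- Witt's extension lemma. -/
theorem sup_zpowers_of_braid (hK : IsRankOneExtension B K g) (hB : ∀ b ∈ B, h * b * h ∈ B)
    (hgh : (g * h) ^ 3 ∈ B) : IsRankOneExtension K (K ⊔ zpowers h) h := by
  have hh : h * h ∈ B := by simpa using hB 1 (one_mem B)
  refine sup_zpowers (hK.le hh) fun x hx ↦ ?_
  obtain hx | ⟨b, hb, b', hb', rfl⟩ := hK.mem_iff.1 hx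
  · exact .inl (hK.le (hB x hx))
  · have h_mul_h : h * (b * g * b') * h = (h * b * h * (h * h)⁻¹ * g⁻¹ * (g * h) ^ 3 * (h * h)⁻¹) *
        h * (g⁻¹ * (h * h)⁻¹ * (h * b' * h)) := by
      simp only [pow_succ, pow_zero]
      group
    refine .inr (mem_doubleCoset.2 ⟨_, ?_, _, ?_, h_mul_h⟩)
    · exact mul_mem (mul_mem (mul_mem (hK.le (mul_mem (hB b hb) (inv_mem hh)))
        (inv_mem hK.mem)) (hK.le hgh)) (hK.le (inv_mem hh))
    · exact mul_mem (mul_mem (inv_mem hK.mem) (hK.le (inv_mem hh))) (hK.le (hB b' hb'))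

variable {X : Type*} [MulAction G X] {x : X}

theorem orbit_eq (hK : IsRankOneExtension B K g) (hB : B ≤ stabilizer G x) :
    orbit K x = insert x (orbit B (g • x)) := by
  ext y
  constructor
  · rintro ⟨⟨k, hk⟩, rfl⟩
    obtain hk | ⟨b, hb, b', hb', rfl⟩ := hK.mem_iff.1 hk
    · exact .inl (hB hk)
    · exact .inr ⟨⟨b, hb⟩, by simp [Subgroup.smul_def, mul_smul, mem_stabilizer_iff.1 (hB hb')]⟩
  · rintro (rfl | ⟨⟨b, hb⟩, rfl⟩)
    · exact mem_orbit_self _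
    · exact ⟨⟨b * g, mul_mem (hK.le hb) hK.mem⟩, by simp [Subgroup.smul_def, mul_smul]⟩

theorem stabilizer_eq (hK : IsRankOneExtension B K g) (hB : B ≤ stabilizer G x)
    (hg : g • x ≠ x) : stabilizer K x = B.subgroupOf K := by
  ext ⟨k, hk⟩
  simp only [mem_stabilizer_iff, Subgroup.smul_def, mem_subgroupOf]
  refine ⟨fun hkx ↦ (hK.mem_iff.1 hk).resolve_right ?_, fun hkB ↦ hB hkB⟩
  rintro ⟨b, hb, b', hb', rfl⟩
  rw [mul_smul, mem_stabilizer_iff.1 (hB hb'), mul_smul, smul_eq_iff_eq_inv_smul,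
    mem_stabilizer_iff.1 (hB (inv_mem hb))] at hkx
  exact hg hkx

theorem ncard_orbit [Finite X] (hK : IsRankOneExtension B K g) (hB : B ≤ stabilizer G x)
    (hg : g • x ≠ x) : (orbit K x).ncard = (orbit B (g • x)).ncard + 1 := by
  rw [hK.orbit_eq hB, Set.ncard_insert_of_notMem]
  rintro ⟨⟨b, hb⟩, hbx : b • g • x = x⟩
  rw [smul_eq_iff_eq_inv_smul, mem_stabilizer_iff.1 (hB (inv_mem hb))] at hbx
  exact hg hbx

theorem card_eq (hK : IsRankOneExtension B K g) (hB : B ≤ stabilizer G x) (hg : g • x ≠ x) :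
    Nat.card K = (orbit K x).ncard * Nat.card B := by
  rw [← index_stabilizer, hK.stabilizer_eq hB hg]
  rw [← relIndex_bot_left B, ← relIndex_bot_left K, mul_comm]
  exact (relIndex_mul_relIndex ⊥ B K bot_le hK.le).symm

end IsRankOneExtension

end RankOne

theorem exists_eq_pow_mul_pow_of_mem_closure_pair {G : Type*} [Group G] {i j : G} {n r m : ℕ}
    [NeZero n] (hi : i ^ n = 1) (hjj : j ^ 2 = i ^ r) (hji : j * i = i ^ m * j) {x : G}
    (hx : x ∈ closure {i, j}) : ∃ (a : Fin n) (b : Fin 2), x = i ^ (a : ℕ) * j ^ (b : ℕ) := by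
  have hj : j ^ (2 * n) = 1 := by rw [pow_mul, hjj, pow_right_comm, hi, one_pow]
  suffices ∃ a b : ℕ, x = i ^ a * j ^ b by
    obtain ⟨a, b, rfl⟩ := this
    refine ⟨Fin.ofNat n (a + r * (b / 2)), Fin.ofNat 2 b, ?_⟩
    rw [Fin.val_ofNat, ← pow_eq_pow_mod _ hi, Fin.val_ofNat, pow_add, pow_mul, ← hjj, ← pow_mul,
      mul_assoc, ← pow_add, Nat.div_add_mod]
  rw [← mem_toSubmonoid, closure_toSubmonoid_of_isOfFinOrder] at hx
  · induction hx using Submonoid.closure_induction_left with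
    | one => exact ⟨0, 0, by simp⟩
    | mul_left y hy x _ ih =>
      obtain ⟨a, b, rfl⟩ := ih
      obtain rfl | rfl := hy
      · exact ⟨a + 1, b, by rw [pow_succ', mul_assoc]⟩
      · refine ⟨m * a, b + 1, ?_⟩
        rw [← mul_assoc, SemiconjBy.pow_right hji a, ← pow_mul, mul_assoc, ← pow_succ']
  · rintro y (rfl | rfl)
    · exact isOfFinOrder_iff_pow_eq_one.2 ⟨n, NeZero.pos n, hi⟩
    · exact isOfFinOrder_iff_pow_eq_one.2 ⟨2 * n, by simp [NeZero.pos n], hj⟩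

theorem card_map_mul_card_inf_ker {G G' : Type*} [Group G] [Group G'] (φ : G →* G')
    (H : Subgroup G) : Nat.card (H.map φ) * Nat.card (H ⊓ φ.ker : Subgroup G) = Nat.card H := by
  rw [← relIndex_ker, ← inf_relIndex_left, mul_comm, ← relIndex_bot_left (H ⊓ φ.ker),
    ← relIndex_bot_left H, relIndex_mul_relIndex _ _ _ bot_le inf_le_left]

theorem mul_mul_mem_closure {G : Type*} [Group G] {t : G} {S : Set G} (ht : t * t = 1)
    (hS : ∀ s ∈ S, t * s * t ∈ closure S) {x : G} (hx : x ∈ closure S) :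
    t * x * t ∈ closure S := by
  have ht_inv : t⁻¹ = t := inv_eq_of_mul_eq_one_left ht
  suffices closure S ≤ (closure S).comap (MulAut.conj t).toMonoidHom by
    simpa [ht_inv] using this hx
  exact (closure_le _).2 fun s hs ↦ by simpa [ht_inv] using hS s hs

section Fibers

variable {α ι : Type*} {f : α → ι}

/-- The group of permutations of `α` that map every fibre of `f` to itself. -/
def fiberPerm (f : α → ι) : Subgroup (Perm α) where
  carrier := {σ | f ∘ σ = f}
  one_mem' := rfl
  mul_mem' {σ τ} (hσ : f ∘ σ = f) (hτ : f ∘ τ = f) := by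
    rw [Set.mem_ofPred_eq, coe_mul, ← Function.comp_assoc, hσ, hτ]
  inv_mem' {σ} (hσ : f ∘ σ = f) := by
    rw [Set.mem_ofPred_eq, coe_inv, Equiv.comp_symm_eq, hσ]

theorem mem_fiberPerm {σ : Perm α} : σ ∈ fiberPerm f ↔ ∀ x, f (σ x) = f x :=
  funext_iff

theorem card_fiberPerm [Fintype α] [Fintype ι] [DecidableEq ι] :
    Nat.card (fiberPerm f) = ∏ b, (Fintype.card {a // f a = b}).factorial := by
  classical
  rw [← DomMulAct.stabilizer_card f, ← Nat.card_eq_fintype_card]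
  rfl

theorem card_map_fst_eq_card_map_snd_mul {Γ : Subgroup (Perm α × Perm ι)} (hf : f.Surjective)
    (hΓ : ∀ p ∈ Γ, Function.Semiconj f p.1 p.2) :
    Nat.card (Γ.map (.fst (Perm α) (Perm ι))) = Nat.card (Γ.map (.snd (Perm α) (Perm ι))) *
      Nat.card (Γ.map (.fst (Perm α) (Perm ι)) ⊓ fiberPerm f : Subgroup (Perm α)) := by
  have fst_injOn : Set.InjOn (MonoidHom.fst (Perm α) (Perm ι)) Γ := by
    intro p hp q hq (hpq : p.1 = q.1)
    refine Prod.ext hpq (Equiv.ext fun b ↦ ?_)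
    obtain ⟨a, rfl⟩ := hf b
    rw [← hΓ p hp a, ← hΓ q hq a, hpq]
  have card_map_fst {Δ : Subgroup (Perm α × Perm ι)} (hΔ : Δ ≤ Γ) :
      Nat.card (Δ.map (.fst (Perm α) (Perm ι))) = Nat.card Δ :=
    Nat.card_image_of_injOn (fst_injOn.mono hΔ)
  have map_fst_inf_ker_snd : (Γ ⊓ (MonoidHom.snd (Perm α) (Perm ι)).ker).map (.fst _ _) =
      Γ.map (.fst _ _) ⊓ fiberPerm f := by
    ext σ
    constructor
    · rintro ⟨p, ⟨hp, hp2 : p.2 = 1⟩, rfl⟩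
      refine ⟨mem_map_of_mem _ hp, mem_fiberPerm.2 fun x ↦ (hΓ p hp x).trans ?_⟩
      rw [hp2, one_apply]
    · rintro ⟨⟨p, hp, rfl⟩, hfp⟩
      refine ⟨p, ⟨hp, Equiv.ext fun b ↦ ?_⟩, rfl⟩
      obtain ⟨a, rfl⟩ := hf b
      exact (hΓ p hp a).symm.trans (mem_fiberPerm.1 hfp a)
  rw [card_map_fst le_rfl, ← map_fst_inf_ker_snd, card_map_fst inf_le_left,
    card_map_mul_card_inf_ker]

theorem fiberPerm_le_closure_swap [Finite α] [DecidableEq α] :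
    fiberPerm f ≤ closure {σ | ∃ x y, x ≠ y ∧ f x = f y ∧ σ = swap x y} := by
  intro σ hσ
  refine (mem_closure_isSwap ?_).2 ⟨Set.toFinite _, fun x ↦ ?_⟩
  · rintro τ ⟨x, y, hxy, -, rfl⟩
    exact ⟨x, y, hxy, rfl⟩
  by_cases hx : x = σ x
  · rw [← hx]
    exact mem_orbit_self x
  · exact ⟨⟨swap x (σ x), subset_closure ⟨x, σ x, hx, (mem_fiberPerm.1 hσ x).symm, rfl⟩⟩,
      swap_apply_left x (σ x)⟩

variable [Fintype α] [DecidableEq α] {H : Subgroup (Perm α)}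

theorem two_mul_card_inf_alternatingGroup {σ : Perm α} (hσ : σ ∈ H) (hsign : sign σ = -1) :
    2 * Nat.card (H ⊓ alternatingGroup α : Subgroup (Perm α)) = Nat.card H := by
  have map_sign : H.map sign = ⊤ := by
    refine (eq_top_iff' _).2 fun u ↦ ?_
    obtain rfl | rfl := Int.units_eq_one_or u
    exacts [one_mem _, ⟨σ, hσ, hsign⟩]
  rw [← card_map_mul_card_inf_ker sign H, map_sign, card_top, Nat.card_eq_fintype_card (α := ℤˣ),
    Fintype.card_units_int, alternatingGroup_eq_sign_ker]

theorem closure_inf_alternatingGroup_le {S : Set (Perm α)} (hS : ∀ s ∈ S, sign s = -1)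
    (hH : ∀ s ∈ S, ∀ s' ∈ S, s * s' ∈ H) : closure S ⊓ alternatingGroup α ≤ H := by
  suffices ∀ σ ∈ Submonoid.closure S,
      (sign σ = 1 → σ ∈ H) ∧ (sign σ = -1 → ∀ s ∈ S, s * σ ∈ H) by
    rintro σ ⟨hσ, hσ_even⟩
    exact (this σ (closure_toSubmonoid_of_finite.le hσ)).1 (mem_alternatingGroup.1 hσ_even)
  intro σ hσ
  induction hσ using Submonoid.closure_induction_left with
  | one => exact ⟨fun _ ↦ one_mem H, fun h ↦ by simp at h⟩
  | mul_left s hs σ _ ih =>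
    rw [Perm.sign_mul, hS s hs, neg_mul, one_mul, neg_inj]
    refine ⟨fun h ↦ ih.2 (neg_eq_iff_eq_neg.1 h) s hs, fun h s' hs' ↦ ?_⟩
    rw [← mul_assoc]
    exact mul_mem (hH s' hs' s hs) (ih.1 h)

theorem fiberPerm_inf_alternatingGroup_le {t : Perm α} (ht : ∀ σ ∈ H, t * σ * t ∈ H)
    (hswap : ∀ x y, x ≠ y → f x = f y → ∃ σ ∈ H, swap x y = σ * t * σ⁻¹) :
    fiberPerm f ⊓ alternatingGroup α ≤ H := by
  refine (inf_le_inf_right _ fiberPerm_le_closure_swap).trans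
    (closure_inf_alternatingGroup_le ?_ ?_)
  · rintro _ ⟨x, y, hxy, -, rfl⟩
    exact sign_swap hxy
  · rintro _ ⟨x, y, hxy, hf, rfl⟩ _ ⟨x', y', hxy', hf', rfl⟩
    obtain ⟨σ, hσ, hs⟩ := hswap x y hxy hf
    obtain ⟨τ, hτ, hs'⟩ := hswap x' y' hxy' hf'
    have conj_mul_conj : σ * t * σ⁻¹ * (τ * t * τ⁻¹) = σ * (t * (σ⁻¹ * τ) * t) * τ⁻¹ := by group
    rw [hs, hs', conj_mul_conj]
    exact mul_mem (mul_mem hσ (ht _ (mul_mem (inv_mem hσ) hτ))) (inv_mem hτ)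

end Fibers

section Mathieu

/-- The Coxeter generators `s₁`, `s₂`, `s₃` of a subgroup `S₄` of `M11`. In the action of `M11` on
the eleven pairs `{2m - 1, 2m}` they induce on the pairs `{9, 10}`, `{3, 4}`, `{5, 6}`, `{15, 16}`
the transpositions of neighbours in this list. -/
@[irreducible]
def s₁ : Perm (Fin 22) :=
  c[3, 9] * c[4, 10] * c[7, 22] * c[8, 21] * c[11, 17] * c[12, 18] * c[13, 20] * c[14, 19]

/-- The second of the Coxeter generators `s₁`, `s₂`, `s₃` described at `s₁`. -/
@[irreducible]
def s₂ : Perm (Fin 22) :=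
  c[3, 6] * c[4, 5] * c[7, 13] * c[8, 14] * c[11, 19] * c[12, 20] * c[17, 21] * c[18, 22]

/-- The third of the Coxeter generators `s₁`, `s₂`, `s₃` described at `s₁`. -/
@[irreducible]
def s₃ : Perm (Fin 22) :=
  c[5, 16] * c[6, 15] * c[7, 17] * c[8, 18] * c[11, 22] * c[12, 21] * c[13, 20] * c[14, 19]

/-- Together with `qj`, one of two generators of a quaternion group which fixes the pairs `{3, 4}`,
`{5, 6}`, `{15, 16}` and permutes the other eight pairs `{2m - 1, 2m}` regularly. -/
@[irreducible]
def qi : Perm (Fin 22) :=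
  c[3, 4] * c[15, 16] * c[1, 20, 10, 17] * c[2, 19, 9, 18] * c[7, 12, 13, 21] * c[8, 11, 14, 22]

/-- The second generator of the quaternion group described at `qi`. -/
@[irreducible]
def qj : Perm (Fin 22) :=
  c[5, 6] * c[15, 16] * c[1, 12, 10, 21] * c[2, 11, 9, 22] * c[7, 17, 13, 20] * c[8, 18, 14, 19]

/-- The pointwise stabiliser of three pairs in `M11`, a quaternion group. -/
def M8 : Subgroup (Perm (Fin 22)) := closure {qi, qj}

/-- The pointwise stabiliser of two pairs in `M11`. -/
def M9 : Subgroup (Perm (Fin 22)) := M8 ⊔ zpowers s₁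

/-- The stabiliser of one pair in `M11`. -/
def M10 : Subgroup (Perm (Fin 22)) := M9 ⊔ zpowers s₂

/-- The Mathieu group of degree eleven in its action on 22 points, the signed coordinates of the
ternary Golay code of length 11; the pairs `{2m - 1, 2m}` are the unsigned coordinates. -/
def M11 : Subgroup (Perm (Fin 22)) := M10 ⊔ zpowers s₃

theorem M8_eq_range : (M8 : Set (Perm (Fin 22))) =
    Set.range fun p : Fin 4 × Fin 2 ↦ qi ^ (p.1 : ℕ) * qj ^ (p.2 : ℕ) := by
  refine Set.Subset.antisymm (fun x hx ↦ ?_) ?_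
  · have hi : qi ^ 4 = 1 := by decide +kernel
    have hjj : qj ^ 2 = qi ^ 2 := by decide +kernel
    have hji : qj * qi = qi ^ 3 * qj := by decide +kernel
    obtain ⟨a, b, rfl⟩ := exists_eq_pow_mul_pow_of_mem_closure_pair hi hjj hji hx
    exact ⟨(a, b), rfl⟩
  · rintro _ ⟨p, rfl⟩
    exact mul_mem (pow_mem (subset_closure (.inl rfl)) _) (pow_mem (subset_closure (.inr rfl)) _)

theorem pow_mul_pow_smul_injective : Function.Injective fun p : Fin 4 × Fin 2 ↦
    (qi ^ (p.1 : ℕ) * qj ^ (p.2 : ℕ)) • ({9, 10} : Finset (Fin 22)) := by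
  decide +kernel

theorem card_M8 : Nat.card M8 = 8 := by
  rw [← SetLike.coe_sort_coe, M8_eq_range, Nat.card_range_of_injective, Nat.card_eq_fintype_card]
  · rfl
  · exact pow_mul_pow_smul_injective.of_comp (f := (· • ({9, 10} : Finset (Fin 22))))

theorem ncard_orbit_M8 : (orbit M8 ({9, 10} : Finset (Fin 22))).ncard = 8 := by
  have orbit_eq_range : orbit M8 ({9, 10} : Finset (Fin 22)) = Set.range fun p : Fin 4 × Fin 2 ↦
      (qi ^ (p.1 : ℕ) * qj ^ (p.2 : ℕ)) • ({9, 10} : Finset (Fin 22)) := by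
    calc orbit M8 ({9, 10} : Finset (Fin 22))
        = (· • ({9, 10} : Finset (Fin 22))) '' (M8 : Set (Perm (Fin 22))) := by
          rw [Set.image_eq_range]
          rfl
      _ = _ := by rw [M8_eq_range, ← Set.range_comp]; rfl
  rw [orbit_eq_range, Set.ncard_range_of_injective pow_mul_pow_smul_injective,
    Nat.card_eq_fintype_card]
  rfl

theorem isRankOneExtension_M9 : IsRankOneExtension M8 M9 s₁ := by
  have hs : s₁ * s₁ = 1 := by decide +kernel
  have s₁_mul_mul_s₁ : ∀ p : Fin 4 × Fin 2, p ≠ 0 → ∃ q r : Fin 4 × Fin 2,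
      s₁ * (qi ^ (p.1 : ℕ) * qj ^ (p.2 : ℕ)) * s₁ =
        (qi ^ (q.1 : ℕ) * qj ^ (q.2 : ℕ)) * s₁ * (qi ^ (r.1 : ℕ) * qj ^ (r.2 : ℕ)) := by
    decide +kernel
  refine .sup_zpowers (hs ▸ one_mem M8) fun b hb ↦ ?_
  rw [← SetLike.mem_coe, M8_eq_range] at hb
  rw [M8_eq_range]
  obtain ⟨p, rfl⟩ := hb
  obtain rfl | hp := eq_or_ne p 0
  · exact .inl ⟨0, by simp [hs]⟩
  · obtain ⟨q, r, hqr⟩ := s₁_mul_mul_s₁ p hp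
    exact .inr (mem_doubleCoset.2 ⟨_, ⟨q, rfl⟩, _, ⟨r, rfl⟩, hqr⟩)

theorem isRankOneExtension_M10 : IsRankOneExtension M9 M10 s₂ := by
  have hs : s₂ * s₂ = 1 := by decide +kernel
  have hi : s₂ * qi * s₂ = qj := by decide +kernel
  have hj : s₂ * qj * s₂ = qi := by decide +kernel
  have braid : (s₁ * s₂) ^ 3 = 1 := by decide +kernel
  refine isRankOneExtension_M9.sup_zpowers_of_braid (fun b ↦ ?_) (braid ▸ one_mem M8)
  refine mul_mul_mem_closure hs ?_
  rintro s (rfl | rfl)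
  · exact hi ▸ subset_closure (.inr rfl)
  · exact hj ▸ subset_closure (.inl rfl)

theorem M9_eq_closure : M9 = closure {qi, qj, s₁} := by
  rw [M9, M8, zpowers_eq_closure, ← Subgroup.closure_union]
  congr 1
  grind

theorem isRankOneExtension_M11 : IsRankOneExtension M10 M11 s₃ := by
  have hs : s₃ * s₃ = 1 := by decide +kernel
  have hi : s₃ * qi * s₃ = qi * qj := by decide +kernel
  have hj : s₃ * qj * s₃ = qj ^ 3 := by decide +kernel
  have hs₁ : s₃ * s₁ * s₃ = s₁ := by decide +kernel
  have braid : (s₂ * s₃) ^ 3 = 1 := by decide +kernel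
  refine isRankOneExtension_M10.sup_zpowers_of_braid (fun b ↦ ?_) (braid ▸ one_mem M9)
  rw [M9_eq_closure]
  have qi_mem : qi ∈ closure {qi, qj, s₁} := subset_closure (.inl rfl)
  have qj_mem : qj ∈ closure {qi, qj, s₁} := subset_closure (.inr (.inl rfl))
  have s₁_mem : s₁ ∈ closure {qi, qj, s₁} := subset_closure (.inr (.inr rfl))
  refine mul_mul_mem_closure hs ?_
  rintro s (rfl | rfl | rfl)
  · exact hi ▸ mul_mem qi_mem qj_mem
  · exact hj ▸ pow_mem qj_mem 3
  · rwa [hs₁]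

theorem card_M11 : Nat.card M11 = 7920 := by
  have M8_le : M8 ≤ stabilizer _ ({3, 4} : Finset (Fin 22)) := by
    simp only [M8, closure_le, Set.insert_subset_iff, Set.singleton_subset_iff, SetLike.mem_coe,
      mem_stabilizer_iff]
    decide +kernel
  have M9_le : M9 ≤ stabilizer _ ({5, 6} : Finset (Fin 22)) := by
    simp only [M9, M8, sup_le_iff, zpowers_le, closure_le, Set.insert_subset_iff,
      Set.singleton_subset_iff, SetLike.mem_coe, mem_stabilizer_iff]
    decide +kernel
  have M10_le : M10 ≤ stabilizer _ ({15, 16} : Finset (Fin 22)) := by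
    simp only [M10, M9, M8, sup_le_iff, zpowers_le, closure_le, Set.insert_subset_iff,
      Set.singleton_subset_iff, SetLike.mem_coe, mem_stabilizer_iff]
    decide +kernel
  have s₁_smul : s₁ • ({3, 4} : Finset (Fin 22)) = {9, 10} := by decide +kernel
  have s₂_smul : s₂ • ({5, 6} : Finset (Fin 22)) = {3, 4} := by decide +kernel
  have s₃_smul : s₃ • ({15, 16} : Finset (Fin 22)) = {5, 6} := by decide +kernel
  have s₁_ne : s₁ • ({3, 4} : Finset (Fin 22)) ≠ {3, 4} := by rw [s₁_smul]; decide
  have s₂_ne : s₂ • ({5, 6} : Finset (Fin 22)) ≠ {5, 6} := by rw [s₂_smul]; decide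
  have s₃_ne : s₃ • ({15, 16} : Finset (Fin 22)) ≠ {15, 16} := by rw [s₃_smul]; decide
  rw [isRankOneExtension_M11.card_eq M10_le s₃_ne, isRankOneExtension_M11.ncard_orbit M10_le s₃_ne,
    s₃_smul, isRankOneExtension_M10.card_eq M9_le s₂_ne,
    isRankOneExtension_M10.ncard_orbit M9_le s₂_ne, s₂_smul,
    isRankOneExtension_M9.card_eq M8_le s₁_ne, isRankOneExtension_M9.ncard_orbit M8_le s₁_ne,
    s₁_smul, ncard_orbit_M8, card_M8]

/-- The permutation of the blocks `{2m - 1, 2m}` of the 44 points induced by `g3`; block `m` is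
labelled `m`, with `22` denoting `0 : Fin 22`. -/
@[irreducible]
def b3 : Perm (Fin 22) :=
  c[1, 20, 7, 22, 13] * c[2, 19, 8, 21, 14] * c[3, 18, 12, 9, 16] * c[4, 17, 11, 10, 15]

/-- The permutation of the blocks `{2m - 1, 2m}` of the 44 points induced by `g4`. -/
@[irreducible]
def b4 : Perm (Fin 22) :=
  c[1, 12, 14, 6, 21] * c[2, 11, 13, 5, 22] * c[3, 8, 10, 20, 16] * c[4, 7, 9, 19, 15]

theorem closure_b3_b4_eq_M11 : closure {b3, b4} = M11 := by
  apply le_antisymm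
  · have s₃_mem : s₃ ∈ M11 := mem_sup_right (mem_zpowers s₃)
    have s₂_mem : s₂ ∈ M11 := mem_sup_left (mem_sup_right (mem_zpowers s₂))
    have s₁_mem : s₁ ∈ M11 := mem_sup_left (mem_sup_left (mem_sup_right (mem_zpowers s₁)))
    have qi_mem : qi ∈ M11 :=
      mem_sup_left (mem_sup_left (mem_sup_left (subset_closure (.inl rfl))))
    have qj_mem : qj ∈ M11 :=
      mem_sup_left (mem_sup_left (mem_sup_left (subset_closure (.inr rfl))))
    have b3_eq : b3 = qi * s₂ * s₃ * s₂ * s₁ := by decide +kernel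
    have b4_eq : b4 = qj * s₂ * s₁ * qi * s₃ * s₂ * s₁ * qi := by decide +kernel
    simp only [closure_le, Set.insert_subset_iff, Set.singleton_subset_iff, SetLike.mem_coe]
    rw [b3_eq, b4_eq]
    constructor <;> apply_rules [mul_mem]
  · have b3_mem : b3 ∈ closure {b3, b4} := subset_closure (.inl rfl)
    have b4_mem : b4 ∈ closure {b3, b4} := subset_closure (.inr rfl)
    have s₁_eq : s₁ = b4 * b3⁻¹ * b4⁻¹ ^ 2 * b3⁻¹ * b4 ^ 2 := by decide +kernel
    have s₂_eq : s₂ = b4⁻¹ * b3⁻¹ * b4 * b3 ^ 2 := by decide +kernel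
    have s₃_eq : s₃ = b4 * b3⁻¹ ^ 2 * b4 ^ 2 * b3 * b4 * b3⁻¹ := by decide +kernel
    have qi_eq : qi = b3 ^ 2 * b4⁻¹ * b3⁻¹ * b4⁻¹ * b3⁻¹ ^ 2 := by decide +kernel
    have qj_eq : qj = s₂ * qi * s₂ := by decide +kernel
    simp only [M11, M10, M9, M8, sup_le_iff, zpowers_le, closure_le, Set.insert_subset_iff,
      Set.singleton_subset_iff, SetLike.mem_coe]
    rw [s₁_eq, s₃_eq, qj_eq, qi_eq, s₂_eq]
    refine ⟨⟨⟨⟨?_, ?_⟩, ?_⟩, ?_⟩, ?_⟩ <;> apply_rules [mul_mem, pow_mem, inv_mem]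

end Mathieu

section Blocks

/-- The index of the block `{2m - 1, 2m}` containing a point. The point `44` and the block `22` are
both labelled `0`, so that the block of `x` is always `⌈x / 2⌉`. -/
def block (x : Fin 44) : Fin 22 := Fin.ofNat 22 ((x.val + 1) / 2)

theorem block_surjective : block.Surjective := by
  decide +kernel

theorem card_block_fiber (b : Fin 22) : Fintype.card {x // block x = b} = 2 := by
  decide +kernel +revert

theorem swap_eq_swap_of_block_eq {x y x' y' : Fin 44} (hxy : x ≠ y) (hxy' : x' ≠ y')
    (h : block x = block y) (h' : block x' = block y') (hxx' : block x = block x') :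
    swap x y = swap x' y' := by
  have : x = x' ∧ y = y' ∨ x = y' ∧ y = x' := by
    simp only [block, Fin.ext_iff, Fin.val_ofNat, ne_eq] at *
    omega
  obtain ⟨rfl, rfl⟩ | ⟨rfl, rfl⟩ := this
  exacts [rfl, swap_comm x y]

/-- The group of the pairs formed by an element of `GMacHale` and the permutation of the 22 blocks
it induces. Naming the latter in the second component spares a homomorphism to `Perm (Fin 22)`. -/
def blockGraph : Subgroup (Perm (Fin 44) × Perm (Fin 22)) :=
  closure {(g1, 1), (g2, 1), (g3, b3), (g4, b4)}

theorem map_fst_blockGraph : blockGraph.map (.fst (Perm (Fin 44)) (Perm (Fin 22))) = GMacHale := by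
  rw [blockGraph, MonoidHom.map_closure, GMacHale]
  simp only [Set.image_insert_eq, Set.image_singleton, MonoidHom.coe_fst]

theorem map_snd_blockGraph : blockGraph.map (.snd (Perm (Fin 44)) (Perm (Fin 22))) = M11 := by
  rw [blockGraph, MonoidHom.map_closure, ← closure_b3_b4_eq_M11]
  simp only [Set.image_insert_eq, Set.image_singleton, MonoidHom.coe_snd, closure_insert_one]

theorem semiconj_block_of_mem_blockGraph {p : Perm (Fin 44) × Perm (Fin 22)}
    (hp : p ∈ blockGraph) : Function.Semiconj block p.1 p.2 := by
  induction hp using closure_induction with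
  | mem p hp =>
    have h1 : ∀ x, block (g1 x) = block x := by decide +kernel
    have h2 : ∀ x, block (g2 x) = block x := by decide +kernel
    have h3 : ∀ x, block (g3 x) = b3 (block x) := by decide +kernel
    have h4 : ∀ x, block (g4 x) = b4 (block x) := by decide +kernel
    obtain rfl | rfl | rfl | rfl := hp
    exacts [h1, h2, h3, h4]
  | one => exact fun _ ↦ rfl
  | mul p q _ _ hp hq => exact hp.comp_right hq
  | inv p _ hp => exact hp.inverses_right p.1.right_inv p.2.left_inv

theorem GMacHale_le_alternatingGroup : GMacHale ≤ alternatingGroup (Fin 44) := by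
  simp only [GMacHale, closure_le, Set.insert_subset_iff, Set.singleton_subset_iff, SetLike.mem_coe,
    mem_alternatingGroup]
  decide +kernel

theorem g1_mem : g1 ∈ GMacHale := subset_closure (.inl rfl)

theorem g2_mem : g2 ∈ GMacHale := subset_closure (.inr (.inl rfl))

theorem g3_mem : g3 ∈ GMacHale := subset_closure (.inr (.inr (.inl rfl)))

theorem g4_mem : g4 ∈ GMacHale := subset_closure (.inr (.inr (.inr rfl)))

theorem swap_one_two_mul_mul_mem {σ : Perm (Fin 44)} (hσ : σ ∈ GMacHale) :
    swap 1 2 * σ * swap 1 2 ∈ GMacHale := by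
  have h1 : swap 1 2 * g1 * swap 1 2 = g1 := by decide +kernel
  have h2 : swap 1 2 * g2 * swap 1 2 = g2 := by decide +kernel
  have h3 : swap 1 2 * g3 * swap 1 2 = g1 * (g3 ^ 3 * g1 * (g3 ^ 3)⁻¹) * g3 := by decide +kernel
  have h4 : swap 1 2 * g4 * swap 1 2 =
      g1 * (g4 ^ 3 * (g1 * g2) * (g4 ^ 3)⁻¹) * (g4 * g2 * g4⁻¹) * g4 := by decide +kernel
  refine mul_mul_mem_closure (swap_mul_self 1 2) ?_ hσ
  rintro s (rfl | rfl | rfl | rfl)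
  · rw [h1]
    exact g1_mem
  · rw [h2]
    exact g2_mem
  · rw [h3]
    exact mul_mem (mul_mem g1_mem (mul_mem (mul_mem (pow_mem g3_mem 3) g1_mem)
      (inv_mem (pow_mem g3_mem 3)))) g3_mem
  · rw [h4]
    exact mul_mem (mul_mem (mul_mem g1_mem (mul_mem (mul_mem (pow_mem g4_mem 3)
      (mul_mem g1_mem g2_mem)) (inv_mem (pow_mem g4_mem 3))))
      (mul_mem (mul_mem g4_mem g2_mem) (inv_mem g4_mem))) g4_mem

theorem exists_mem_blockGraph_apply_one_eq (b : Fin 22) : ∃ p ∈ blockGraph, p.2 1 = b := by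
  have hb : ∀ b, ∃ k l m : Fin 5, (b3 ^ (k : ℕ) * b4 ^ (l : ℕ) * b3 ^ (m : ℕ)) 1 = b := by
    decide +kernel
  obtain ⟨k, l, m, hklm⟩ := hb b
  have h3 : (g3, b3) ∈ blockGraph := subset_closure (.inr (.inr (.inl rfl)))
  have h4 : (g4, b4) ∈ blockGraph := subset_closure (.inr (.inr (.inr rfl)))
  exact ⟨_, mul_mem (mul_mem (pow_mem h3 k) (pow_mem h4 l)) (pow_mem h3 m), hklm⟩

theorem exists_swap_eq_conj {x y : Fin 44} (hxy : x ≠ y) (h : block x = block y) :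
    ∃ σ ∈ GMacHale, swap x y = σ * swap 1 2 * σ⁻¹ := by
  obtain ⟨p, hp, hpx⟩ := exists_mem_blockGraph_apply_one_eq (block x)
  have block_one : block (p.1 1) = block x := (semiconj_block_of_mem_blockGraph hp 1).trans hpx
  have block_two : block (p.1 2) = block x := (semiconj_block_of_mem_blockGraph hp 2).trans hpx
  refine ⟨p.1, map_fst_blockGraph ▸ mem_map_of_mem _ hp, ?_⟩
  rw [← swap_apply_apply]
  exact swap_eq_swap_of_block_eq hxy (p.1.injective.ne (by decide)) h
    (block_one.trans block_two.symm) block_one.symm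

theorem card_GMacHale_inf_fiberPerm_block :
    Nat.card (GMacHale ⊓ fiberPerm block : Subgroup (Perm (Fin 44))) = 2 ^ 21 := by
  have inf_eq : GMacHale ⊓ fiberPerm block = fiberPerm block ⊓ alternatingGroup (Fin 44) :=
    le_antisymm (le_inf inf_le_right (inf_le_left.trans GMacHale_le_alternatingGroup))
      (le_inf (fiberPerm_inf_alternatingGroup_le (fun _ ↦ swap_one_two_mul_mul_mem)
        fun _ _ ↦ exists_swap_eq_conj) inf_le_left)
  have swap_mem : swap 1 2 ∈ fiberPerm block := mem_fiberPerm.2 (by decide +kernel)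
  have two_mul_card := two_mul_card_inf_alternatingGroup swap_mem (sign_swap (by decide))
  rw [card_fiberPerm, ← inf_eq] at two_mul_card
  simp only [card_block_fiber, Nat.factorial_two, Finset.prod_const, Finset.card_univ,
    Fintype.card_fin] at two_mul_card
  omega

end Blocks

end GMacHale

/-- The group `G_MacHale` has order `16609443840`. -/
theorem stmt_12 : Nat.card GMacHale = 16609443840 := by
  rw [← GMacHale.map_fst_blockGraph,
    GMacHale.card_map_fst_eq_card_map_snd_mul GMacHale.block_surjective
      fun _ ↦ GMacHale.semiconj_block_of_mem_blockGraph,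
    GMacHale.map_snd_blockGraph, GMacHale.card_M11, GMacHale.map_fst_blockGraph,
    GMacHale.card_GMacHale_inf_fiberPerm_block]
  norm_num
end

section
/- Let G be the subgroup of the symmetric group on 44 points generated by the four permutations g1 = (1,2)(43,44), g2 = (1,2)(21,22), g3 = (1,39,13,43,25)(2,40,14,44,26)(3,37,15,41,27)(4,38,16,42,28)(5,35,23,17,31)(6,36,24,18,32)(7,33,21,19,29)(8,34,22,20,30), and g4 = (1,23,27,11,41)(2,24,28,12,42)(3,22,26,10,44,4,21,25,9,43)(5,16,20,40,32,6,15,19,39,31)(7,13,17,37,29)(8,14,18,38,30). Then G contains exactly one element that is not a commutator, i.e., there is exactly one x ∈ G such that x ≠ a⁻¹b⁻¹ab for all a, b ∈ G. -/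
/-!
Each of the `22` pairs `{2 i - 1, 2 i}` is a block of `G`, and `G` is the group of all `(k, v)` with
`k` in the Mathieu group `M₁₁`, acting transitively on the `22` blocks, and `v` an even number of
sign changes. The unique non-commutator is the central involution that changes all signs.

By linear algebra over the field with two elements, `(⁅k, l⁆, v)` is a commutator as soon as `v` is
orthogonal to all functions that are semi-invariant (invariant up to a global sign) under both `k`
and `l`. The group `M₁₁` is sharply transitive on the quadruples of distinct points in its action of
degree `11`, so an element that is neither trivial nor an involution is conjugate to one of sixteen
explicit commutators `⁅k, l⁆`, for which the semi-invariant functions are constant. The involutions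
and the identity are written as commutators in several ways, whose orthogonality conditions exclude
only the change of all signs.

Suppose now that all signs are changed by `⁅a, b⁆`. The permutation parts of `a` and `b` commute and
may be taken to have `2`-power order. If one of them has order at least four, both are powers of one
element, and Euclid's algorithm reduces to the case that one of them is trivial; this is impossible
because `22` is not divisible by four. Otherwise they have a common fixed point, where `⁅a, b⁆`
changes no sign.
-/

open scoped commutatorElement

section General

variable {G : Type*} [Group G]

lemma exists_eq_inv_mul_inv_mul_mul_iff {x : G} :
    (∃ a b : G, x = a⁻¹ * b⁻¹ * a * b) ↔ x ∈ commutatorSet G := by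
  rw [mem_commutatorSet_iff, inv_surjective.exists]
  refine exists_congr fun a => ?_
  rw [inv_surjective.exists]
  simp [commutatorElement_def, eq_comm]

lemma apply_mem_commutatorSet_iff {H : Type*} [Group H] (f : G ≃* H) {x : G} :
    f x ∈ commutatorSet H ↔ x ∈ commutatorSet G := by
  simp only [mem_commutatorSet_iff, f.surjective.exists, ← map_commutatorElement,
    f.injective.eq_iff]

lemma conj_pow_eq_one_iff (g c : G) (n : ℕ) : (g⁻¹ * c * g) ^ n = 1 ↔ c ^ n = 1 := by
  have h := conj_pow (i := n) (a := g⁻¹) (b := c)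
  have h' := conj_eq_one_iff (a := g⁻¹) (b := c ^ n)
  rw [inv_inv] at h h'
  rw [h, h']

end General

lemma apply_pow_smul_of_invariant {M Ω α : Type*} [Monoid M] [MulAction M Ω] {k : M} {φ : Ω → α}
    (h : ∀ p, φ (k • p) = φ p) (n : ℕ) (p : Ω) : φ (k ^ n • p) = φ p := by
  induction n with
  | zero => rw [pow_zero, one_smul]
  | succ n ih => rw [pow_succ', mul_smul, h, ih]

lemma sum_comp_smul {G Ω M : Type*} [Group G] [MulAction G Ω] [Fintype Ω] [AddCommMonoid M] (g : G)
    (f : Ω → M) : ∑ p, f (g • p) = ∑ p, f p :=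
  Equiv.sum_comp (MulAction.toPerm g) f

lemma zmod_two_eq_zero_or_one (e : ZMod 2) : e = 0 ∨ e = 1 := by
  decide +revert

/-! ### Semi-invariant functions -/

section SemiInvariant

variable {K Ω : Type*}

section SMul

variable [SMul K Ω]

/-- `φ` changes by a constant under `k`, i.e. it is either invariant or turned into its complement;
these are the functions orthogonal to the coboundaries `v + v ∘ k` of even functions `v`. -/
def IsSemiInvariant (k : K) (φ : Ω → ZMod 2) : Prop :=
  ∃ c, ∀ p, φ (k • p) = φ p + c

lemma IsSemiInvariant.apply_smul_of_smul_eq_self {k : K} {φ : Ω → ZMod 2}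
    (hφ : IsSemiInvariant k φ) {q : Ω} (hq : k • q = q) (p : Ω) : φ (k • p) = φ p := by
  obtain ⟨c, hc⟩ := hφ
  have hcq := hc q
  rw [hq, left_eq_add] at hcq
  rw [hc, hcq, add_zero]

/-- The coboundary map `v ↦ v + v ∘ k`. Up to a translation, the sign part of a commutator `⁅a, b⁆`
is `coboundary b.perm a.sign + coboundary a.perm b.sign`. -/
def coboundary (k : K) : (Ω → ZMod 2) →ₗ[ZMod 2] (Ω → ZMod 2) :=
  LinearMap.id + LinearMap.funLeft _ _ (k • ·)

lemma coboundary_apply (k : K) (v : Ω → ZMod 2) (p : Ω) :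
    coboundary k v p = v p + v (k • p) := rfl

end SMul

section Monoid

variable [Monoid K] [MulAction K Ω]

lemma IsSemiInvariant.apply_smul_of_odd_of_pow_eq_one {k : K} {φ : Ω → ZMod 2}
    (hφ : IsSemiInvariant k φ) {n : ℕ} (hn : Odd n) (hk : k ^ n = 1) (p : Ω) :
    φ (k • p) = φ p := by
  obtain ⟨c, hc⟩ := hφ
  have apply_pow_smul (m : ℕ) : φ (k ^ m • p) = φ p + m * c := by
    induction m with
    | zero => simp
    | succ m ih => rw [pow_succ', mul_smul, hc, ih]; push_cast; ring
  have hc0 := apply_pow_smul n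
  rw [hk, one_smul, (ZMod.natCast_eq_one_iff_odd).2 hn, one_mul, left_eq_add] at hc0
  rw [hc, hc0, add_zero]

lemma IsSemiInvariant.mul {k l : K} {φ : Ω → ZMod 2} (hk : IsSemiInvariant k φ)
    (hl : IsSemiInvariant l φ) : IsSemiInvariant (k * l) φ := by
  obtain ⟨c, hc⟩ := hk
  obtain ⟨d, hd⟩ := hl
  exact ⟨d + c, fun p => by rw [mul_smul, hc, hd, add_assoc]⟩

end Monoid

variable [Fintype Ω]

variable (Ω) in
/-- The functions `Ω → ZMod 2` with an even number of ones. -/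
def evenSubmodule : Submodule (ZMod 2) (Ω → ZMod 2) :=
  LinearMap.ker (∑ p, LinearMap.proj p)

lemma mem_evenSubmodule {v : Ω → ZMod 2} : v ∈ evenSubmodule Ω ↔ ∑ p, v p = 0 := by
  simp [evenSubmodule]

variable [Group K] [MulAction K Ω]

lemma IsSemiInvariant.sum_mul_comp_smul {k : K} {φ : Ω → ZMod 2} (hφ : IsSemiInvariant k φ)
    {u : Ω → ZMod 2} (hu : ∑ p, u p = 0) : ∑ p, φ p * u (k • p) = ∑ p, φ p * u p := by
  obtain ⟨c, hc⟩ := hφ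
  calc ∑ p, φ p * u (k • p)
      = ∑ p, (φ (k • p) * u (k • p) + c * u (k • p)) :=
        Finset.sum_congr rfl fun p _ => by rw [hc]; grind
    _ = ∑ p, φ p * u p := by
        rw [sum_comp_smul k fun p => φ p * u p + c * u p, Finset.sum_add_distrib,
          ← Finset.mul_sum, hu, mul_zero, add_zero]

/-- Test the functional on the even functions with two ones. -/
lemma isSemiInvariant_of_annihilates_coboundary [DecidableEq Ω] {k : K}
    {ψ : (Ω → ZMod 2) →ₗ[ZMod 2] ZMod 2}
    (hψ : ∀ v ∈ evenSubmodule Ω, ψ (coboundary k v) = 0) :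
    IsSemiInvariant k fun p => ψ (Pi.single p 1) := by
  have coboundary_single (p : Ω) :
      coboundary k (Pi.single (k • p) 1) = Pi.single (k • p) 1 + Pi.single p 1 := by
    ext q
    simp [coboundary_apply, Pi.single_apply]
  have apply_single_smul_add (p q : Ω) :
      ψ (Pi.single (k • p) 1) + ψ (Pi.single p 1) =
        ψ (Pi.single (k • q) 1) + ψ (Pi.single q 1) := by
    have h := hψ (Pi.single (k • p) 1 + Pi.single (k • q) 1) (by
      simp [mem_evenSubmodule, Finset.sum_add_distrib, CharTwo.add_self_eq_zero])
    simp only [map_add, coboundary_single] at h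
    grind
  rcases isEmpty_or_nonempty Ω with _ | ⟨⟨q⟩⟩
  · exact ⟨0, fun p => isEmptyElim p⟩
  · exact ⟨ψ (Pi.single (k • q) 1) + ψ (Pi.single q 1), fun p => by grind⟩

lemma mem_sup_map_coboundary_of_orthogonal {k l : K} {u : Ω → ZMod 2}
    (h : ∀ φ, IsSemiInvariant k φ → IsSemiInvariant l φ → ∑ p, φ p * u p = 0) :
    u ∈ (evenSubmodule Ω).map (coboundary l) ⊔ (evenSubmodule Ω).map (coboundary k) := by
  classical
  by_contra hu
  obtain ⟨ψ, hψu, hψ⟩ := Submodule.exists_le_ker_of_notMem hu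
  have annihilates {m : K}
      (hm : (evenSubmodule Ω).map (coboundary m) ≤ LinearMap.ker ψ) :
      IsSemiInvariant m fun p => ψ (Pi.single p 1) :=
    isSemiInvariant_of_annihilates_coboundary fun v hv =>
      hm (Submodule.mem_map_of_mem hv)
  apply hψu
  calc ψ u = ∑ p, ψ (Pi.single p 1) * u p := by
        conv_lhs => rw [← Finset.univ_sum_single u, map_sum]
        refine Finset.sum_congr rfl fun p _ => ?_
        rw [mul_comm, ← smul_eq_mul, ← map_smul, ← Pi.single_smul, smul_eq_mul, mul_one]
    _ = 0 := h _ (annihilates (le_sup_right.trans hψ)) (annihilates (le_sup_left.trans hψ))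

end SemiInvariant

/-! ### Permutations with an even number of sign changes -/

/-- The group of pairs `(k, v)` where `k : K` permutes `Ω` and `v : Ω → ZMod 2` has an even number
of ones; it is a subgroup of the wreath product of `ZMod 2` with `K`. The pair `(k, v)`
stands for the permutation `(p, e) ↦ (k • p, e + v p)` of `Ω × ZMod 2`. -/
@[ext]
structure EvenWreath (K Ω : Type*) [Fintype Ω] where
  perm : K
  sign : Ω → ZMod 2
  sum_sign : ∑ p, sign p = 0

namespace EvenWreath

variable {K Ω : Type*} [Group K] [Fintype Ω]

instance : One (EvenWreath K Ω) where
  one := { perm := 1, sign := 0, sum_sign := by simp }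

@[simp] lemma perm_one : (1 : EvenWreath K Ω).perm = 1 := rfl

@[simp] lemma sign_one (p : Ω) : (1 : EvenWreath K Ω).sign p = 0 := rfl

variable (K) in
/-- The central involution that changes every sign. -/
def flipAll (hΩ : Even (Fintype.card Ω)) : EvenWreath K Ω where
  perm := 1
  sign := 1
  sum_sign := by simpa using (ZMod.natCast_eq_zero_iff_even).2 hΩ

@[simp] lemma perm_flipAll (hΩ : Even (Fintype.card Ω)) : (flipAll K hΩ).perm = 1 := rfl

@[simp] lemma sign_flipAll (hΩ : Even (Fintype.card Ω)) (p : Ω) : (flipAll K hΩ).sign p = 1 := rfl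

section FlipPair

variable [DecidableEq Ω]

variable (K) in
/-- The pure sign change at the two points `p` and `q`; it is trivial if `p = q`. -/
def flipPair (p q : Ω) : EvenWreath K Ω where
  perm := 1
  sign := Pi.single p 1 + Pi.single q 1
  sum_sign := by simp [Finset.sum_add_distrib, CharTwo.add_self_eq_zero]

@[simp] lemma perm_flipPair (p q : Ω) : (flipPair K p q).perm = 1 := rfl

@[simp] lemma sign_flipPair (p q r : Ω) :
    (flipPair K p q).sign r = (Pi.single p 1 : Ω → ZMod 2) r + (Pi.single q 1 : Ω → ZMod 2) r :=
  rfl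

lemma flipPair_self (p : Ω) : flipPair K p p = 1 := by
  ext r
  · simp
  · simp [CharTwo.add_self_eq_zero]

lemma flipPair_comm (p q : Ω) : flipPair K p q = flipPair K q p := by
  ext r
  · simp
  · simp [add_comm]

end FlipPair

variable [MulAction K Ω]

instance : Mul (EvenWreath K Ω) where
  mul a b :=
    { perm := a.perm * b.perm
      sign := fun p => b.sign p + a.sign (b.perm • p)
      sum_sign := by
        rw [Finset.sum_add_distrib, sum_comp_smul, a.sum_sign, b.sum_sign, add_zero] }

instance : Inv (EvenWreath K Ω) where
  inv a :=
    { perm := a.perm⁻¹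
      sign := fun p => a.sign (a.perm⁻¹ • p)
      sum_sign := by rw [sum_comp_smul, a.sum_sign] }

@[simp] lemma perm_mul (a b : EvenWreath K Ω) : (a * b).perm = a.perm * b.perm := rfl

@[simp] lemma sign_mul (a b : EvenWreath K Ω) (p : Ω) :
    (a * b).sign p = b.sign p + a.sign (b.perm • p) := rfl

@[simp] lemma perm_inv (a : EvenWreath K Ω) : a⁻¹.perm = a.perm⁻¹ := rfl

@[simp] lemma sign_inv (a : EvenWreath K Ω) (p : Ω) :
    a⁻¹.sign p = a.sign (a.perm⁻¹ • p) := rfl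

instance : Group (EvenWreath K Ω) :=
  Group.ofLeftAxioms
    (fun a b c => by ext p <;> simp [mul_assoc, mul_smul, add_assoc])
    (fun a => by ext p <;> simp)
    (fun a => by ext p <;> simp [CharTwo.add_self_eq_zero])

variable (K Ω) in
/-- The projection to the permutation part. -/
@[simps]
def permHom : EvenWreath K Ω →* K where
  toFun := perm
  map_one' := rfl
  map_mul' _ _ := rfl

@[simp] lemma perm_pow (a : EvenWreath K Ω) (n : ℕ) : (a ^ n).perm = a.perm ^ n :=
  map_pow (permHom K Ω) a n

@[simp] lemma perm_commutator (a b : EvenWreath K Ω) : ⁅a, b⁆.perm = ⁅a.perm, b.perm⁆ :=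
  map_commutatorElement (permHom K Ω) a b

variable (Ω) in
/-- The section of `permHom` by the elements without sign changes. -/
def lift : K →* EvenWreath K Ω where
  toFun k := ⟨k, 0, by simp⟩
  map_one' := rfl
  map_mul' _ _ := by ext p <;> simp

@[simp] lemma perm_lift (k : K) : (lift Ω k).perm = k := rfl

@[simp] lemma sign_lift (k : K) (p : Ω) : (lift Ω k).sign p = 0 := rfl

/-- Stated without inverses: both sides are read off from `⁅a, b⁆ * (b * a) = a * b`. -/
lemma sign_commutator (a b : EvenWreath K Ω) (p : Ω) :
    ⁅a, b⁆.sign ((b.perm * a.perm) • p) =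
      a.sign p + a.sign (b.perm • p) + b.sign p + b.sign (a.perm • p) := by
  have h : ⁅a, b⁆ * (b * a) = a * b := by simp [commutatorElement_def, mul_assoc]
  have h' := congrArg (fun c => c.sign p) h
  simp only [sign_mul, perm_mul] at h'
  generalize ⁅a, b⁆.sign _ = x at h' ⊢
  grind

theorem mem_commutatorSet_of_orthogonal {a : EvenWreath K Ω} {k l : K} (ha : a.perm = ⁅k, l⁆)
    (h : ∀ φ, IsSemiInvariant k φ → IsSemiInvariant l φ → ∑ p, φ p * a.sign p = 0) :
    a ∈ commutatorSet (EvenWreath K Ω) := by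
  have hu : (fun p => a.sign ((l * k) • p)) ∈
      (evenSubmodule Ω).map (coboundary l) ⊔ (evenSubmodule Ω).map (coboundary k) :=
    mem_sup_map_coboundary_of_orthogonal fun φ hk hl => by
      rw [(hl.mul hk).sum_mul_comp_smul a.sum_sign, h φ hk hl]
  obtain ⟨_, ⟨v, hv, rfl⟩, _, ⟨w, hw, rfl⟩, huvw⟩ := Submodule.mem_sup.1 hu
  refine ⟨⟨k, v, mem_evenSubmodule.1 hv⟩, ⟨l, w, mem_evenSubmodule.1 hw⟩, ?_⟩
  ext p
  · simp [ha]
  · obtain ⟨q, rfl⟩ := MulAction.surjective (l * k) p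
    rw [sign_commutator, ← congrFun huvw q]
    simp [coboundary_apply, add_assoc]

/-- Conjugation by the pure permutation `g`. -/
def conjLift (g : K) (a : EvenWreath K Ω) : EvenWreath K Ω :=
  (lift Ω g)⁻¹ * a * lift Ω g

@[simp] lemma perm_conjLift (g : K) (a : EvenWreath K Ω) :
    (a.conjLift g).perm = g⁻¹ * a.perm * g := rfl

@[simp] lemma sign_conjLift (g : K) (a : EvenWreath K Ω) (p : Ω) :
    (a.conjLift g).sign p = a.sign (g • p) := by
  simp [conjLift]

lemma mem_commutatorSet_of_conjLift {g : K} {a : EvenWreath K Ω}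
    (h : a.conjLift g ∈ commutatorSet (EvenWreath K Ω)) : a ∈ commutatorSet (EvenWreath K Ω) := by
  obtain ⟨b, c, hbc⟩ := h
  refine ⟨lift Ω g * b * (lift Ω g)⁻¹, lift Ω g * c * (lift Ω g)⁻¹, ?_⟩
  rw [← conjugate_commutatorElement, hbc, conjLift]
  group

section FlipAll

variable (hΩ : Even (Fintype.card Ω))

lemma flipAll_mul_flipAll : flipAll K hΩ * flipAll K hΩ = 1 := by
  ext p
  · simp
  · simp [CharTwo.add_self_eq_zero]

lemma commute_flipAll (a : EvenWreath K Ω) : Commute (flipAll K hΩ) a := by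
  ext p <;> simp [add_comm]

variable {hΩ} {a b : EvenWreath K Ω}

lemma commutator_eq_flipAll_iff :
    ⁅a, b⁆ = flipAll K hΩ ↔ SemiconjBy b a (flipAll K hΩ * a) := by
  have hinv : (flipAll K hΩ)⁻¹ = flipAll K hΩ :=
    inv_eq_of_mul_eq_one_left (flipAll_mul_flipAll hΩ)
  rw [← inv_inj, commutatorElement_inv, hinv, commutatorElement_def, SemiconjBy,
    mul_inv_eq_iff_eq_mul, mul_inv_eq_iff_eq_mul]

lemma commutator_swap_eq_flipAll (h : ⁅a, b⁆ = flipAll K hΩ) : ⁅b, a⁆ = flipAll K hΩ := by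
  rw [← commutatorElement_inv, h, inv_eq_iff_mul_eq_one, flipAll_mul_flipAll]

lemma commutator_pow_eq_flipAll (h : ⁅a, b⁆ = flipAll K hΩ) {n : ℕ} (hn : Odd n) :
    ⁅a ^ n, b⁆ = flipAll K hΩ := by
  rw [commutator_eq_flipAll_iff] at h ⊢
  obtain ⟨m, rfl⟩ := hn
  have hpow : flipAll K hΩ ^ (2 * m + 1) = flipAll K hΩ := by
    rw [pow_succ, pow_mul, pow_two, flipAll_mul_flipAll, one_pow, one_mul]
  simpa only [(commute_flipAll hΩ a).mul_pow, hpow] using h.pow_right (2 * m + 1)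

lemma commutator_conjLift_eq_flipAll (h : ⁅a, b⁆ = flipAll K hΩ) (g : K) :
    ⁅a.conjLift g, b.conjLift g⁆ = flipAll K hΩ := by
  have hconj := conjugate_commutatorElement a b (lift Ω g)⁻¹
  rwa [h, inv_inv, mul_assoc, (commute_flipAll hΩ _).eq, inv_mul_cancel_left, eq_comm] at hconj

lemma smul_ne_self_of_commutator_eq_flipAll (h : ⁅a, b⁆ = flipAll K hΩ) {p : Ω}
    (hp : a.perm • p = p) : b.perm • p ≠ p := by
  intro hbp
  have hsign := sign_commutator a b p
  rw [h, sign_flipAll, hp, hbp] at hsign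
  grind

/-- Otherwise `b` exchanges the zeros and the ones of the sign function of `a`, so that half the
cardinality of `Ω` is even. -/
lemma perm_ne_one_of_commutator_eq_flipAll (h4 : ¬ 4 ∣ Fintype.card Ω)
    (h : ⁅a, b⁆ = flipAll K hΩ) : a.perm ≠ 1 := by
  intro ha
  have val_add_val (p : Ω) : (a.sign p).val + (a.sign (b.perm • p)).val = 1 := by
    have hsign := sign_commutator a b p
    rw [h, sign_flipAll, ha, one_smul] at hsign
    have hne : a.sign (b.perm • p) = a.sign p + 1 := by grind
    rw [hne]
    generalize a.sign p = x
    decide +revert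
  have two_mul_sum : 2 * ∑ p, (a.sign p).val = Fintype.card Ω := by
    rw [two_mul]
    nth_rw 2 [← sum_comp_smul b.perm]
    simp [← Finset.sum_add_distrib, val_add_val]
  have sum_even : 2 ∣ ∑ p, (a.sign p).val := by
    rw [← ZMod.natCast_eq_zero_iff]
    simpa using a.sum_sign
  omega

lemma commutator_ne_flipAll_of_perm_eq_pow (h4 : ¬ 4 ∣ Fintype.card Ω) (d : K) (m n : ℕ) :
    ∀ a b : EvenWreath K Ω, a.perm = d ^ m → b.perm = d ^ n → ⁅a, b⁆ ≠ flipAll K hΩ := by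
  induction m, n using Nat.gcd.induction with
  | H0 n =>
    intro a b ha _ h
    exact perm_ne_one_of_commutator_eq_flipAll h4 h (by rw [ha, pow_zero])
  | H1 m n _ ih =>
    intro a b ha hb h
    refine ih (b * (a ^ (n / m))⁻¹) a ?_ ha (commutator_swap_eq_flipAll ?_)
    · rw [perm_mul, perm_inv, perm_pow, ha, hb, mul_inv_eq_iff_eq_mul, ← pow_mul, ← pow_add,
        Nat.mod_add_div]
    · rw [commutator_eq_flipAll_iff] at h ⊢
      exact h.mul_left ((Commute.refl a).pow_left _).inv_left

end FlipAll

section Generation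

variable [DecidableEq Ω]

lemma flipPair_mul_flipPair (p q r : Ω) : flipPair K p q * flipPair K q r = flipPair K p r := by
  ext s
  · simp
  · simp only [sign_mul, sign_flipPair, perm_flipPair, one_smul]
    grind

lemma mul_flipPair_mul_inv (a : EvenWreath K Ω) (p q : Ω) :
    a * flipPair K p q * a⁻¹ = flipPair K (a.perm • p) (a.perm • q) := by
  rw [mul_inv_eq_iff_eq_mul]
  ext r
  · simp
  · simp [Pi.single_apply, add_comm]

variable {Γ : Subgroup (EvenWreath K Ω)}

lemma flipPair_smul_mem (hΓ : Γ.map (permHom K Ω) = ⊤) {p q : Ω} (h : flipPair K p q ∈ Γ)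
    (k : K) : flipPair K (k • p) (k • q) ∈ Γ := by
  obtain ⟨a, ha, rfl⟩ : k ∈ Γ.map (permHom K Ω) := hΓ ▸ Subgroup.mem_top k
  rw [permHom_apply, ← mul_flipPair_mul_inv]
  exact Γ.mul_mem (Γ.mul_mem ha h) (Γ.inv_mem ha)

/-- The elements `k` for which the sign change at `o` and `k • o` lies in `Γ`; they form a subgroup
if `Γ` contains lifts of all elements of `K`. -/
def flipSubgroup (hΓ : Γ.map (permHom K Ω) = ⊤) (o : Ω) : Subgroup K where
  carrier := {k | flipPair K o (k • o) ∈ Γ}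
  one_mem' := by simp [flipPair_self, Γ.one_mem]
  mul_mem' {k l} hk hl := by
    have h := Γ.mul_mem hk (flipPair_smul_mem hΓ hl k)
    rwa [flipPair_mul_flipPair, ← mul_smul] at h
  inv_mem' {k} hk := by
    have h := flipPair_smul_mem hΓ hk k⁻¹
    rwa [inv_smul_smul, flipPair_comm] at h

lemma mem_flipSubgroup {hΓ : Γ.map (permHom K Ω) = ⊤} {o : Ω} {k : K} :
    k ∈ flipSubgroup hΓ o ↔ flipPair K o (k • o) ∈ Γ := Iff.rfl

variable (Γ) in
/-- The sign parts of the elements of `Γ` with trivial permutation part. -/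
def pureSigns : AddSubgroup (Ω → ZMod 2) where
  carrier := {v | ∃ a ∈ Γ, a.perm = 1 ∧ a.sign = v}
  zero_mem' := ⟨1, Γ.one_mem, rfl, rfl⟩
  add_mem' := by
    rintro _ _ ⟨a, ha, ha1, rfl⟩ ⟨b, hb, hb1, rfl⟩
    exact ⟨b * a, Γ.mul_mem hb ha, by simp [ha1, hb1], by ext p; simp [ha1]⟩
  neg_mem' := by
    rintro _ ⟨a, ha, ha1, rfl⟩
    exact ⟨a, ha, ha1, by ext p; simp [CharTwo.neg_eq]⟩

lemma mem_of_perm_eq_one {o : Ω} (ho : ∀ p, flipPair K o p ∈ Γ) {a : EvenWreath K Ω}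
    (ha : a.perm = 1) : a ∈ Γ := by
  have hsign : a.sign ∈ pureSigns Γ := by
    have hsum : a.sign = ∑ p, (a.sign p).val • (flipPair K o p).sign := by
      ext q
      simp only [Finset.sum_apply, Pi.smul_apply]
      simp only [nsmul_eq_mul, ZMod.natCast_zmod_val, sign_flipPair, mul_add,
        Finset.sum_add_distrib, ← Finset.sum_mul, a.sum_sign]
      simp [Pi.single_apply]
    rw [hsum]
    exact sum_mem fun p _ => (pureSigns Γ).nsmul_mem ⟨_, ho p, rfl, rfl⟩ _
  obtain ⟨b, hb, hb1, hba⟩ := hsign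
  exact EvenWreath.ext (hb1.trans ha.symm) hba ▸ hb

lemma eq_top_of_flipPair_mem (hΓ : Γ.map (permHom K Ω) = ⊤) {o : Ω}
    (ho : ∀ p, flipPair K o p ∈ Γ) : Γ = ⊤ := by
  refine (Subgroup.eq_top_iff' Γ).2 fun a => ?_
  obtain ⟨b, hb, hba⟩ : a.perm ∈ Γ.map (permHom K Ω) := hΓ ▸ Subgroup.mem_top _
  have hab : a * b⁻¹ ∈ Γ := mem_of_perm_eq_one ho (by
    rw [perm_mul, perm_inv, ← hba, permHom_apply, mul_inv_cancel])
  simpa using Γ.mul_mem hab hb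

end Generation

instance : MulAction (EvenWreath K Ω) (Ω × ZMod 2) where
  smul a q := (a.perm • q.1, a.sign q.1 + q.2)
  one_smul q := Prod.ext (one_smul K q.1) (zero_add q.2)
  mul_smul a b q := Prod.ext (mul_smul a.perm b.perm q.1) (by
    change b.sign q.1 + a.sign (b.perm • q.1) + q.2 = a.sign (b.perm • q.1) + (b.sign q.1 + q.2)
    ring)

instance [FaithfulSMul K Ω] : FaithfulSMul (EvenWreath K Ω) (Ω × ZMod 2) where
  eq_of_smul_eq_smul {a b} h := by
    have h0 (p : Ω) : (a.perm • p, a.sign p + 0) = (b.perm • p, b.sign p + 0) := h (p, 0)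
    simp only [add_zero, Prod.mk.injEq] at h0
    exact EvenWreath.ext (eq_of_smul_eq_smul fun p => (h0 p).1) (funext fun p => (h0 p).2)

end EvenWreath

/-! ### The Mathieu group of degree eleven -/

/-- The `22` points permuted by `M11`, in eleven blocks of two, with coordinates for which a Sylow
`11`-subgroup of `M11` acts by translation of the first coordinate. -/
abbrev Point : Type := Fin 11 × ZMod 2

/-- The translation of the first coordinate by `a` modulo `11`. -/
def translation (a : Fin 11) : Equiv.Perm Point :=
  (Equiv.addRight a).prodCongr (Equiv.refl _)

/-- The function underlying `quintic`. -/
def quinticFun (p : Point) : Point :=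
  (![0, 4, 9, 6, 8, 3, 2, 10, 7, 5, 1] p.1, ![0, 1, 1, 1, 0, 1, 1, 0, 1, 0, 0] p.1 + p.2)

/-- A permutation of order five, induced by `g3` on the blocks `{2 i - 1, 2 i}`. -/
def quintic : Equiv.Perm Point where
  toFun := quinticFun
  invFun := quinticFun^[4]
  left_inv := by unfold Function.LeftInverse; decide +kernel
  right_inv := by unfold Function.RightInverse Function.LeftInverse; decide +kernel

/-- The Mathieu group `M₁₁`, as a permutation group on the `22` cosets of its subgroup `A₆`. -/
def M11 : Subgroup (Equiv.Perm Point) := Subgroup.closure {translation 1, quintic}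

namespace M11

open EvenWreath

lemma apply_add_sheet {q : Equiv.Perm Point} (hq : q ∈ M11) (p : Point) (e : ZMod 2) :
    q (p + (0, e)) = q p + (0, e) := by
  induction hq using Subgroup.closure_induction generalizing p with
  | mem q hq => rcases hq with rfl | rfl <;> decide +kernel +revert
  | one => rfl
  | mul q r _ _ ihq ihr => simp only [Equiv.Perm.mul_apply, ihr, ihq]
  | inv q _ ih =>
    rw [Equiv.Perm.inv_eq_iff_eq, ih, ← Equiv.Perm.mul_apply, mul_inv_cancel,
      Equiv.Perm.one_apply]

/-- Whether `q` exchanges the two second coordinates on the block `x`. -/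
def sheet (q : M11) (x : Fin 11) : ZMod 2 := (q • ((x, 0) : Point)).2

lemma smul_eq_smul_zero_add (q : M11) (x : Fin 11) (e : ZMod 2) :
    q • ((x, e) : Point) = q • ((x, 0) : Point) + (0, e) := by
  have h := apply_add_sheet q.2 (x, 0) e
  rwa [Prod.mk_add_mk, add_zero, zero_add] at h

/-- The sharply `4`-transitive action of `M11` on the eleven blocks. -/
instance : MulAction M11 (Fin 11) where
  smul q x := (q • ((x, 0) : Point)).1
  one_smul _ := rfl
  mul_smul q r x := by
    change ((q * r) • ((x, 0) : Point)).1 = (q • (((r • ((x, 0) : Point)).1, 0) : Point)).1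
    rw [mul_smul, ← Prod.mk.eta (p := r • ((x, 0) : Point)), smul_eq_smul_zero_add]
    simp

lemma smul_mk (q : M11) (x : Fin 11) (e : ZMod 2) :
    q • ((x, e) : Point) = (q • x, sheet q x + e) := by
  rw [smul_eq_smul_zero_add]
  exact Prod.ext (add_zero (q • x)) rfl

/-- The Paley–Hadamard matrix of order twelve in additive notation, without its constant column: the
support of row `some i` is the translate by `i` of the set of zero and the non-squares modulo `11`.
The group `M11` permutes the functions `p ↦ hadamard i p.1 + p.2`. -/
def hadamard : Option (Fin 11) → Fin 11 → ZMod 2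
  | none, _ => 0
  | some i, x => ![1, 0, 1, 0, 0, 0, 1, 1, 1, 0, 1] (x - i)

lemma exists_hadamard_apply {q : Equiv.Perm Point} (hq : q ∈ M11) (i : Option (Fin 11)) :
    ∃ j, ∀ p : Point, hadamard j (q p).1 + (q p).2 = hadamard i p.1 + p.2 := by
  induction hq using Subgroup.closure_induction'' generalizing i with
  | mem q hq => rcases hq with rfl | rfl <;> decide +kernel +revert
  | inv_mem q hq => rcases hq with rfl | rfl <;> decide +kernel +revert
  | one => exact ⟨i, fun _ => rfl⟩
  | mul q r _ _ ihq ihr =>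
    obtain ⟨j, hj⟩ := ihr i
    obtain ⟨k, hk⟩ := ihq j
    exact ⟨k, fun p => by rw [Equiv.Perm.mul_apply, hk, hj]⟩

lemma exists_hadamard_smul (q : M11) (i : Option (Fin 11)) :
    ∃ j, ∀ x, hadamard j (q • x) + sheet q x = hadamard i x := by
  obtain ⟨j, hj⟩ := exists_hadamard_apply q.2 i
  exact ⟨j, fun x => (hj (x, 0)).trans (add_zero _)⟩

lemma translation_mem (a : Fin 11) : translation a ∈ M11 := by
  have hpow : translation a = translation 1 ^ (a : ℕ) := by decide +kernel +revert
  exact hpow ▸ pow_mem (Subgroup.subset_closure (by simp)) _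

/-- `translation a` as an element of `M11`. -/
def shift (a : Fin 11) : M11 := ⟨translation a, translation_mem a⟩

/-- `quintic` as an element of `M11`. -/
def quint : M11 := ⟨quintic, Subgroup.subset_closure (by simp)⟩

/-- The product of `shift a * quint` for `a` in `l`; explicit elements of `M11` are given in this
form, found by a computer search. -/
def word (l : List (Fin 11)) : M11 := l.foldr (fun a q => shift a * quint * q) 1

/-- The first four columns of the Hadamard matrix distinguish all rows but `some 1` and `some 4`,
and the remaining ten rows distinguish the columns up to sign. -/
lemma eq_one_of_smul_eq_self {q : M11} (h₀ : q • (0 : Fin 11) = 0) (h₁ : q • (1 : Fin 11) = 1)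
    (h₂ : q • (2 : Fin 11) = 2) (h₃ : q • (3 : Fin 11) = 3) : q = 1 := by
  have sheet_eq_zero : sheet q 0 = 0 ∧ sheet q 1 = 0 ∧ sheet q 2 = 0 ∧ sheet q 3 = 0 := by
    have unique_signs : ∀ s₀ s₁ s₂ s₃ : ZMod 2, (∀ i, ∃ j, hadamard j 0 + s₀ = hadamard i 0 ∧
        hadamard j 1 + s₁ = hadamard i 1 ∧ hadamard j 2 + s₂ = hadamard i 2 ∧
        hadamard j 3 + s₃ = hadamard i 3) → s₀ = 0 ∧ s₁ = 0 ∧ s₂ = 0 ∧ s₃ = 0 := by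
      decide +kernel
    refine unique_signs _ _ _ _ fun i => ?_
    obtain ⟨j, hj⟩ := exists_hadamard_smul q i
    exact ⟨j, by rw [← hj 0, h₀], by rw [← hj 1, h₁], by rw [← hj 2, h₂], by rw [← hj 3, h₃]⟩
  have row_fixed (i : Option (Fin 11)) (hi : i ≠ some 1 ∧ i ≠ some 4) (x : Fin 11) :
      hadamard i (q • x) + sheet q x = hadamard i x := by
    have rows_distinct : ∀ i j, i ≠ some 1 ∧ i ≠ some 4 → hadamard j 0 = hadamard i 0 →
        hadamard j 1 = hadamard i 1 → hadamard j 2 = hadamard i 2 →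
        hadamard j 3 = hadamard i 3 → j = i := by
      decide +kernel
    obtain ⟨j, hj⟩ := exists_hadamard_smul q i
    have hji : j = i := by
      apply rows_distinct i j hi
      · simpa [h₀, sheet_eq_zero] using hj 0
      · simpa [h₁, sheet_eq_zero] using hj 1
      · simpa [h₂, sheet_eq_zero] using hj 2
      · simpa [h₃, sheet_eq_zero] using hj 3
    exact hji ▸ hj x
  have columns_distinct : ∀ x y : Fin 11, ∀ s : ZMod 2,
      (∀ i, i ≠ some 1 ∧ i ≠ some 4 → hadamard i y + s = hadamard i x) → y = x ∧ s = 0 := by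
    decide +kernel
  ext1
  refine Equiv.ext fun ⟨x, e⟩ => ?_
  obtain ⟨hx, hs⟩ := columns_distinct x (q • x) (sheet q x) fun i hi => row_fixed i hi x
  exact (smul_mk q x e).trans (by rw [hx, hs, zero_add]; rfl)

lemma exists_smul_zero_one_eq {y : Fin 11} (hy : y ≠ 0) :
    ∃ q : M11, q • (0 : Fin 11) = 0 ∧ q • (1 : Fin 11) = y := by
  have reach : ∀ y : Fin 11, y ≠ 0 → ∃ a : Fin 5, ∃ b : Fin 2,
      (quint ^ (a : ℕ) * word [8, 5] ^ (b : ℕ)) • (0 : Fin 11) = 0 ∧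
      (quint ^ (a : ℕ) * word [8, 5] ^ (b : ℕ)) • (1 : Fin 11) = y := by
    decide +kernel
  obtain ⟨a, b, h⟩ := reach y hy
  exact ⟨_, h⟩

lemma exists_smul_zero_one_two_eq {y : Fin 11} (hy : y ≠ 0 ∧ y ≠ 1) :
    ∃ q : M11, q • (0 : Fin 11) = 0 ∧ q • (1 : Fin 11) = 1 ∧ q • (2 : Fin 11) = y := by
  have reach : ∀ y : Fin 11, y ≠ 0 ∧ y ≠ 1 → ∃ a b : Fin 3,
      (word [0, 3, 4] ^ (a : ℕ) * word [7, 5, 8] ^ (b : ℕ)) • (0 : Fin 11) = 0 ∧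
      (word [0, 3, 4] ^ (a : ℕ) * word [7, 5, 8] ^ (b : ℕ)) • (1 : Fin 11) = 1 ∧
      (word [0, 3, 4] ^ (a : ℕ) * word [7, 5, 8] ^ (b : ℕ)) • (2 : Fin 11) = y := by
    decide +kernel
  obtain ⟨a, b, h⟩ := reach y hy
  exact ⟨_, h⟩

lemma exists_smul_zero_one_two_three_eq {y : Fin 11} (hy : y ≠ 0 ∧ y ≠ 1 ∧ y ≠ 2) :
    ∃ q : M11, q • (0 : Fin 11) = 0 ∧ q • (1 : Fin 11) = 1 ∧ q • (2 : Fin 11) = 2 ∧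
      q • (3 : Fin 11) = y := by
  have reach : ∀ y : Fin 11, y ≠ 0 ∧ y ≠ 1 ∧ y ≠ 2 → ∃ a : Fin 4, ∃ b : Fin 2,
      (word [0, 9, 6] ^ (a : ℕ) * word [9, 4, 0, 3] ^ (b : ℕ)) • (0 : Fin 11) = 0 ∧
      (word [0, 9, 6] ^ (a : ℕ) * word [9, 4, 0, 3] ^ (b : ℕ)) • (1 : Fin 11) = 1 ∧
      (word [0, 9, 6] ^ (a : ℕ) * word [9, 4, 0, 3] ^ (b : ℕ)) • (2 : Fin 11) = 2 ∧
      (word [0, 9, 6] ^ (a : ℕ) * word [9, 4, 0, 3] ^ (b : ℕ)) • (3 : Fin 11) = y := by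
    decide +kernel
  obtain ⟨a, b, h⟩ := reach y hy
  exact ⟨_, h⟩

lemma exists_smul_base_eq {y₀ y₁ y₂ y₃ : Fin 11} (hy : [y₀, y₁, y₂, y₃].Nodup) :
    ∃ q : M11, q • (0 : Fin 11) = y₀ ∧ q • (1 : Fin 11) = y₁ ∧ q • (2 : Fin 11) = y₂ ∧
      q • (3 : Fin 11) = y₃ := by
  simp only [List.nodup_cons, List.mem_cons, List.not_mem_nil, not_or] at hy
  have shift_smul : shift y₀ • (0 : Fin 11) = y₀ := zero_add y₀
  obtain ⟨q₁, h₁₀, h₁₁⟩ := exists_smul_zero_one_eq (y := (shift y₀)⁻¹ • y₁) (by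
    rw [Ne, inv_smul_eq_iff]; grind)
  rw [eq_inv_smul_iff, ← mul_smul] at h₁₁
  obtain ⟨q₂, h₂₀, h₂₁, h₂₂⟩ := exists_smul_zero_one_two_eq (y := (shift y₀ * q₁)⁻¹ • y₂) (by
    simp only [Ne, inv_smul_eq_iff]; grind [mul_smul])
  rw [eq_inv_smul_iff, ← mul_smul] at h₂₂
  obtain ⟨q₃, h₃₀, h₃₁, h₃₂, h₃₃⟩ :=
    exists_smul_zero_one_two_three_eq (y := (shift y₀ * q₁ * q₂)⁻¹ • y₃) (by
      simp only [Ne, inv_smul_eq_iff]; grind [mul_smul])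
  rw [eq_inv_smul_iff, ← mul_smul] at h₃₃
  refine ⟨shift y₀ * q₁ * q₂ * q₃, ?_, ?_, ?_, h₃₃⟩ <;> grind [mul_smul]

lemma exists_smul_eq {x₀ x₁ x₂ x₃ y₀ y₁ y₂ y₃ : Fin 11} (hx : [x₀, x₁, x₂, x₃].Nodup)
    (hy : [y₀, y₁, y₂, y₃].Nodup) :
    ∃ q : M11, q • x₀ = y₀ ∧ q • x₁ = y₁ ∧ q • x₂ = y₂ ∧ q • x₃ = y₃ := by
  obtain ⟨q, rfl, rfl, rfl, rfl⟩ := exists_smul_base_eq hx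
  obtain ⟨r, rfl, rfl, rfl, rfl⟩ := exists_smul_base_eq hy
  exact ⟨r * q⁻¹, by simp [mul_smul]⟩

lemma eq_of_smul_eq_smul {x₀ x₁ x₂ x₃ : Fin 11} (hx : [x₀, x₁, x₂, x₃].Nodup) {q r : M11}
    (h₀ : q • x₀ = r • x₀) (h₁ : q • x₁ = r • x₁) (h₂ : q • x₂ = r • x₂)
    (h₃ : q • x₃ = r • x₃) : q = r := by
  obtain ⟨g, rfl, rfl, rfl, rfl⟩ := exists_smul_base_eq hx
  have h : g⁻¹ * (r⁻¹ * q) * g = 1 := by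
    apply eq_one_of_smul_eq_self <;> simp [mul_smul, h₀, h₁, h₂, h₃]
  rwa [mul_eq_one_iff_eq_inv, inv_mul_eq_iff_eq_mul, mul_inv_cancel, inv_mul_eq_one, eq_comm] at h

/-! ### Conjugacy representatives -/

lemma exists_nodup_quadruple {x y z : Fin 11} (h : [x, y, z].Nodup) :
    ∃ w, [x, y, z, w].Nodup := by
  decide +kernel +revert

/-- Pairs of words describing, by `tableElement`, the eight elements with `0 ↦ 1 ↦ 2 ↦ 3` on the
blocks; sharp transitivity leaves one for each image of `3`. -/
def fourPathTable : List (List (Fin 11) × List (Fin 11)) :=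
  [([2, 3], [3, 5]), ([4, 1], [4]), ([6, 0], [2, 2]), ([8], [1, 7, 4]), ([8], [9, 0]),
    ([1, 4], [4, 1]), ([10, 10], [10, 7]), ([8, 4], [7, 6])]

/-- Pairs of words describing, by `tableElement`, the eight elements with `0 ↦ 1 ↦ 2 ↦ 0` on the
blocks; sharp transitivity leaves one for each image of `3`. -/
def threeCycleTable : List (List (Fin 11) × List (Fin 11)) :=
  [([1, 3], [4, 8]), ([8, 5], [5, 8]), ([2, 6], [3, 6]), ([1], [4, 8]), ([4], [3, 4]),
    ([2, 4], [3, 8]), ([7, 6], [9, 6]), ([9, 7], [8, 4])]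

/-- The element of `M11` described by an entry of `fourPathTable` or `threeCycleTable`, as a
conjugate of an explicit commutator. -/
def tableElement (w : List (Fin 11) × List (Fin 11)) : M11 :=
  word w.1 * ⁅shift 1, word w.2⁆ * (word w.1)⁻¹

lemma exists_mem_fourPathTable : ∀ y : Fin 11, y ≠ 1 ∧ y ≠ 2 ∧ y ≠ 3 → ∃ w ∈ fourPathTable,
    tableElement w • (0 : Fin 11) = 1 ∧ tableElement w • (1 : Fin 11) = 2 ∧
    tableElement w • (2 : Fin 11) = 3 ∧ tableElement w • (3 : Fin 11) = y := by
  decide +kernel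

lemma exists_mem_threeCycleTable : ∀ y : Fin 11, y ≠ 0 ∧ y ≠ 1 ∧ y ≠ 2 → ∃ w ∈ threeCycleTable,
    tableElement w • (0 : Fin 11) = 1 ∧ tableElement w • (1 : Fin 11) = 2 ∧
    tableElement w • (2 : Fin 11) = 0 ∧ tableElement w • (3 : Fin 11) = y := by
  decide +kernel

lemma nodup_base : [(0 : Fin 11), 1, 2, 3].Nodup := by decide

lemma exists_conj_eq_tableElement_of_fourPath {c : M11} {p : Fin 11} (h₂ : c • c • p ≠ p)
    (h₃ : c • c • c • p ≠ p) : ∃ w ∈ fourPathTable, ∃ g : M11, g⁻¹ * c * g = tableElement w := by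
  have hp : [p, c • p, c • c • p, c • c • c • p].Nodup := by
    simp only [List.nodup_cons, List.mem_cons, List.not_mem_nil, not_or]
    grind [smul_left_cancel_iff]
  obtain ⟨g, hg₀, hg₁, hg₂, hg₃⟩ := exists_smul_base_eq hp
  obtain ⟨w, hw, hw₀, hw₁, hw₂, hw₃⟩ := exists_mem_fourPathTable (g⁻¹ • c • g • 3) (by
    simp only [ne_eq, inv_smul_eq_iff, hg₁, hg₂, hg₃, smul_left_cancel_iff]
    exact ⟨h₃, h₂, fun h => h₂ (by rw [h, h])⟩)
  refine ⟨w, hw, g, eq_of_smul_eq_smul nodup_base ?_ ?_ ?_ ?_⟩ <;>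
    simp only [mul_smul, inv_smul_eq_iff, hg₀, hg₁, hg₂, hg₃, hw₀, hw₁, hw₂, hw₃]

lemma exists_conj_eq_tableElement_of_threeCycle {c : M11} {p : Fin 11} (h₂ : c • c • p ≠ p)
    (h₃ : c • c • c • p = p) :
    ∃ w ∈ threeCycleTable, ∃ g : M11, g⁻¹ * c * g = tableElement w := by
  obtain ⟨q, hq⟩ : ∃ q, [p, c • p, c • c • p, q].Nodup := exists_nodup_quadruple (by
    simp only [List.nodup_cons, List.mem_cons, List.not_mem_nil, not_or]
    grind [smul_left_cancel_iff])
  obtain ⟨g, hg₀, hg₁, hg₂, rfl⟩ := exists_smul_base_eq hq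
  obtain ⟨w, hw, hw₀, hw₁, hw₂, hw₃⟩ := exists_mem_threeCycleTable (g⁻¹ • c • g • 3) (by
    simp only [List.nodup_cons, List.mem_cons, List.not_mem_nil, not_or] at hq
    simp only [ne_eq, inv_smul_eq_iff, hg₀, hg₁, hg₂]
    grind [smul_left_cancel_iff])
  refine ⟨w, hw, g, eq_of_smul_eq_smul nodup_base ?_ ?_ ?_ ?_⟩ <;>
    simp only [mul_smul, inv_smul_eq_iff, hg₀, hg₁, hg₂, h₃, hw₀, hw₁, hw₂, hw₃]

lemma exists_conj_eq_tableElement {c : M11} {p : Fin 11} (hp : c • c • p ≠ p) :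
    ∃ w ∈ fourPathTable ++ threeCycleTable, ∃ g : M11, g⁻¹ * c * g = tableElement w := by
  by_cases h₃ : c • c • c • p = p
  · obtain ⟨w, hw, h⟩ := exists_conj_eq_tableElement_of_threeCycle hp h₃
    exact ⟨w, List.mem_append_right _ hw, h⟩
  · obtain ⟨w, hw, h⟩ := exists_conj_eq_tableElement_of_fourPath hp h₃
    exact ⟨w, List.mem_append_left _ hw, h⟩

lemma exists_smul_ne_self {c : M11} (hc : c ≠ 1) (x y : Fin 11) :
    ∃ z, z ≠ x ∧ z ≠ y ∧ c • z ≠ z := by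
  have exists_nodup_of_ne : ∀ x y : Fin 11, ∃ z₀ z₁ z₂ z₃ : Fin 11, [z₀, z₁, z₂, z₃].Nodup ∧
      ∀ z ∈ [z₀, z₁, z₂, z₃], z ≠ x ∧ z ≠ y := by
    decide +kernel
  contrapose! hc
  obtain ⟨z₀, z₁, z₂, z₃, hz, hne⟩ := exists_nodup_of_ne x y
  have fixed (z : Fin 11) (hz : z ∈ [z₀, z₁, z₂, z₃]) : c • z = (1 : M11) • z := by
    rw [one_smul, hc z (hne z hz).1 (hne z hz).2]
  exact eq_of_smul_eq_smul hz (fixed _ (by simp)) (fixed _ (by simp)) (fixed _ (by simp))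
    (fixed _ (by simp))

/-- A representative of the only conjugacy class of involutions of `M11`. -/
def involution : M11 := ⁅shift 1, word [2, 10]⁆

lemma exists_conj_eq_involution {c : M11} (hc : c ≠ 1) (h₂ : ∀ p : Fin 11, c • c • p = p) :
    ∃ g : M11, g⁻¹ * c * g = involution := by
  obtain ⟨p, -, -, hp⟩ := exists_smul_ne_self hc 0 0
  obtain ⟨q, hqp, hqcp, hq⟩ := exists_smul_ne_self hc p (c • p)
  have hpq : [p, c • p, q, c • q].Nodup := by
    simp only [List.nodup_cons, List.mem_cons, List.not_mem_nil, not_or]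
    grind [smul_left_cancel_iff]
  have nodup : [(0 : Fin 11), 2, 1, 6].Nodup := by decide
  obtain ⟨g, rfl, hg₁, rfl, hg₃⟩ := exists_smul_eq nodup hpq
  have involution_smul : involution • (0 : Fin 11) = 2 ∧ involution • (2 : Fin 11) = 0 ∧
      involution • (1 : Fin 11) = 6 ∧ involution • (6 : Fin 11) = 1 := by
    decide +kernel
  obtain ⟨h0, h2, h1, h6⟩ := involution_smul
  refine ⟨g, eq_of_smul_eq_smul nodup ?_ ?_ ?_ ?_⟩ <;>
    simp only [mul_smul, inv_smul_eq_iff, hg₁, hg₃, h0, h1, h2, h6, h₂]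

/-! ### Commutators in the group of signed permutations -/

section SemiInvariant

variable {φ : Point → ZMod 2} {u : Point → ZMod 2}

lemma apply_eq_of_isSemiInvariant_shift (hφ : IsSemiInvariant (shift 1) φ) (p : Point) :
    φ p = φ (0, 0) + (φ (0, 0) + φ (0, 1)) * p.2 := by
  have shift_pow_smul : ∀ p : Point, shift 1 ^ (p.1 : ℕ) • ((0, p.2) : Point) = p := by
    decide +kernel
  have hinv := hφ.apply_smul_of_odd_of_pow_eq_one (n := 11) (by decide) (by decide +kernel)
  have heq : φ p = φ (0, p.2) := by
    conv_lhs => rw [← shift_pow_smul p, apply_pow_smul_of_invariant hinv]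
  rw [heq]
  rcases zmod_two_eq_zero_or_one p.2 with h | h
  · rw [h, mul_zero, add_zero]
  · rw [h, mul_one, CharTwo.add_cancel_left]

lemma sum_mul_eq_of_isSemiInvariant_shift (hφ : IsSemiInvariant (shift 1) φ)
    (hu : ∑ p, u p = 0) :
    ∑ p, φ p * u p = (φ (0, 0) + φ (0, 1)) * ∑ p, p.2 * u p := by
  calc ∑ p, φ p * u p
      = ∑ p, (φ (0, 0) * u p + (φ (0, 0) + φ (0, 1)) * (p.2 * u p)) :=
        Finset.sum_congr rfl fun p _ => by
          rw [apply_eq_of_isSemiInvariant_shift hφ p]; ring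
    _ = (φ (0, 0) + φ (0, 1)) * ∑ p, p.2 * u p := by
        rw [Finset.sum_add_distrib, ← Finset.mul_sum, ← Finset.mul_sum, hu, mul_zero, zero_add]

lemma apply_zero_add_apply_one_eq_zero {b : M11} {x y : Fin 11} (hb : sheet b x ≠ sheet b y)
    (hφ : IsSemiInvariant (shift 1) φ) (hφb : IsSemiInvariant b φ) :
    φ (0, 0) + φ (0, 1) = 0 := by
  obtain ⟨c, hc⟩ := hφb
  have hx := hc (x, 0)
  have hy := hc (y, 0)
  rw [smul_mk, apply_eq_of_isSemiInvariant_shift hφ (b • x, _),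
    apply_eq_of_isSemiInvariant_shift hφ (x, 0)] at hx
  rw [smul_mk, apply_eq_of_isSemiInvariant_shift hφ (b • y, _),
    apply_eq_of_isSemiInvariant_shift hφ (y, 0)] at hy
  have hmul : (φ (0, 0) + φ (0, 1)) * (sheet b x + sheet b y) = 0 := by grind
  refine (mul_eq_zero.1 hmul).resolve_right fun h => hb ?_
  rwa [CharTwo.add_eq_zero] at h

lemma apply_eq_of_isSemiInvariant_quint (hφ : IsSemiInvariant quint φ)
    (hφ' : IsSemiInvariant (word [8, 5]) φ) (p : Point) :
    φ p = φ (3, 0) + (φ (0, 0) + φ (3, 0)) * if p.1 = 0 then 1 else 0 := by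
  have quint_inv := hφ.apply_smul_of_smul_eq_self (q := (0, 0)) (by decide +kernel)
  obtain ⟨q, hq⟩ : ∃ q : Point, word [8, 5] • q = q := by decide +kernel
  have word_inv := hφ'.apply_smul_of_smul_eq_self hq
  have reach_zero : ∀ e : ZMod 2, ∃ b : Fin 2,
      word [8, 5] ^ (b : ℕ) • ((0, 0) : Point) = (0, e) := by
    decide +kernel
  have reach : ∀ p : Point, p.1 ≠ 0 → ∃ a c : Fin 5, ∃ b d : Fin 2,
      quint ^ (a : ℕ) • word [8, 5] ^ (b : ℕ) • quint ^ (c : ℕ) • word [8, 5] ^ (d : ℕ) •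
        ((3, 0) : Point) = p := by
    decide +kernel
  split_ifs with hp
  · obtain ⟨x, e⟩ := p
    obtain rfl : x = 0 := hp
    obtain ⟨b, hb⟩ := reach_zero e
    rw [← hb, apply_pow_smul_of_invariant word_inv]
    grind
  · obtain ⟨a, c, b, d, h⟩ := reach p hp
    simp only [← h, apply_pow_smul_of_invariant quint_inv, apply_pow_smul_of_invariant word_inv,
      mul_zero, add_zero]

end SemiInvariant

variable {a : EvenWreath M11 Point}

lemma mem_commutatorSet_of_sheet_ne {b : M11} {x y : Fin 11} (hb : sheet b x ≠ sheet b y)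
    (ha : a.perm = ⁅shift 1, b⁆) : a ∈ commutatorSet (EvenWreath M11 Point) :=
  mem_commutatorSet_of_orthogonal ha fun φ hφ hφb => by
    rw [sum_mul_eq_of_isSemiInvariant_shift hφ a.sum_sign,
      apply_zero_add_apply_one_eq_zero hb hφ hφb, zero_mul]

lemma mem_commutatorSet_of_sum_snd_mul_eq_zero {b : M11} (ha : a.perm = ⁅shift 1, b⁆)
    (h : ∑ p, p.2 * a.sign p = 0) : a ∈ commutatorSet (EvenWreath M11 Point) :=
  mem_commutatorSet_of_orthogonal ha fun φ hφ _ => by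
    rw [sum_mul_eq_of_isSemiInvariant_shift hφ a.sum_sign, h, mul_zero]

lemma mem_commutatorSet_of_sum_block_eq_zero (ha : a.perm = ⁅quint, word [8, 5]⁆)
    (h : ∑ p : Point, (if p.1 = 0 then 1 else 0) * a.sign p = 0) :
    a ∈ commutatorSet (EvenWreath M11 Point) :=
  mem_commutatorSet_of_orthogonal ha fun φ hφ hφ' => by
    calc ∑ p, φ p * a.sign p
        = ∑ p : Point, (φ (3, 0) * a.sign p +
            (φ (0, 0) + φ (3, 0)) * ((if p.1 = 0 then 1 else 0) * a.sign p)) :=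
          Finset.sum_congr rfl fun p _ => by
            rw [apply_eq_of_isSemiInvariant_quint hφ hφ' p]; ring
      _ = 0 := by
          rw [Finset.sum_add_distrib, ← Finset.mul_sum, ← Finset.mul_sum, a.sum_sign, h,
            mul_zero, mul_zero, add_zero]

lemma mem_commutatorSet_of_smul_smul_ne {p : Fin 11} (hp : a.perm • a.perm • p ≠ p) :
    a ∈ commutatorSet (EvenWreath M11 Point) := by
  have exists_sheet_ne : ∀ w ∈ fourPathTable ++ threeCycleTable, ∃ x y,
      sheet (word w.2) x ≠ sheet (word w.2) y := by
    decide +kernel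
  obtain ⟨w, hw, g, hg⟩ := exists_conj_eq_tableElement hp
  obtain ⟨x, y, hxy⟩ := exists_sheet_ne w hw
  refine mem_commutatorSet_of_conjLift (g := g * word w.1)
    (mem_commutatorSet_of_sheet_ne hxy ?_)
  calc (g * word w.1)⁻¹ * a.perm * (g * word w.1)
      = (word w.1)⁻¹ * (g⁻¹ * a.perm * g) * word w.1 := by group
    _ = ⁅shift 1, word w.2⁆ := by rw [hg, tableElement]; group

lemma sum_inv_smul_snd_mul_sign_eq_one (hcs : a ∉ commutatorSet (EvenWreath M11 Point)) {g b : M11}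
    (hg : g⁻¹ * a.perm * g = ⁅shift 1, b⁆) : ∑ p : Point, (g⁻¹ • p).2 * a.sign p = 1 := by
  rw [← sum_comp_smul g]
  simp only [inv_smul_smul, ← sign_conjLift]
  exact (zmod_two_eq_zero_or_one _).resolve_left fun h =>
    hcs (mem_commutatorSet_of_conjLift (mem_commutatorSet_of_sum_snd_mul_eq_zero hg h))

lemma sum_inv_smul_block_mul_sign_eq_one (hcs : a ∉ commutatorSet (EvenWreath M11 Point)) {g : M11}
    (hg : g⁻¹ * a.perm * g = ⁅quint, word [8, 5]⁆) :
    ∑ p : Point, (if (g⁻¹ • p).1 = 0 then 1 else 0) * a.sign p = 1 := by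
  rw [← sum_comp_smul g]
  simp only [inv_smul_smul, ← sign_conjLift]
  exact (zmod_two_eq_zero_or_one _).resolve_left fun h =>
    hcs (mem_commutatorSet_of_conjLift (mem_commutatorSet_of_sum_block_eq_zero hg h))

/-- Each way of writing the involution as a commutator yields a functional that takes the value one
on the sign part of a non-commutator. Seven of these functionals add up to a multiple of the sum of
all signs, which vanishes. -/
lemma mem_commutatorSet_of_perm_eq_involution (ha : a.perm = involution) :
    a ∈ commutatorSet (EvenWreath M11 Point) := by
  by_contra hcs
  have snd_sum (w : List (Fin 11)) (hw : (word w)⁻¹ * involution * word w = involution) :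
      ∑ p : Point, ((word w)⁻¹ • p).2 * a.sign p = 1 :=
    sum_inv_smul_snd_mul_sign_eq_one hcs (by rw [ha, hw, involution])
  have block_sum (w : List (Fin 11))
      (hw : (word w)⁻¹ * involution * word w = ⁅quint, word [8, 5]⁆) :
      ∑ p : Point, (if ((word w)⁻¹ • p).1 = 0 then 1 else 0) * a.sign p = 1 :=
    sum_inv_smul_block_mul_sign_eq_one hcs (by rw [ha, hw])
  have weights_const : ∃ c : ZMod 2, ∀ p : Point, ((word [])⁻¹ • p).2 + ((word [5, 7])⁻¹ • p).2 +
      ((word [2, 7, 0])⁻¹ • p).2 + ((word [3, 1, 1])⁻¹ • p).2 +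
      (if ((word [2, 9, 0])⁻¹ • p).1 = 0 then 1 else 0) +
      (if ((word [10, 6, 3])⁻¹ • p).1 = 0 then 1 else 0) +
      (if ((word [0, 7, 3])⁻¹ • p).1 = 0 then 1 else 0) = c := by
    decide +kernel
  obtain ⟨c, hc⟩ := weights_const
  have hsum := Finset.sum_congr rfl fun p (_ : p ∈ Finset.univ) => congrArg (· * a.sign p) (hc p)
  simp only [add_mul, Finset.sum_add_distrib, ← Finset.mul_sum] at hsum
  rw [snd_sum [] (by decide +kernel), snd_sum [5, 7] (by decide +kernel),
    snd_sum [2, 7, 0] (by decide +kernel), snd_sum [3, 1, 1] (by decide +kernel),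
    block_sum [2, 9, 0] (by decide +kernel), block_sum [10, 6, 3] (by decide +kernel),
    block_sum [0, 7, 3] (by decide +kernel), a.sum_sign, mul_zero] at hsum
  exact absurd hsum (by decide)

lemma exists_inv_smul_snd_eq (i : Option (Fin 11)) :
    ∃ g : M11, ∀ p : Point, (g⁻¹ • p).2 = hadamard i p.1 + p.2 := by
  cases i with
  | none => exact ⟨1, fun p => by rw [inv_one, one_smul, hadamard, zero_add]⟩
  | some i => exact ⟨shift i * word [4], by decide +kernel +revert⟩

/-- Two distinct translates of the set of zero and the non-squares modulo `11` meet in three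
points. -/
lemma sum_hadamard_mul_hadamard :
    ∀ x y : Fin 11, ∑ i : Fin 11, hadamard (some i) x * hadamard (some i) y =
      if x = y then 0 else 1 := by
  decide +kernel

lemma eq_zero_of_sum_hadamard_mul_eq_zero {v : Fin 11 → ZMod 2} (hv : ∑ x, v x = 0)
    (h : ∀ i, ∑ x, hadamard (some i) x * v x = 0) (y : Fin 11) : v y = 0 := by
  calc v y = ∑ x, v x + ∑ x, (if x = y then 0 else 1) * v x := by
        rw [← Finset.sum_add_distrib, Finset.sum_eq_single y (fun x _ hx => ?_) (by simp)]
        · simp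
        · simp [hx, CharTwo.add_self_eq_zero]
    _ = ∑ i, hadamard (some i) y * ∑ x, hadamard (some i) x * v x := by
        simp only [hv, zero_add, Finset.mul_sum, ← sum_hadamard_mul_hadamard, Finset.sum_mul]
        rw [Finset.sum_comm]
        exact Finset.sum_congr rfl fun i _ => Finset.sum_congr rfl fun x _ => by ring
    _ = 0 := by simp [h]

lemma sum_point (u : Point → ZMod 2) : ∑ p, u p = ∑ x, (u (x, 0) + u (x, 1)) := by
  rw [Fintype.sum_prod_type]
  exact Finset.sum_congr rfl fun x _ => Fin.sum_univ_two _

variable {a : EvenWreath M11 Point}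

lemma sum_hadamard_add_mul_sign_eq_one (ha : a.perm = 1)
    (hcs : a ∉ commutatorSet (EvenWreath M11 Point)) (i : Option (Fin 11)) :
    ∑ p : Point, (hadamard i p.1 + p.2) * a.sign p = 1 := by
  obtain ⟨g, hg⟩ := exists_inv_smul_snd_eq i
  simp only [← hg]
  exact sum_inv_smul_snd_mul_sign_eq_one hcs (b := 1) (by simp [ha])

lemma sum_sign_one_eq_one (ha : a.perm = 1) (hcs : a ∉ commutatorSet (EvenWreath M11 Point)) :
    ∑ x, a.sign (x, 1) = 1 := by
  simpa [hadamard, sum_point] using sum_hadamard_add_mul_sign_eq_one ha hcs none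

lemma sign_zero_eq_sign_one (ha : a.perm = 1) (hcs : a ∉ commutatorSet (EvenWreath M11 Point))
    (x : Fin 11) : a.sign (x, 0) = a.sign (x, 1) := by
  rw [← CharTwo.add_eq_zero]
  refine eq_zero_of_sum_hadamard_mul_eq_zero (v := fun x => a.sign (x, 0) + a.sign (x, 1)) ?_
    (fun i => ?_) x
  · rw [← sum_point, a.sum_sign]
  · have h := sum_hadamard_add_mul_sign_eq_one ha hcs (some i)
    simp only [sum_point, add_mul, ← add_assoc, one_mul, Finset.sum_add_distrib,
      sum_sign_one_eq_one ha hcs] at h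
    simpa [mul_add, Finset.sum_add_distrib] using h

lemma apply_zero_add_apply_one_smul_eq {k : M11} {φ : Point → ZMod 2} (hφ : IsSemiInvariant k φ)
    (x : Fin 11) : φ (k • x, 0) + φ (k • x, 1) = φ (x, 0) + φ (x, 1) := by
  obtain ⟨c, hc⟩ := hφ
  have h₀ := hc (x, 0)
  have h₁ := hc (x, 1)
  rw [smul_mk] at h₀ h₁
  rcases zmod_two_eq_zero_or_one (sheet k x) with h | h
  · rw [h, zero_add] at h₀ h₁
    grind
  · rw [h, add_zero] at h₀
    rw [h, CharTwo.add_self_eq_zero] at h₁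
    grind

/-- On the blocks, `word [1]` has a fixed point `8`, a two-cycle `2, 10` and an eight-cycle. -/
lemma mem_commutatorSet_of_sign_eq (ha : a.perm = 1)
    (hblock : ∀ x, a.sign (x, 0) = a.sign (x, 1)) (hsum : ∑ x, a.sign (x, 1) = 1)
    (h₂ : a.sign (2, 1) = 1) (h₈ : a.sign (8, 1) = 0) (h₁₀ : a.sign (10, 1) = 0) :
    a ∈ commutatorSet (EvenWreath M11 Point) := by
  refine mem_commutatorSet_of_orthogonal (k := word [1]) (l := 1) (by simp [ha]) fun φ hφ _ => ?_
  have smul_two : word [1] • word [1] • ((2, 0) : Point) = (2, 1) := by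
    decide +kernel
  have block_two : φ (2, 0) + φ (2, 1) = 0 := by
    obtain ⟨c, hc⟩ := hφ
    rw [← smul_two, hc, hc]
    grind
  have orbit : ∀ x : Fin 11, x = 2 ∨ x = 8 ∨ x = 10 ∨
      ∃ n : Fin 8, word [1] ^ (n : ℕ) • 0 = x := by
    decide +kernel
  have block_mul (x : Fin 11) : (φ (x, 0) + φ (x, 1)) * a.sign (x, 1) =
      (φ (0, 0) + φ (0, 1)) * (a.sign (x, 1) + if x = 2 then 1 else 0) := by
    split_ifs with hx
    · rw [hx, block_two, h₂, zero_mul, CharTwo.add_self_eq_zero, mul_zero]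
    · rcases orbit x with rfl | rfl | rfl | ⟨n, rfl⟩
      · contradiction
      · rw [h₈, add_zero, mul_zero, mul_zero]
      · rw [h₁₀, add_zero, mul_zero, mul_zero]
      · rw [add_zero, apply_pow_smul_of_invariant (φ := fun x => φ (x, 0) + φ (x, 1))
          (apply_zero_add_apply_one_smul_eq hφ)]
  calc ∑ p, φ p * a.sign p
      = ∑ x, (φ (x, 0) + φ (x, 1)) * a.sign (x, 1) := by simp only [sum_point, hblock, add_mul]
    _ = 0 := by
      simp only [block_mul, ← Finset.mul_sum, Finset.sum_add_distrib, hsum, Finset.sum_ite_eq',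
        Finset.mem_univ, if_true, CharTwo.add_self_eq_zero, mul_zero]

lemma exists_eq_one_and_eq_zero {v : Fin 11 → ZMod 2} (hv : ∑ x, v x = 1) {z : Fin 11}
    (hz : v z = 0) : ∃ x y, v x = 1 ∧ v y = 0 ∧ [x, y, z].Nodup := by
  obtain ⟨x, hx⟩ : ∃ x, v x = 1 := by
    by_contra! h
    simp [fun x => (zmod_two_eq_zero_or_one (v x)).resolve_right (h x)] at hv
  obtain ⟨y, hyz, hy⟩ : ∃ y, y ≠ z ∧ v y = 0 := by
    by_contra! h
    have hv' : v = fun y => if y = z then 0 else 1 := by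
      ext1 y
      split_ifs with hyz
      · rw [hyz, hz]
      · exact (zmod_two_eq_zero_or_one (v y)).resolve_left (h y hyz)
    rw [hv'] at hv
    exact absurd hv (by decide +kernel +revert)
  refine ⟨x, y, hx, hy, ?_⟩
  have hne (w : Fin 11) (hw : v w = 0) : x ≠ w := fun h => by simp [← h, hx] at hw
  simp [hne y hy, hne z hz, hyz]

lemma mem_commutatorSet_of_perm_eq_one (ha : a.perm = 1) {p : Point} (hp : a.sign p = 0) :
    a ∈ commutatorSet (EvenWreath M11 Point) := by
  by_contra hcs
  have sign_eq (x : Fin 11) (e : ZMod 2) : a.sign (x, e) = a.sign (x, 1) := by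
    rcases zmod_two_eq_zero_or_one e with rfl | rfl
    · exact sign_zero_eq_sign_one ha hcs x
    · rfl
  obtain ⟨x, y, hx, hy, hxyz⟩ := exists_eq_one_and_eq_zero (sum_sign_one_eq_one ha hcs)
    ((sign_eq p.1 p.2).symm.trans hp)
  obtain ⟨w, hw⟩ := exists_nodup_quadruple hxyz
  obtain ⟨g, hgx, hgy, hgz, -⟩ :=
    exists_smul_eq (show [(2 : Fin 11), 8, 10, 0].Nodup by decide) hw
  have sign_conj (x : Fin 11) : (a.conjLift g).sign (x, 1) = a.sign (g • x, 1) := by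
    rw [sign_conjLift, smul_mk, sign_eq]
  have hperm : (a.conjLift g).perm = 1 := by simp [ha]
  have hconj : a.conjLift g ∉ commutatorSet (EvenWreath M11 Point) :=
    fun h => hcs (mem_commutatorSet_of_conjLift h)
  refine hconj (mem_commutatorSet_of_sign_eq hperm (sign_zero_eq_sign_one hperm hconj)
    (sum_sign_one_eq_one hperm hconj) ?_ ?_ ?_)
  · rw [sign_conj, hgx, hx]
  · rw [sign_conj, hgy, hy]
  · rw [sign_conj, hgz, ← sign_eq p.1 p.2, hp]

lemma even_card_point : Even (Fintype.card Point) := by decide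

lemma not_four_dvd_card_point : ¬ 4 ∣ Fintype.card Point := by decide

theorem mem_commutatorSet_of_ne_flipAll {a : EvenWreath M11 Point}
    (ha : a ≠ flipAll M11 even_card_point) : a ∈ commutatorSet (EvenWreath M11 Point) := by
  by_cases hone : a.perm = 1
  · obtain ⟨p, hp⟩ : ∃ p, a.sign p ≠ 1 := by
      contrapose! ha
      exact EvenWreath.ext hone (funext ha)
    exact mem_commutatorSet_of_perm_eq_one hone ((zmod_two_eq_zero_or_one _).resolve_right hp)
  by_cases hinvol : ∀ p : Fin 11, a.perm • a.perm • p = p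
  · obtain ⟨g, hg⟩ := exists_conj_eq_involution hone hinvol
    exact mem_commutatorSet_of_conjLift (mem_commutatorSet_of_perm_eq_involution hg)
  · push Not at hinvol
    obtain ⟨p, hp⟩ := hinvol
    exact mem_commutatorSet_of_smul_smul_ne hp

/-! ### The change of all signs is not a commutator -/

/-- The exponent of `M₁₁` is `1320 = 8 * 3 * 5 * 11`. -/
lemma pow_1320_eq_one (q : M11) : q ^ 1320 = 1 := by
  have tableElement_pow : ∀ w ∈ fourPathTable ++ threeCycleTable,
      ∃ n ∈ [4, 5, 6, 8, 11], tableElement w ^ n = 1 := by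
    decide +kernel
  by_cases hq : ∀ p : Fin 11, q • q • p = p
  · have hq2 : q ^ 2 = 1 := by
      apply eq_one_of_smul_eq_self <;> rw [pow_two, mul_smul, hq]
    rw [pow_mul q 2 660, hq2, one_pow]
  · push Not at hq
    obtain ⟨p, hp⟩ := hq
    obtain ⟨w, hw, g, hg⟩ := exists_conj_eq_tableElement hp
    obtain ⟨n, hn, hpow⟩ := tableElement_pow w hw
    rw [← hg, conj_pow_eq_one_iff] at hpow
    have hdvd : ∀ n ∈ [4, 5, 6, 8, 11], n ∣ 1320 := by decide
    obtain ⟨k, hk⟩ := hdvd n hn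
    rw [hk, pow_mul, hpow, one_pow]

/-- An element commuting with `c = tableElement w` preserves the set of blocks that are not fixed by
`c ^ 2`, which is a single orbit of `d`. -/
lemma exists_pow_eq_of_commute {w : List (Fin 11) × List (Fin 11)} (hw : w ∈ fourPathTable)
    (hpow : tableElement w ^ 8 = 1) :
    ∃ d : M11, (∃ m : ℕ, tableElement w = d ^ m) ∧
      ∀ r, Commute (tableElement w) r → ∃ n : ℕ, r = d ^ n := by
  have centralizer_generator : ∀ w ∈ fourPathTable, tableElement w ^ 8 = 1 →
      ∃ v ∈ [[2, 7, 5, 1], [10, 4, 6], [10, 4, 0, 3]],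
        (∃ m : Fin 8, tableElement w = word v ^ (m : ℕ)) ∧
        ∀ z : Fin 11, tableElement w • tableElement w • z ≠ z →
          ∃ n : Fin 8, word v ^ (n : ℕ) • 0 = z := by
    decide +kernel
  have path : ∀ w ∈ fourPathTable, tableElement w • (0 : Fin 11) = 1 ∧
      tableElement w • (1 : Fin 11) = 2 ∧ tableElement w • (2 : Fin 11) = 3 := by
    decide +kernel
  obtain ⟨v, -, ⟨m, hm⟩, horbit⟩ := centralizer_generator w hw hpow
  obtain ⟨h₀, h₁, h₂⟩ := path w hw
  generalize tableElement w = c at *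
  refine ⟨word v, ⟨m, hm⟩, fun r hr => ?_⟩
  have comm_smul {s : M11} (hs : Commute c s) (z : Fin 11) : s • c • z = c • s • z := by
    rw [← mul_smul, ← hs.eq, mul_smul]
  obtain ⟨n, hn⟩ := horbit (r • 0) (by
    rw [← comm_smul hr, ← comm_smul hr, h₀, h₁, Ne, smul_left_cancel_iff]; decide)
  have hcomm : Commute c (word v ^ (n : ℕ)) := hm ▸ Commute.pow_pow_self _ _ _
  have agree_smul {z : Fin 11} (hz : r • z = word v ^ (n : ℕ) • z) :
      r • c • z = word v ^ (n : ℕ) • c • z := by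
    rw [comm_smul hr, comm_smul hcomm, hz]
  have agree₁ := agree_smul hn.symm
  have agree₂ := agree_smul agree₁
  have agree₃ := agree_smul agree₂
  rw [h₀] at agree₁ agree₂ agree₃
  rw [h₁] at agree₂ agree₃
  rw [h₂] at agree₃
  exact ⟨n, eq_of_smul_eq_smul nodup_base hn.symm agree₁ agree₂ agree₃⟩

variable {a b : EvenWreath M11 Point}

lemma commute_perm_of_commutator_eq_flipAll (h : ⁅a, b⁆ = flipAll M11 even_card_point) :
    Commute a.perm b.perm := by
  rw [← commutatorElement_eq_one_iff_commute, ← perm_commutator, h, perm_flipAll]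

lemma smul_smul_eq_of_commutator_eq_flipAll (h : ⁅a, b⁆ = flipAll M11 even_card_point)
    (ha : a.perm ^ 8 = 1) (p : Fin 11) : a.perm • a.perm • p = p := by
  by_contra h₂
  have h₃ : a.perm • a.perm • a.perm • p ≠ p := fun h₃ => by
    have h₈ : a.perm ^ 8 • p = p := by rw [ha, one_smul]
    simp only [pow_succ', pow_zero, mul_one, mul_smul, h₃] at h₈
    exact h₂ h₈
  obtain ⟨w, hw, g, hg⟩ := exists_conj_eq_tableElement_of_fourPath h₂ h₃
  have hconj := commutator_conjLift_eq_flipAll h g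
  have hpow : tableElement w ^ 8 = 1 := by
    rw [← hg, conj_pow_eq_one_iff, ha]
  obtain ⟨d, ⟨m, hm⟩, hd⟩ := exists_pow_eq_of_commute hw hpow
  rw [← perm_conjLift] at hg
  obtain ⟨n, hn⟩ := hd _ (hg ▸ commute_perm_of_commutator_eq_flipAll hconj)
  exact commutator_ne_flipAll_of_perm_eq_pow not_four_dvd_card_point d m n _ _ (hg.trans hm) hn
    hconj

lemma smul_point_eq_of_smul_eq {c : M11} (h₂ : ∀ p : Fin 11, c • c • p = p) {x : Fin 11}
    (hx : c • x = x) (e : ZMod 2) : c • ((x, e) : Point) = (x, e) := by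
  have involution_smul : ∀ x : Fin 11, involution • x = x →
      ∀ e : ZMod 2, involution • ((x, e) : Point) = (x, e) := by
    decide +kernel
  by_cases hc : c = 1
  · rw [hc, one_smul]
  obtain ⟨g, hg⟩ := exists_conj_eq_involution hc h₂
  have hfix := involution_smul (g⁻¹ • x) (by simp [← hg, mul_smul, hx]) (sheet g⁻¹ x + e)
  rw [← smul_mk, ← hg, mul_smul, smul_inv_smul, mul_smul, smul_left_cancel_iff] at hfix
  exact hfix

lemma exists_common_fixed {r : M11} (hr : Commute involution r)
    (h₂ : ∀ p : Fin 11, r • r • p = p) : ∃ x : Fin 11, involution • x = x ∧ r • x = x := by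
  have involution_smul_eq_iff : ∀ x : Fin 11, involution • x = x ↔ x = 3 ∨ x = 7 ∨ x = 9 := by
    decide +kernel
  have smul_mem (x : Fin 11) (hx : involution • x = x) : r • x = 3 ∨ r • x = 7 ∨ r • x = 9 := by
    rw [← involution_smul_eq_iff, ← mul_smul, hr.eq, mul_smul, hx]
  have eq_of_swap {x y z : Fin 11} (hx : r • x = y) (hz : r • z = x) : z = y := by
    rw [← hx, ← hz, h₂]
  simp only [involution_smul_eq_iff]
  rcases smul_mem 3 (by decide +kernel) with h | h | h
  · exact ⟨3, by simp, h⟩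
  · rcases smul_mem 9 (by decide +kernel) with h' | h' | h'
    · exact absurd (eq_of_swap h h') (by decide)
    · exact absurd (smul_left_cancel r (h.trans h'.symm)) (by decide)
    · exact ⟨9, by simp, h'⟩
  · rcases smul_mem 7 (by decide +kernel) with h' | h' | h'
    · exact absurd (eq_of_swap h h') (by decide)
    · exact ⟨7, by simp, h'⟩
    · exact absurd (smul_left_cancel r (h.trans h'.symm)) (by decide)

theorem flipAll_notMem_commutatorSet :
    flipAll M11 even_card_point ∉ commutatorSet (EvenWreath M11 Point) := by
  rintro ⟨a, b, h⟩
  wlog hpow : a.perm ^ 8 = 1 ∧ b.perm ^ 8 = 1 generalizing a b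
  · have odd_165 : Odd 165 := by decide
    refine this (a ^ 165) (b ^ 165) ?_ ?_
    · exact commutator_pow_eq_flipAll (commutator_swap_eq_flipAll
        (commutator_pow_eq_flipAll (commutator_swap_eq_flipAll h) odd_165)) odd_165
    · simp only [perm_pow, ← pow_mul]
      exact ⟨pow_1320_eq_one _, pow_1320_eq_one _⟩
  obtain ⟨g, hg⟩ := exists_conj_eq_involution
    (perm_ne_one_of_commutator_eq_flipAll not_four_dvd_card_point h)
    (smul_smul_eq_of_commutator_eq_flipAll h hpow.1)
  have hconj := commutator_conjLift_eq_flipAll h g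
  rw [← perm_conjLift] at hg
  have hinvol : ∀ p : Fin 11, (b.conjLift g).perm • (b.conjLift g).perm • p = p :=
    smul_smul_eq_of_commutator_eq_flipAll (commutator_swap_eq_flipAll hconj)
      ((conj_pow_eq_one_iff g b.perm 8).2 hpow.2)
  obtain ⟨x, hx, hbx⟩ :=
    exists_common_fixed (hg ▸ commute_perm_of_commutator_eq_flipAll hconj) hinvol
  have hax : involution • ((x, 0) : Point) = (x, 0) :=
    smul_point_eq_of_smul_eq (by decide +kernel) hx 0
  exact smul_ne_self_of_commutator_eq_flipAll hconj (hg ▸ hax)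
    (smul_point_eq_of_smul_eq hinvol hbx 0)

theorem existsUnique_notMem_commutatorSet :
    ∃! a : EvenWreath M11 Point, a ∉ commutatorSet (EvenWreath M11 Point) :=
  ⟨flipAll M11 even_card_point, flipAll_notMem_commutatorSet, fun _ ha =>
    by_contra fun hne => ha (mem_commutatorSet_of_ne_flipAll hne)⟩

/-! ### Identification of the permutation group -/

lemma eq_top_of_shift_mem_of_quint_mem {H : Subgroup M11} (hshift : shift 1 ∈ H)
    (hquint : quint ∈ H) : H = ⊤ := by
  have closure_eq_top : Subgroup.closure ((↑) ⁻¹' {translation 1, quintic} : Set M11) = ⊤ :=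
    Subgroup.closure_closure_coe_preimage
  rw [eq_top_iff, ← closure_eq_top]
  refine (Subgroup.closure_le H).2 ?_
  rintro q (hq | hq)
  · exact (Subtype.ext hq : q = shift 1) ▸ hshift
  · exact (Subtype.ext hq : q = quint) ▸ hquint

lemma exists_smul_one_zero_eq (p : Point) : ∃ q : M11, q • ((1, 0) : Point) = p := by
  have reach : ∀ p : Point,
      (shift p.1 * word [8, 5] ^ p.2.val * (shift 1)⁻¹) • ((1, 0) : Point) = p := by
    decide +kernel
  exact ⟨_, reach p⟩

/-- The preimages of `g1`, `g2`, `g3`, `g4` under `toPermFin`. -/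
def generators : Set (EvenWreath M11 Point) :=
  {flipPair M11 (1, 0) (7, 0), flipPair M11 (1, 0) (3, 1), lift Point quint,
    lift Point (quint ^ 3 * shift 1) * flipPair M11 (1, 1) (9, 1)}

lemma map_permHom_closure_generators :
    (Subgroup.closure generators).map (permHom M11 Point) = ⊤ := by
  have perm_mem {a : EvenWreath M11 Point} (ha : a ∈ generators) :
      a.perm ∈ (Subgroup.closure generators).map (permHom M11 Point) :=
    Subgroup.mem_map_of_mem (permHom M11 Point) (Subgroup.subset_closure ha)
  have hquint : quint ∈ (Subgroup.closure generators).map (permHom M11 Point) :=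
    perm_mem (a := lift Point quint) (by simp [generators])
  refine eq_top_of_shift_mem_of_quint_mem ?_ hquint
  have hmul := perm_mem (a := lift Point (quint ^ 3 * shift 1) * flipPair M11 (1, 1) (9, 1))
    (by simp [generators])
  rw [perm_mul, perm_lift, perm_flipPair, mul_one] at hmul
  exact (Subgroup.mul_mem_cancel_left _ (pow_mem hquint 3)).1 hmul

lemma closure_generators : Subgroup.closure generators = ⊤ := by
  have hmap := map_permHom_closure_generators
  have shift_mem : shift 1 ∈ flipSubgroup hmap (1, 0) := by
    have h : shift 6 ∈ flipSubgroup hmap (1, 0) := by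
      rw [mem_flipSubgroup, show shift 6 • ((1, 0) : Point) = (7, 0) by decide +kernel]
      exact Subgroup.subset_closure (by simp [generators])
    rw [show shift 1 = shift 6 ^ 2 by decide +kernel]
    exact pow_mem h 2
  have quint_mem : quint ∈ flipSubgroup hmap (1, 0) := by
    have h : shift 1 * quint * (shift 1)⁻¹ ∈ flipSubgroup hmap (1, 0) := by
      rw [mem_flipSubgroup, show (shift 1 * quint * (shift 1)⁻¹) • ((1, 0) : Point) = (1, 0) by
        decide +kernel, flipPair_self]
      exact one_mem _
    rwa [Subgroup.mul_mem_cancel_right _ (inv_mem shift_mem),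
      Subgroup.mul_mem_cancel_left _ shift_mem] at h
  refine eq_top_of_flipPair_mem hmap (o := (1, 0)) fun p => ?_
  obtain ⟨q, rfl⟩ := exists_smul_one_zero_eq p
  rw [← mem_flipSubgroup (hΓ := hmap), eq_top_of_shift_mem_of_quint_mem shift_mem quint_mem]
  exact Subgroup.mem_top q

/-- The function underlying `label`. The last coordinate distinguishes the two points of a block
`{2 i - 1, 2 i}`, and the rest was found by matching `g3` with `quint`. -/
def labelFun (q : Point × ZMod 2) : Fin 44 :=
  (if q.1.2 = 0 then ![9, 1, 31, 23, 37, 33, 19, 43, 15, 7, 25] q.1.1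
    else ![11, 3, 29, 21, 39, 35, 17, 41, 13, 5, 27] q.1.1) + if q.2 = 0 then 0 else 1

/-- The identification of the signed points with the `44` points of the theorem. -/
noncomputable def label : Point × ZMod 2 ≃ Fin 44 :=
  Equiv.ofBijective labelFun <| (Fintype.bijective_iff_injective_and_card _).2
    ⟨by unfold Function.Injective; decide +kernel, by decide⟩

/-- The action on the signed points as a permutation representation on `44` points. -/
noncomputable def toPermFin : EvenWreath M11 Point →* Equiv.Perm (Fin 44) :=
  label.permCongrHom.toMonoidHom.comp
    (MulAction.toPermHom (EvenWreath M11 Point) (Point × ZMod 2))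

lemma toPermFin_injective : Function.Injective toPermFin :=
  label.permCongrHom.injective.comp MulAction.toPerm_injective

lemma toPermFin_eq_iff {a : EvenWreath M11 Point} {g : Equiv.Perm (Fin 44)} :
    toPermFin a = g ↔ ∀ q, labelFun (a • q) = g (labelFun q) := by
  rw [Equiv.ext_iff, label.surjective.forall]
  refine forall_congr' fun q => ?_
  change label (a • label.symm (label q)) = g (label q) ↔ label (a • q) = g (label q)
  rw [Equiv.symm_apply_apply]

lemma image_generators : toPermFin '' generators = {g1, g2, g3, g4} := by
  have h1 : toPermFin (flipPair M11 (1, 0) (7, 0)) = g1 := by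
    rw [toPermFin_eq_iff]; decide +kernel
  have h2 : toPermFin (flipPair M11 (1, 0) (3, 1)) = g2 := by
    rw [toPermFin_eq_iff]; decide +kernel
  have h3 : toPermFin (lift Point quint) = g3 := by
    rw [toPermFin_eq_iff]; decide +kernel
  have h4 : toPermFin (lift Point (quint ^ 3 * shift 1) * flipPair M11 (1, 1) (9, 1)) = g4 := by
    rw [toPermFin_eq_iff]; decide +kernel
  simp only [generators, Set.image_insert_eq, Set.image_singleton, h1, h2, h3, h4]

lemma range_toPermFin : toPermFin.range = GMacHale := by
  rw [MonoidHom.range_eq_map, ← closure_generators, MonoidHom.map_closure, image_generators,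
    GMacHale]

/-- The group of the theorem in its structural form. -/
noncomputable def evenWreathEquivGMacHale : EvenWreath M11 Point ≃* GMacHale :=
  (MonoidHom.ofInjective toPermFin_injective).trans (MulEquiv.subgroupCongr range_toPermFin)

end M11

/-- The group `G_MacHale` contains exactly one element which is not a commutator. -/
theorem stmt_14 : ∃! x : GMacHale, ¬ ∃ a b : GMacHale, x = a⁻¹ * b⁻¹ * a * b := by
  rw [M11.evenWreathEquivGMacHale.bijective.existsUnique_iff]
  simpa only [exists_eq_inv_mul_inv_mul_mul_iff, apply_mem_commutatorSet_iff] using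
    M11.existsUnique_notMem_commutatorSet
end

section
/- Let G be the subgroup of the symmetric group on 44 points generated by the four permutations g1 = (1,2)(43,44), g2 = (1,2)(21,22), g3 = (1,39,13,43,25)(2,40,14,44,26)(3,37,15,41,27)(4,38,16,42,28)(5,35,23,17,31)(6,36,24,18,32)(7,33,21,19,29)(8,34,22,20,30), and g4 = (1,23,27,11,41)(2,24,28,12,42)(3,22,26,10,44,4,21,25,9,43)(5,16,20,40,32,6,15,19,39,31)(7,13,17,37,29)(8,14,18,38,30). Then the unique element of G that is not a commutator is the unique nonidentity element of the center Z(G) of G. -/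
/-!
The action on the 22 pairs `{2i + 1, 2i + 2}` identifies `GMacHale` with `U ⋊ M₁₁`, where `M₁₁` acts
transitively on 22 points with 11 blocks of size two, and `U` consists of the zero-sum functions
`Fin 22 → ZMod 2`. The central involution is the constant function `1`.

An element `(u, ρ)` is a commutator if and only if `ρ` is a commutator `[α, β]` in `M₁₁` such that
`S ⬝ᵥ u = 0` for every function `S` which `α` and `β` preserve up to additive constants: this is
linear duality applied to the equation for the components in `U`. For `u = 1` and `ρ = 1`, a
Sylow 2-subgroup argument produces for commuting `α` and `β` a function `S` with odd sum. In all
other cases suitable `α` and `β` are written down, with the help of the sharp 4-transitivity of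
`M₁₁` on the blocks and of its action on a 3-(12, 6, 2) design.
-/

namespace MacHale

open Equiv
open scoped Pointwise

theorem eq_inv_mul_inv_mul_mul_iff {H : Type*} [Group H] {g a b : H} :
    g = a⁻¹ * b⁻¹ * a * b ↔ b * a * g = a * b := by
  rw [← mul_inv_rev, mul_assoc, eq_inv_mul_iff_mul_eq]

-- If `ρ = α⁻¹β⁻¹αβ`, then `αρ` and `β⁻¹ρ` generate the same group as `α` and `β`.
theorem mem_and_mem_of_mul_commutator_mem {H : Type*} [Group H] {K : Subgroup H} {α β ρ : H}
    (hρ : ρ = α⁻¹ * β⁻¹ * α * β) (hα : α * ρ ∈ K) (hβ : β⁻¹ * ρ ∈ K) : α ∈ K ∧ β ∈ K := by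
  have hρK : ρ ∈ K := by
    have : ρ = α * ρ * (β⁻¹ * ρ)⁻¹ * (α * ρ)⁻¹ * (β⁻¹ * ρ) := by rw [hρ]; group
    rw [this]
    exact K.mul_mem (K.mul_mem (K.mul_mem hα (K.inv_mem hβ)) (K.inv_mem hα)) hβ
  exact ⟨(K.mul_mem_cancel_right hρK).1 hα, inv_mem_iff.1 ((K.mul_mem_cancel_right hρK).1 hβ)⟩

/-- `g = a⁻¹b⁻¹ab` for some `a` and `b` in the subgroup `K`. -/
def IsCommutatorIn {H : Type*} [Group H] (K : Subgroup H) (g : H) : Prop :=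
  ∃ a ∈ K, ∃ b ∈ K, g = a⁻¹ * b⁻¹ * a * b

theorem isCommutatorIn_coe {H : Type*} [Group H] {K : Subgroup H} {g : K} :
    IsCommutatorIn K (g : H) ↔ ∃ a b : K, g = a⁻¹ * b⁻¹ * a * b := by
  simp [IsCommutatorIn, Subtype.ext_iff]

theorem IsCommutatorIn.conj {H : Type*} [Group H] {K : Subgroup H} {g h : H}
    (hg : IsCommutatorIn K g) (hh : h ∈ K) : IsCommutatorIn K (h * g * h⁻¹) := by
  obtain ⟨a, ha, b, hb, rfl⟩ := hg
  refine ⟨h * a * h⁻¹, ?_, h * b * h⁻¹, ?_, by group⟩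
  · exact K.mul_mem (K.mul_mem hh ha) (K.inv_mem hh)
  · exact K.mul_mem (K.mul_mem hh hb) (K.inv_mem hh)

theorem apply_pow_smul_eq {H X Y : Type*} [Monoid H] [MulAction H X] {S : X → Y} {σ : H}
    (h : ∀ x, S (σ • x) = S x) (n : ℕ) (x : X) : S (σ ^ n • x) = S x := by
  induction n with
  | zero => rw [pow_zero, one_smul]
  | succ n ih => rw [pow_succ', mul_smul, h, ih]

theorem conj_smul_eq {H X : Type*} [Group H] [MulAction H X] {g σ : H} {x y x' y' : X}
    (hx : g • x = x') (hy : g • y = y') (hσ : σ • x = y) : (g * σ * g⁻¹) • x' = y' := by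
  rw [← hx, ← hy, mul_smul, inv_smul_smul, mul_smul, hσ]

theorem sum_smul_eq {H X k : Type*} [Group H] [MulAction H X] [Fintype X] [AddCommMonoid k]
    (g : H) (u : X → k) : ∑ x, u (g • x) = ∑ x, u x :=
  Equiv.sum_comp (MulAction.toPerm g) u

theorem dotProduct_comp_inv_smul {H X k : Type*} [Group H] [MulAction H X] [Fintype X]
    [CommRing k] (g : H) (f u : X → k) :
    (f ⬝ᵥ fun x => u (g⁻¹ • x)) = (fun x => f (g • x)) ⬝ᵥ u := by
  simpa [dotProduct] using (sum_smul_eq g fun x => f x * u (g⁻¹ • x)).symm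

theorem isPGroup_zpowers {H : Type*} [Group H] {p k : ℕ} {x : H} (hx : x ^ p ^ k = 1) :
    IsPGroup p (Subgroup.zpowers x) :=
  IsPGroup.of_card_dvd_pow (n := k) (Nat.card_zpowers x ▸ orderOf_dvd_of_pow_eq_one hx)

theorem isPGroup_zpowers_sup_zpowers {H : Type*} [Group H] {p k : ℕ} {x y : H} (h : Commute x y)
    (hx : x ^ p ^ k = 1) (hy : y ^ p ^ k = 1) :
    IsPGroup p (Subgroup.zpowers x ⊔ Subgroup.zpowers y : Subgroup H) := by
  refine (isPGroup_zpowers hx).to_sup_of_normal_right' (isPGroup_zpowers hy) ?_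
  refine le_trans ?_ (Subgroup.centralizer_le_normalizer _)
  rw [Subgroup.zpowers_le, Subgroup.mem_centralizer_iff]
  rintro _ ⟨n, rfl⟩
  exact (h.zpow_right n).symm.eq

/-! ### Zero-sum wreath products -/

section Shear

variable {X R : Type*}

/-- The permutation `(x, r) ↦ (σ x, r + v x)` of `X × R`: the element of the wreath product `R ≀ X`
with base component `v` and top component `σ`. -/
def shear [AddGroup R] (v : X → R) (σ : Perm X) : Perm (X × R) :=
  prodShear σ fun x => Equiv.addRight (v x)

section AddGroup

variable [AddGroup R]

theorem shear_apply (v : X → R) (σ : Perm X) (p : X × R) :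
    shear v σ p = (σ p.1, p.2 + v p.1) := rfl

theorem shear_mul_shear (v w : X → R) (σ τ : Perm X) :
    shear v σ * shear w τ = shear (w + v ∘ τ) (σ * τ) := by
  ext p <;> simp [shear_apply, add_assoc]

theorem shear_zero_one : shear (0 : X → R) 1 = 1 := by
  ext p <;> simp [shear_apply]

theorem shear_inv (v : X → R) (σ : Perm X) : (shear v σ)⁻¹ = shear (-(v ∘ ⇑σ⁻¹)) σ⁻¹ := by
  refine inv_eq_of_mul_eq_one_left ?_
  rw [shear_mul_shear, inv_mul_cancel, ← shear_zero_one]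
  congr 1
  ext x
  simp

theorem shear_inj {v w : X → R} {σ τ : Perm X} : shear v σ = shear w τ ↔ v = w ∧ σ = τ := by
  refine ⟨fun h => ?_, by rintro ⟨rfl, rfl⟩; rfl⟩
  have key (x : X) : σ x = τ x ∧ v x = w x := by
    simpa [shear_apply] using congrArg (fun g : Perm (X × R) => g (x, 0)) h
  exact ⟨funext fun x => (key x).2, Equiv.ext fun x => (key x).1⟩

end AddGroup

variable [AddCommGroup R]

theorem shear_conj (v w : X → R) (σ τ : Perm X) :
    shear v σ * shear w τ * (shear v σ)⁻¹ =
      shear ((w + v ∘ τ - v) ∘ ⇑σ⁻¹) (σ * τ * σ⁻¹) := by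
  rw [shear_inv, shear_mul_shear, shear_mul_shear]
  congr 1
  ext x
  simp only [Pi.add_apply, Pi.neg_apply, Pi.sub_apply, Function.comp_apply]
  abel

theorem shear_eq_commutator_iff {u v w : X → R} {ρ α β : Perm X} :
    shear u ρ = (shear v α)⁻¹ * (shear w β)⁻¹ * shear v α * shear w β ↔
      ρ = α⁻¹ * β⁻¹ * α * β ∧
        u = (w - w ∘ (α * ρ)) + (v ∘ β - (v ∘ β) ∘ (β⁻¹ * ρ)) := by
  rw [eq_inv_mul_inv_mul_mul_iff, eq_inv_mul_inv_mul_mul_iff, shear_mul_shear, shear_mul_shear,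
    shear_mul_shear, shear_inj, and_comm]
  refine and_congr_right fun _ => ?_
  have hcomp : (v ∘ β) ∘ (β⁻¹ * ρ) = v ∘ ρ := by ext x; simp
  have hsum : (v + w ∘ α) ∘ ρ = v ∘ ρ + w ∘ (α * ρ) := rfl
  rw [hcomp, hsum, ← eq_sub_iff_add_eq]
  refine Eq.congr_right ?_
  abel

theorem commute_shear_const_one (c : R) (v : X → R) (σ : Perm X) :
    Commute (shear (fun _ => c) 1) (shear v σ) := by
  rw [Commute, SemiconjBy, shear_mul_shear, shear_mul_shear, one_mul, mul_one, Perm.coe_one,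
    Function.comp_id, add_comm]
  rfl

theorem comp_eq_of_commute_shear {u v : X → R} {σ : Perm X}
    (h : Commute (shear u σ) (shear v 1)) : v ∘ σ = v := by
  rw [Commute, SemiconjBy, shear_mul_shear, shear_mul_shear, shear_inj] at h
  simpa [add_comm] using h.1.symm

section Linked

variable [DecidableEq X] {K : Subgroup (Perm (X × R))}

/-- `K` contains every base element supported on `{i, j}` with sum zero. -/
def Linked (K : Subgroup (Perm (X × R))) (i j : X) : Prop :=
  ∀ r : R, shear (Pi.single i r - Pi.single j r) 1 ∈ K

theorem Linked.trans {i j l : X} (hij : Linked K i j) (hjl : Linked K j l) : Linked K i l := by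
  intro r
  have := K.mul_mem (hjl r) (hij r)
  rwa [shear_mul_shear, mul_one, Perm.coe_one, Function.comp_id, sub_add_sub_cancel] at this

theorem Linked.symm {i j : X} (h : Linked K i j) : Linked K j i := by
  intro r
  have := K.inv_mem (h r)
  rwa [shear_inv, inv_one, Perm.coe_one, Function.comp_id, neg_sub] at this

theorem Linked.map {i j : X} {v : X → R} {σ : Perm X} (h : Linked K i j) (hσ : shear v σ ∈ K) :
    Linked K (σ i) (σ j) := by
  intro r
  have hsingle (x : X) : (Pi.single (σ x) r : X → R) = Pi.single x r ∘ ⇑σ⁻¹ := by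
    ext y
    simp [Pi.single_apply, symm_apply_eq]
  have := K.mul_mem (K.mul_mem hσ (h r)) (K.inv_mem hσ)
  rw [shear_conj, mul_one, mul_inv_cancel] at this
  convert this using 2
  rw [hsingle, hsingle]
  ext y
  simp

end Linked

variable [Fintype X]

/-- The zero-sum part `{v : X → R | ∑ v = 0} ⋊ M` of the wreath product of `R` by a permutation
group `M` on `X`. -/
def zeroSumShears (R : Type*) [AddCommGroup R] (M : Subgroup (Perm X)) :
    Subgroup (Perm (X × R)) where
  carrier := {g | ∃ (v : X → R) (σ : Perm X), ∑ x, v x = 0 ∧ σ ∈ M ∧ shear v σ = g}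
  one_mem' := ⟨0, 1, by simp, M.one_mem, shear_zero_one⟩
  mul_mem' := by
    rintro _ _ ⟨v, σ, hv, hσ, rfl⟩ ⟨w, τ, hw, hτ, rfl⟩
    refine ⟨_, _, ?_, M.mul_mem hσ hτ, (shear_mul_shear v w σ τ).symm⟩
    simp [Finset.sum_add_distrib, hw, Equiv.sum_comp τ v, hv]
  inv_mem' := by
    rintro _ ⟨v, σ, hv, hσ, rfl⟩
    refine ⟨_, _, ?_, M.inv_mem hσ, (shear_inv v σ).symm⟩
    simpa using (Equiv.sum_comp σ⁻¹ v).trans hv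

theorem shear_mem_zeroSumShears {M : Subgroup (Perm X)} {v : X → R} {σ : Perm X} :
    shear v σ ∈ zeroSumShears R M ↔ ∑ x, v x = 0 ∧ σ ∈ M := by
  refine ⟨?_, fun h => ⟨v, σ, h.1, h.2, rfl⟩⟩
  rintro ⟨w, τ, hw, hτ, h⟩
  obtain ⟨rfl, rfl⟩ := shear_inj.1 h
  exact ⟨hw, hτ⟩

theorem isCommutatorIn_of_conj {M : Subgroup (Perm X)} {u : X → R} {ρ g : Perm X}
    (hg : g ∈ M) (h : IsCommutatorIn (zeroSumShears R M) (shear (u ∘ ⇑g⁻¹) (g * ρ * g⁻¹))) :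
    IsCommutatorIn (zeroSumShears R M) (shear u ρ) := by
  have := h.conj (shear_mem_zeroSumShears (v := 0).2 ⟨by simp, M.inv_mem hg⟩)
  rw [shear_conj] at this
  convert this using 2
  · ext x
    simp
  · group

theorem eq_one_of_forall_commute_shear [Nontrivial R] (hX : 2 < Fintype.card X) {u : X → R}
    {σ : Perm X} (h : ∀ v : X → R, ∑ x, v x = 0 → Commute (shear u σ) (shear v 1)) : σ = 1 := by
  classical
  obtain ⟨r, hr⟩ := exists_ne (0 : R)
  have hpair {i j : X} (hij : i ≠ j) : σ i = i ∨ σ i = j := by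
    by_contra! hne
    have := congrFun (comp_eq_of_commute_shear (h (Pi.single i r - Pi.single j r) (by simp))) i
    simp [hne, hij, hr.symm] at this
  ext i
  by_contra hi
  obtain ⟨j, -, hj⟩ : ∃ j ∈ Finset.univ, j ∉ ({i, σ i} : Finset X) :=
    Finset.exists_mem_notMem_of_card_lt_card (Finset.card_le_two.trans_lt hX)
  simp only [Finset.mem_insert, Finset.mem_singleton, not_or] at hj
  exact (hpair (Ne.symm hj.1)).elim hi (Ne.symm hj.2)

theorem exists_eq_shear_const_one_of_forall_commute [Nontrivial R] (hX : 2 < Fintype.card X)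
    {M : Subgroup (Perm X)} [MulAction.IsPretransitive M X] {g : Perm (X × R)}
    (hg : g ∈ zeroSumShears R M) (h : ∀ g' ∈ zeroSumShears R M, Commute g g') :
    ∃ c, g = shear (fun _ => c) 1 := by
  obtain ⟨u, σ, -, -, rfl⟩ := hg
  obtain rfl : σ = 1 := eq_one_of_forall_commute_shear hX fun v hv =>
    h _ (shear_mem_zeroSumShears.2 ⟨hv, M.one_mem⟩)
  have hu (τ : M) : u ∘ τ.1 = u := by
    have hτ : shear (0 : X → R) τ.1 ∈ zeroSumShears R M :=
      shear_mem_zeroSumShears.2 ⟨by simp, τ.2⟩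
    exact comp_eq_of_commute_shear (h _ hτ).symm
  obtain ⟨x₀⟩ : Nonempty X := Fintype.card_pos_iff.1 (by lia)
  refine ⟨u x₀, shear_inj.2 ⟨funext fun x => ?_, rfl⟩⟩
  obtain ⟨τ, rfl⟩ := MulAction.exists_smul_eq M x₀ x
  exact congrFun (hu τ) x₀

section Generation

variable [DecidableEq X] {K : Subgroup (Perm (X × R))}

theorem shear_one_mem_of_linked {x₀ : X} (h : ∀ x, Linked K x x₀) {v : X → R}
    (hv : ∑ x, v x = 0) : shear v 1 ∈ K := by
  have hdecomp : v = ∑ x, (Pi.single x (v x) - Pi.single x₀ (v x)) := by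
    have hsum : ∑ x, (Pi.single x₀ (v x) : X → R) = Pi.single x₀ (∑ x, v x) :=
      (map_sum (AddMonoidHom.single (fun _ => R) x₀) v _).symm
    rw [Finset.sum_sub_distrib, Finset.univ_sum_single, hsum, hv, Pi.single_zero, sub_zero]
  rw [hdecomp]
  refine Finset.sum_induction _ (fun w => shear w 1 ∈ K) (fun w w' hw hw' => ?_) ?_
    fun x _ => h x (v x)
  · have := K.mul_mem hw' hw
    rwa [shear_mul_shear, mul_one] at this
  · exact shear_zero_one (X := X) (R := R) ▸ K.one_mem

theorem zeroSumShears_le {M : Subgroup (Perm X)} (hK : K ≤ zeroSumShears R M)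
    (hM : ∀ σ ∈ M, ∃ v, shear v σ ∈ K) {x₀ : X} (h : ∀ x, Linked K x x₀) :
    zeroSumShears R M ≤ K := by
  rintro _ ⟨v, σ, hv, hσ, rfl⟩
  obtain ⟨w, hw⟩ := hM σ hσ
  have hsum : ∑ x, (v - w) x = 0 := by
    simp [hv, (shear_mem_zeroSumShears.1 (hK hw)).1]
  have := K.mul_mem hw (shear_one_mem_of_linked h hsum)
  rwa [shear_mul_shear, mul_one, Perm.coe_one, Function.comp_id, sub_add_cancel] at this

end Generation

end Shear

/-! ### The commutator criterion -/

section ShiftStabilizer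

variable {X R : Type*} [AddCommGroup R]

/-- The permutations that change `S` only by an additive constant. -/
def shiftStabilizer (S : X → R) : Subgroup (Perm X) where
  carrier := {σ | ∃ c, ∀ x, S (σ x) = S x + c}
  one_mem' := ⟨0, by simp⟩
  mul_mem' := by
    rintro σ τ ⟨c, hc⟩ ⟨d, hd⟩
    exact ⟨d + c, fun x => by rw [Perm.mul_apply, hc, hd, add_assoc]⟩
  inv_mem' := by
    rintro σ ⟨c, hc⟩
    refine ⟨-c, fun x => ?_⟩
    rw [← sub_eq_add_neg, eq_sub_iff_add_eq, ← hc, Perm.inv_def, apply_symm_apply]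

theorem apply_eq_of_mem_shiftStabilizer {S : X → R} {σ : Perm X} (hσ : σ ∈ shiftStabilizer S)
    {x₀ : X} (hx₀ : σ x₀ = x₀) (x : X) : S (σ x) = S x := by
  obtain ⟨c, hc⟩ := hσ
  have hc0 : c = 0 := by simpa [hx₀] using hc x₀
  rw [hc, hc0, add_zero]

theorem pow_apply_eq_add_nsmul {S : X → R} {σ : Perm X} {c : R}
    (hc : ∀ x, S (σ x) = S x + c) (n : ℕ) (x : X) : S ((σ ^ n) x) = S x + n • c := by
  induction n with
  | zero => simp
  | succ n ih => rw [pow_succ', Perm.mul_apply, hc, ih, succ_nsmul, add_assoc]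

theorem single_mem_shiftStabilizer [DecidableEq X] {σ : Perm X}
    {x : X} (hx : σ x = x) (r : R) : σ ∈ shiftStabilizer (Pi.single x r : X → R) := by
  refine ⟨0, fun y => ?_⟩
  simp [Pi.single_apply, ← σ.apply_eq_iff_eq (x := y) (y := x), hx]

theorem comp_mem_shiftStabilizer {S : X → R} {σ τ : Perm X} (hσ : σ ∈ shiftStabilizer S) :
    τ⁻¹ * σ * τ ∈ shiftStabilizer (S ∘ τ) := by
  obtain ⟨c, hc⟩ := hσ
  exact ⟨c, fun x => by simp [hc]⟩

/-- The sum of the translates of `S` by the first `m` powers of `σ`. -/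
def orbitSum (σ : Perm X) (m : ℕ) (S : X → R) : X → R :=
  fun x => ∑ i ∈ Finset.range m, S ((σ ^ i) x)

-- The sum telescopes: replacing `x` by `σ x` exchanges the term `S x` for `S ((σ ^ m) x)`.
theorem mem_shiftStabilizer_orbitSum {S : X → R} {σ : Perm X} {m : ℕ}
    (h : σ ^ m ∈ shiftStabilizer S) : σ ∈ shiftStabilizer (orbitSum σ m S) := by
  obtain ⟨c, hc⟩ := h
  refine ⟨c, fun x => ?_⟩
  have hshift : orbitSum σ m S (σ x) = ∑ i ∈ Finset.range m, S ((σ ^ (i + 1)) x) := rfl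
  have htel := Finset.sum_range_succ (fun i => S ((σ ^ i) x)) m
  rw [Finset.sum_range_succ', hc, pow_zero, Perm.one_apply] at htel
  rw [hshift, orbitSum]
  exact add_right_cancel (htel.trans (by abel))

theorem mem_shiftStabilizer_orbitSum_of_commute {S : X → R} {σ τ : Perm X} (h : Commute σ τ)
    (hτ : τ ∈ shiftStabilizer S) (m : ℕ) : τ ∈ shiftStabilizer (orbitSum σ m S) := by
  obtain ⟨c, hc⟩ := hτ
  refine ⟨m • c, fun x => ?_⟩
  have hcomm (i : ℕ) : (σ ^ i) (τ x) = τ ((σ ^ i) x) := Perm.ext_iff.1 (h.pow_left i).eq x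
  simp [orbitSum, hcomm, hc, Finset.sum_add_distrib]

theorem sum_orbitSum [Fintype X] (σ : Perm X) (m : ℕ) (S : X → R) :
    ∑ x, orbitSum σ m S x = m • ∑ x, S x := by
  simp only [orbitSum]
  rw [Finset.sum_comm, Finset.sum_congr rfl fun i _ => Equiv.sum_comp (σ ^ i) S]
  simp

theorem exists_mem_shiftStabilizer_of_pow_mem [Fintype X] {σ τ : Perm X} {m : ℕ} {S : X → R}
    (h : Commute σ τ) (hσ : σ ^ m ∈ shiftStabilizer S) (hτ : τ ^ m ∈ shiftStabilizer S) :
    ∃ S' : X → R, σ ∈ shiftStabilizer S' ∧ τ ∈ shiftStabilizer S' ∧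
      ∑ x, S' x = m • m • ∑ x, S x := by
  refine ⟨orbitSum τ m (orbitSum σ m S), ?_, ?_, by rw [sum_orbitSum, sum_orbitSum]⟩
  · exact mem_shiftStabilizer_orbitSum_of_commute h.symm (mem_shiftStabilizer_orbitSum hσ) m
  · exact mem_shiftStabilizer_orbitSum
      (mem_shiftStabilizer_orbitSum_of_commute (h.pow_right m) hτ m)

end ShiftStabilizer

section CommutatorCriterion

variable {X k : Type*} [Fintype X] [Field k]

theorem dotProduct_sub_comp_eq_zero {S w : X → k} {σ : Perm X} (hσ : σ ∈ shiftStabilizer S)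
    (hw : ∑ x, w x = 0) : S ⬝ᵥ (w - w ∘ σ) = 0 := by
  obtain ⟨c, hc⟩ := hσ
  have hSσ : S ∘ σ = S + fun _ => c := funext hc
  have hshift : S ⬝ᵥ w = S ⬝ᵥ (w ∘ σ) + c * ∑ x, w x := by
    rw [← comp_equiv_dotProduct_comp_equiv S w σ, hSσ, add_dotProduct,
      ← Equiv.sum_comp σ w, Finset.mul_sum]
    rfl
  rw [dotProduct_sub, hshift, hw, mul_zero, add_zero, sub_self]

theorem mem_shiftStabilizer_of_dotProduct_eq_zero {S : X → k} {σ : Perm X}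
    (h : ∀ w : X → k, ∑ x, w x = 0 → S ⬝ᵥ (w - w ∘ σ) = 0) : σ ∈ shiftStabilizer S := by
  classical
  have hsymm (x y : X) : S (σ⁻¹ x) - S x = S (σ⁻¹ y) - S y := by
    have hcomp (z : X) : (Pi.single z 1 : X → k) ∘ σ = Pi.single (σ⁻¹ z) 1 := by
      ext i
      simp [Pi.single_apply, eq_symm_apply]
    have := h (Pi.single x 1 - Pi.single y 1) (by simp)
    rw [show (Pi.single x 1 - Pi.single y 1 : X → k) ∘ σ
      = Pi.single x 1 ∘ σ - Pi.single y 1 ∘ σ from rfl, hcomp, hcomp] at this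
    simp only [dotProduct_sub, dotProduct_single_one] at this
    linear_combination -this
  rcases isEmpty_or_nonempty X with hX | ⟨⟨y⟩⟩
  · exact ⟨0, hX.elim⟩
  · exact inv_mem_iff.1 ⟨S (σ⁻¹ y) - S y, fun x => by rw [← hsymm x y]; ring⟩

theorem dotProduct_eq_zero_of_affine {X k : Type*} [Fintype X] [CommRing k] {S T u : X → k}
    {c d : k} (hS : ∀ x, S x = c + d * T x) (hu : ∑ x, u x = 0) (hT : T ⬝ᵥ u = 0) :
    S ⬝ᵥ u = 0 := by
  obtain rfl : S = (fun _ => c) + d • T := funext hS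
  rw [add_dotProduct, smul_dotProduct, hT, smul_zero, add_zero, dotProduct, ← Finset.mul_sum, hu,
    mul_zero]

/-- The functions `w - w ∘ σ` with `w` of sum zero. -/
def displacements (k : Type*) [Field k] (σ : Perm X) : Submodule k (X → k) :=
  Submodule.map (LinearMap.id - LinearMap.funLeft k k σ)
    (LinearMap.ker (Fintype.linearCombination k (fun _ : X => (1 : k))))

theorem mem_displacements {σ : Perm X} {u : X → k} :
    u ∈ displacements k σ ↔ ∃ w : X → k, ∑ x, w x = 0 ∧ w - w ∘ σ = u := by
  simp [displacements, Fintype.linearCombination_apply, LinearMap.funLeft]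

-- Linear duality: a functional on `X → k` is the dot product with some `S`.
theorem mem_displacements_sup_displacements {σ τ : Perm X} {u : X → k}
    (h : ∀ S : X → k, σ ∈ shiftStabilizer S → τ ∈ shiftStabilizer S → S ⬝ᵥ u = 0) :
    u ∈ displacements k σ ⊔ displacements k τ := by
  classical
  by_contra hu
  obtain ⟨f, hfu, hf⟩ := Submodule.exists_le_ker_of_notMem hu
  obtain ⟨S, rfl⟩ := (dotProductEquiv k X).surjective f
  have hS {π : Perm X} (hπ : displacements k π ≤ displacements k σ ⊔ displacements k τ) :
      π ∈ shiftStabilizer S :=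
    mem_shiftStabilizer_of_dotProduct_eq_zero fun w hw =>
      hf (hπ (mem_displacements.2 ⟨w, hw, rfl⟩))
  exact hfu (h S (hS le_sup_left) (hS le_sup_right))

theorem isCommutatorIn_zeroSumShears_iff {M : Subgroup (Perm X)} {u : X → k} {ρ : Perm X} :
    IsCommutatorIn (zeroSumShears k M) (shear u ρ) ↔
      ∃ α ∈ M, ∃ β ∈ M, ρ = α⁻¹ * β⁻¹ * α * β ∧
        ∀ S : X → k, α ∈ shiftStabilizer S → β ∈ shiftStabilizer S → S ⬝ᵥ u = 0 := by
  constructor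
  · rintro ⟨_, ⟨v, α, hv, hα, rfl⟩, _, ⟨w, β, hw, hβ, rfl⟩, h⟩
    obtain ⟨hρ, rfl⟩ := shear_eq_commutator_iff.1 h
    refine ⟨α, hα, β, hβ, hρ, fun S hαS hβS => ?_⟩
    have hρS : ρ ∈ shiftStabilizer S := by
      rw [hρ]
      exact mul_mem (mul_mem (mul_mem (inv_mem hαS) (inv_mem hβS)) hαS) hβS
    have hvβ : ∑ x, (v ∘ β) x = 0 := (Equiv.sum_comp β v).trans hv
    rw [dotProduct_add, dotProduct_sub_comp_eq_zero (mul_mem hαS hρS) hw,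
      dotProduct_sub_comp_eq_zero (mul_mem (inv_mem hβS) hρS) hvβ, add_zero]
  · rintro ⟨α, hα, β, hβ, hρ, h⟩
    have hu : u ∈ displacements k (α * ρ) ⊔ displacements k (β⁻¹ * ρ) :=
      mem_displacements_sup_displacements fun S hσ hτ =>
        have hS := mem_and_mem_of_mul_commutator_mem hρ hσ hτ
        h S hS.1 hS.2
    obtain ⟨_, hu₁, _, hu₂, rfl⟩ := Submodule.mem_sup.1 hu
    obtain ⟨w, hw, rfl⟩ := mem_displacements.1 hu₁
    obtain ⟨v, hv, rfl⟩ := mem_displacements.1 hu₂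
    have hvβ : ∑ x, (v ∘ ⇑β⁻¹) x = 0 := (Equiv.sum_comp β⁻¹ v).trans hv
    refine ⟨_, shear_mem_zeroSumShears.2 ⟨hvβ, hα⟩, _, shear_mem_zeroSumShears.2 ⟨hw, hβ⟩,
      shear_eq_commutator_iff.2 ⟨hρ, ?_⟩⟩
    have hcancel : (v ∘ ⇑β⁻¹) ∘ β = v := by ext x; simp
    rw [hcancel]

end CommutatorCriterion

/-! ### The Mathieu group -/

section Mathieu

/-- The action of `g3` on the pairs `{2i + 1, 2i + 2}`, indexed by `i : Fin 22`. -/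
def σ₃ : Perm (Fin 22) where
  toFun := ![19, 18, 17, 16, 4, 5, 21, 20, 15, 14, 9, 8, 0, 1, 3, 2, 10, 11, 7, 6, 13, 12]
  invFun := ![12, 13, 15, 14, 4, 5, 19, 18, 11, 10, 16, 17, 21, 20, 9, 8, 3, 2, 1, 0, 7, 6]
  left_inv := by decide +kernel
  right_inv := by decide +kernel

/-- The action of `g4` on the pairs `{2i + 1, 2i + 2}`, indexed by `i : Fin 22`. -/
def σ₄ : Perm (Fin 22) where
  toFun := ![11, 10, 7, 6, 21, 20, 8, 9, 18, 19, 12, 13, 4, 5, 3, 2, 16, 17, 14, 15, 0, 1]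
  invFun := ![20, 21, 15, 14, 12, 13, 3, 2, 6, 7, 1, 0, 10, 11, 18, 19, 16, 17, 8, 9, 5, 4]
  left_inv := by decide +kernel
  right_inv := by decide +kernel

/-- The group generated by `σ₃` and `σ₄`, a copy of the Mathieu group `M₁₁` acting imprimitively on
22 points, with 11 blocks of size two. -/
def M11 : Subgroup (Perm (Fin 22)) := Subgroup.closure {σ₃, σ₄}

/-- `σ₃` as an element of `M11`. -/
def A : M11 := ⟨σ₃, Subgroup.subset_closure (by simp)⟩

/-- `σ₄` as an element of `M11`. -/
def B : M11 := ⟨σ₄, Subgroup.subset_closure (by simp)⟩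

theorem M11_induction {P : M11 → Prop} (hA : P A) (hB : P B) (one : P 1)
    (mul : ∀ σ τ, P σ → P τ → P (σ * τ)) (inv : ∀ σ, P σ → P σ⁻¹) (σ : M11) : P σ := by
  obtain ⟨σ, hσ⟩ := σ
  induction hσ using Subgroup.closure_induction with
  | mem τ hτ =>
    rcases hτ with rfl | rfl
    exacts [hA, hB]
  | one => exact one
  | mul σ τ hσ hτ ihσ ihτ => exact mul _ _ ihσ ihτ
  | inv σ hσ ih => exact inv _ ih

/-- An element of order 11. -/
def Z : M11 := A ^ 2 * B

instance : MulAction.IsPretransitive M11 (Fin 22) := by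
  have h : ∀ x : Fin 22, ∃ i : Fin 11, ∃ j : Fin 2, (Z ^ i.val * A ^ j.val) • (0 : Fin 22) = x := by
    decide +kernel
  refine (MulAction.isPretransitive_iff_base 0).2 fun x => ?_
  obtain ⟨i, j, hij⟩ := h x
  exact ⟨_, hij⟩

/-- The block `{2k, 2k + 1}` of a point, labelled by `k`. -/
def block (x : Fin 22) : Fin 11 := ⟨x / 2, by lia⟩

/-- The involution exchanging the two points of every block. -/
def flip : Perm (Fin 22) where
  toFun x := ⟨2 * (x / 2) + (1 - x % 2), by lia⟩
  invFun x := ⟨2 * (x / 2) + (1 - x % 2), by lia⟩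
  left_inv := by decide +kernel
  right_inv := by decide +kernel

/-- The even point `2k` of the block labelled `k`. -/
def evenPoint (k : Fin 11) : Fin 22 := ⟨2 * k, by lia⟩

theorem block_eq_block_iff : ∀ {x y : Fin 22}, block x = block y ↔ x = y ∨ x = flip y := by
  decide +kernel

theorem block_evenPoint : ∀ k, block (evenPoint k) = k := by decide +kernel

theorem smul_flip (σ : M11) (x : Fin 22) : σ • flip x = flip (σ • x) := by
  have hle : M11 ≤ Subgroup.centralizer {flip} := by
    rw [M11, Subgroup.closure_le]
    simp only [Set.insert_subset_iff, Set.singleton_subset_iff, SetLike.mem_coe,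
      Subgroup.mem_centralizer_singleton_iff]
    decide +kernel
  exact Perm.ext_iff.1 (Subgroup.mem_centralizer_singleton_iff.1 (hle σ.2)) x

theorem block_smul_eq_block_smul (σ : M11) {x y : Fin 22} (h : block x = block y) :
    block (σ • x) = block (σ • y) := by
  rw [block_eq_block_iff] at h ⊢
  rcases h with rfl | rfl
  · exact Or.inl rfl
  · exact Or.inr (smul_flip σ y)

instance : MulAction M11 (Fin 11) where
  smul σ k := block (σ • evenPoint k)
  one_smul _ := (congrArg block (one_smul M11 _)).trans (block_evenPoint _)
  mul_smul σ τ _ := (congrArg block (mul_smul σ τ _)).trans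
    (block_smul_eq_block_smul σ (block_evenPoint _).symm)

theorem block_smul (σ : M11) (x : Fin 22) : block (σ • x) = σ • block x :=
  block_smul_eq_block_smul σ (block_evenPoint _).symm

theorem eq_or_eq_flip_of_smul_block_eq {σ : M11} {x : Fin 22} (h : σ • block x = block x) :
    σ • x = x ∨ σ • x = flip x :=
  block_eq_block_iff.1 ((block_smul σ x).trans h)

section Transitivity

/-- An element fixing the blocks `0` and `2` but not the block `9`. -/
def C : M11 := B * A⁻¹ * B ^ 2

/-- Together with `Q₂`, it generates a quaternion group which fixes the blocks `2`, `0` and `9` and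
is regular on the remaining eight blocks. -/
def Q₁ : M11 := A⁻¹ * B * A * B

/-- The second generator of the quaternion group containing `Q₁`. -/
def Q₂ : M11 := A * B * A⁻¹ * B * A⁻¹ * B⁻¹

theorem exists_smul_eq_two (a : Fin 11) : ∃ σ : M11, σ • a = 2 := by
  have h : ∀ k : Fin 11, ∃ i : Fin 11, Z ^ i.val • k = 2 := by decide +kernel
  obtain ⟨i, hi⟩ := h a
  exact ⟨_, hi⟩

theorem exists_smul_pair_eq {a b : Fin 11} (hab : a ≠ b) :
    ∃ σ : M11, σ • a = 2 ∧ σ • b = 0 := by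
  have h : ∀ k : Fin 11, 2 ≠ k → ∃ i j l : Fin 5,
      (A ^ i.val * C ^ j.val * A ^ l.val) • (2 : Fin 11) = 2 ∧
        (A ^ i.val * C ^ j.val * A ^ l.val) • k = 0 := by decide +kernel
  obtain ⟨σ, ha⟩ := exists_smul_eq_two a
  obtain ⟨i, j, l, h2, hb⟩ := h (σ • b) (by rwa [← ha, ne_eq, smul_left_cancel_iff])
  exact ⟨A ^ i.val * C ^ j.val * A ^ l.val * σ, by rw [mul_smul, ha, h2], by rw [mul_smul, hb]⟩

theorem exists_smul_triple_eq {a b c : Fin 11} (hab : a ≠ b) (hac : a ≠ c) (hbc : b ≠ c) :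
    ∃ σ : M11, σ • a = 2 ∧ σ • b = 0 ∧ σ • c = 9 := by
  have h : ∀ k : Fin 11, 2 ≠ k → 0 ≠ k → ∃ (i : Fin 5) (j l : Fin 4),
      (C ^ i.val * Q₁ ^ j.val * Q₂ ^ l.val) • (2 : Fin 11) = 2 ∧
        (C ^ i.val * Q₁ ^ j.val * Q₂ ^ l.val) • (0 : Fin 11) = 0 ∧
          (C ^ i.val * Q₁ ^ j.val * Q₂ ^ l.val) • k = 9 := by decide +kernel
  obtain ⟨σ, ha, hb⟩ := exists_smul_pair_eq hab
  obtain ⟨i, j, l, h2, h0, hc⟩ := h (σ • c) (by rwa [← ha, ne_eq, smul_left_cancel_iff])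
    (by rwa [← hb, ne_eq, smul_left_cancel_iff])
  exact ⟨C ^ i.val * Q₁ ^ j.val * Q₂ ^ l.val * σ, by rw [mul_smul, ha, h2],
    by rw [mul_smul, hb, h0], by rw [mul_smul, hc]⟩

theorem exists_smul_triple_eq_triple {a b c a' b' c' : Fin 11} (hab : a ≠ b) (hac : a ≠ c)
    (hbc : b ≠ c) (hab' : a' ≠ b') (hac' : a' ≠ c') (hbc' : b' ≠ c') :
    ∃ σ : M11, σ • a = a' ∧ σ • b = b' ∧ σ • c = c' := by
  obtain ⟨σ, ha, hb, hc⟩ := exists_smul_triple_eq hab hac hbc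
  obtain ⟨τ, ha', hb', hc'⟩ := exists_smul_triple_eq hab' hac' hbc'
  refine ⟨τ⁻¹ * σ, ?_, ?_, ?_⟩ <;> rw [mul_smul, inv_smul_eq_iff]
  exacts [ha.trans ha'.symm, hb.trans hb'.symm, hc.trans hc'.symm]

theorem exists_smul_quadruple_eq {a b c d : Fin 11} (h : [a, b, c, d].Nodup) :
    ∃ σ : M11, σ • a = 2 ∧ σ • b = 0 ∧ σ • c = 9 ∧ σ • d = 6 := by
  have hQ : ∀ k : Fin 11, 2 ≠ k → 0 ≠ k → 9 ≠ k → ∃ i j : Fin 4,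
      (Q₁ ^ i.val * Q₂ ^ j.val) • (2 : Fin 11) = 2 ∧
        (Q₁ ^ i.val * Q₂ ^ j.val) • (0 : Fin 11) = 0 ∧
          (Q₁ ^ i.val * Q₂ ^ j.val) • (9 : Fin 11) = 9 ∧
            (Q₁ ^ i.val * Q₂ ^ j.val) • k = 6 := by decide +kernel
  simp only [List.nodup_cons, List.mem_cons, List.not_mem_nil, or_false, not_or] at h
  obtain ⟨⟨hab, hac, had⟩, ⟨hbc, hbd⟩, hcd, -⟩ := h
  obtain ⟨σ, ha, hb, hc⟩ := exists_smul_triple_eq hab hac hbc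
  obtain ⟨i, j, h2, h0, h9, hd⟩ := hQ (σ • d) (by rwa [← ha, ne_eq, smul_left_cancel_iff])
    (by rwa [← hb, ne_eq, smul_left_cancel_iff]) (by rwa [← hc, ne_eq, smul_left_cancel_iff])
  exact ⟨Q₁ ^ i.val * Q₂ ^ j.val * σ, by rw [mul_smul, ha, h2], by rw [mul_smul, hb, h0],
    by rw [mul_smul, hc, h9], by rw [mul_smul, hd]⟩

theorem exists_smul_quadruple_eq_quadruple {a b c d a' b' c' d' : Fin 11}
    (h : [a, b, c, d].Nodup) (h' : [a', b', c', d'].Nodup) :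
    ∃ σ : M11, σ • a = a' ∧ σ • b = b' ∧ σ • c = c' ∧ σ • d = d' := by
  obtain ⟨σ, ha, hb, hc, hd⟩ := exists_smul_quadruple_eq h
  obtain ⟨τ, ha', hb', hc', hd'⟩ := exists_smul_quadruple_eq h'
  refine ⟨τ⁻¹ * σ, ?_, ?_, ?_, ?_⟩ <;> rw [mul_smul, inv_smul_eq_iff]
  exacts [ha.trans ha'.symm, hb.trans hb'.symm, hc.trans hc'.symm, hd.trans hd'.symm]

end Transitivity

section Hexads

/-- The blocks of a 3-(12, 6, 2) design, indexed so that the two points of a block of `Fin 22` have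
complementary hexads. -/
def hexad : Fin 22 → Finset (Fin 12) :=
  ![{0, 1, 2, 3, 5, 8}, {4, 6, 7, 9, 10, 11}, {1, 3, 4, 6, 7, 8}, {0, 2, 5, 9, 10, 11},
    {0, 1, 2, 4, 7, 11}, {3, 5, 6, 8, 9, 10}, {2, 3, 5, 6, 7, 11}, {0, 1, 4, 8, 9, 10},
    {1, 3, 4, 5, 9, 11}, {0, 2, 6, 7, 8, 10}, {1, 2, 6, 8, 9, 11}, {0, 3, 4, 5, 7, 10},
    {0, 1, 3, 6, 10, 11}, {2, 4, 5, 7, 8, 9}, {1, 5, 7, 8, 10, 11}, {0, 2, 3, 4, 6, 9},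
    {0, 1, 5, 6, 7, 9}, {2, 3, 4, 8, 10, 11}, {0, 4, 5, 6, 8, 11}, {1, 2, 3, 7, 9, 10},
    {1, 2, 4, 5, 6, 10}, {0, 3, 7, 8, 9, 11}]

/-- The permutation of the twelve points of the design induced by `σ₃`. -/
def π₃ : Perm (Fin 12) where
  toFun := ![1, 2, 7, 3, 4, 9, 8, 11, 10, 6, 5, 0]
  invFun := ![11, 0, 1, 3, 4, 10, 9, 2, 6, 5, 8, 7]
  left_inv := by decide +kernel
  right_inv := by decide +kernel

/-- The permutation of the twelve points of the design induced by `σ₄`. -/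
def π₄ : Perm (Fin 12) where
  toFun := ![7, 0, 3, 4, 8, 5, 1, 9, 10, 6, 2, 11]
  invFun := ![1, 6, 10, 2, 3, 5, 9, 0, 4, 7, 8, 11]
  left_inv := by decide +kernel
  right_inv := by decide +kernel

theorem exists_hexad_smul_eq (σ : M11) :
    ∃ π : Perm (Fin 12), ∀ x, hexad (σ • x) = π • hexad x := by
  induction σ using M11_induction with
  | hA => exact ⟨π₃, by decide +kernel⟩
  | hB => exact ⟨π₄, by decide +kernel⟩
  | one => exact ⟨1, by simp⟩
  | mul σ τ hσ hτ =>
    obtain ⟨⟨π, hπ⟩, ⟨ϖ, hϖ⟩⟩ := hσ, hτ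
    exact ⟨π * ϖ, fun x => by rw [mul_smul, hπ, hϖ, mul_smul]⟩
  | inv σ hσ =>
    obtain ⟨π, hπ⟩ := hσ
    exact ⟨π⁻¹, fun x => by rw [eq_inv_smul_iff, ← hπ, smul_inv_smul]⟩

/-- The number of points of the design common to three hexads. -/
def tripleCard (x y w : Fin 22) : ℕ := (hexad x ∩ hexad y ∩ hexad w).card

theorem tripleCard_smul (σ : M11) (x y w : Fin 22) :
    tripleCard (σ • x) (σ • y) (σ • w) = tripleCard x y w := by
  obtain ⟨π, hπ⟩ := exists_hexad_smul_eq σ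
  rw [tripleCard, hπ, hπ, hπ, ← Finset.smul_finset_inter, ← Finset.smul_finset_inter,
    Finset.card_smul_finset, tripleCard]

theorem smul_base_eq {σ : M11} (h2 : σ • (2 : Fin 11) = 2) (h0 : σ • (0 : Fin 11) = 0)
    (h9 : σ • (9 : Fin 11) = 9) (h6 : σ • (6 : Fin 11) = 6) :
    σ • (4 : Fin 22) = 4 ∧ σ • (0 : Fin 22) = 0 ∧ σ • (18 : Fin 22) = 18 ∧
      σ • (12 : Fin 22) = 12 := by
  have hsign : ∀ a ∈ [4, flip 4], ∀ b ∈ [0, flip 0], ∀ c ∈ [18, flip 18], ∀ d ∈ [12, flip 12],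
      tripleCard a b c = tripleCard 4 0 18 ∧ tripleCard a b d = tripleCard 4 0 12 ∧
        tripleCard a c d = tripleCard 4 18 12 ∧ tripleCard b c d = tripleCard 0 18 12 →
          a = 4 ∧ b = 0 ∧ c = 18 ∧ d = 12 := by decide +kernel
  have hmem {x : Fin 22} (h : σ • block x = block x) : σ • x ∈ [x, flip x] := by
    simpa using eq_or_eq_flip_of_smul_block_eq h
  exact hsign _ (hmem h2) _ (hmem h0) _ (hmem h9) _ (hmem h6)
    ⟨tripleCard_smul σ _ _ _, tripleCard_smul σ _ _ _, tripleCard_smul σ _ _ _,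
      tripleCard_smul σ _ _ _⟩

theorem eq_one_of_smul_base_eq {σ : M11} (h2 : σ • (2 : Fin 11) = 2) (h0 : σ • (0 : Fin 11) = 0)
    (h9 : σ • (9 : Fin 11) = 9) (h6 : σ • (6 : Fin 11) = 6) : σ = 1 := by
  have hsep : ∀ x y : Fin 22, tripleCard 4 0 x = tripleCard 4 0 y →
      tripleCard 4 18 x = tripleCard 4 18 y → tripleCard 4 12 x = tripleCard 4 12 y →
        tripleCard 0 18 x = tripleCard 0 18 y → tripleCard 0 12 x = tripleCard 0 12 y →
          tripleCard 18 12 x = tripleCard 18 12 y → x = y := by decide +kernel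
  obtain ⟨h4, h0, h18, h12⟩ := smul_base_eq h2 h0 h9 h6
  refine Subtype.ext (Equiv.ext fun x => ?_)
  have hinv {p q : Fin 22} (hp : σ • p = p) (hq : σ • q = q) :
      tripleCard p q (σ • x) = tripleCard p q x := by
    conv_lhs => rw [← hp, ← hq]
    exact tripleCard_smul σ p q x
  exact hsep (σ • x) x (hinv h4 h0) (hinv h4 h18) (hinv h4 h12) (hinv h0 h18) (hinv h0 h12)
    (hinv h18 h12)

theorem eq_of_smul_quadruple_eq {σ τ : M11} {a b c d : Fin 11} (h : [a, b, c, d].Nodup)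
    (ha : σ • a = τ • a) (hb : σ • b = τ • b) (hc : σ • c = τ • c) (hd : σ • d = τ • d) :
    σ = τ := by
  obtain ⟨g, ga, gb, gc, gd⟩ := exists_smul_quadruple_eq h
  have hfix {x y : Fin 11} (hx : σ • x = τ • x) (hg : g • x = y) :
      (g * (τ⁻¹ * σ) * g⁻¹) • y = y := by
    rw [← hg, mul_smul, inv_smul_smul, mul_smul, mul_smul, hx, inv_smul_smul]
  have hone := eq_one_of_smul_base_eq (hfix ha ga) (hfix hb gb) (hfix hc gc) (hfix hd gd)
  rw [conj_eq_one_iff, inv_mul_eq_one] at hone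
  exact hone.symm

end Hexads

end Mathieu

/-! ### Commutators -/

section Commutators

/-- The image of `GMacHale` under the identification of the 44 points with `Fin 22 × ZMod 2`. -/
abbrev evenSignedM11 : Subgroup (Perm (Fin 22 × ZMod 2)) := zeroSumShears (ZMod 2) M11

variable {u : Fin 22 → ZMod 2} {ρ α β : M11}

theorem isCommutatorIn_evenSignedM11_of_pair (hρ : ρ = α⁻¹ * β⁻¹ * α * β)
    (h : ∀ S : Fin 22 → ZMod 2, (α : Perm (Fin 22)) ∈ shiftStabilizer S →
      (β : Perm (Fin 22)) ∈ shiftStabilizer S → S ⬝ᵥ u = 0) :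
    IsCommutatorIn evenSignedM11 (shear u ρ) :=
  isCommutatorIn_zeroSumShears_iff.2 ⟨α, α.2, β, β.2, congrArg Subtype.val hρ, h⟩

theorem isCommutatorIn_evenSignedM11_of_conj (g : M11)
    (h : IsCommutatorIn evenSignedM11 (shear (fun x => u (g⁻¹ • x)) ↑(g * ρ * g⁻¹))) :
    IsCommutatorIn evenSignedM11 (shear u ρ) :=
  isCommutatorIn_of_conj g.2 h

/-- The indicator of the hexads through the point `j` of the design. -/
def column (j : Fin 12) (x : Fin 22) : ZMod 2 := if j ∈ hexad x then 1 else 0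

-- `Z` has odd order, so it cannot shift `S`, and its two orbits are the support of `column 0` and
-- the complement.
theorem eq_affine_column_zero {S : Fin 22 → ZMod 2}
    (hZ : (Z : Perm (Fin 22)) ∈ shiftStabilizer S) (x : Fin 22) :
    S x = S 1 + (S 0 - S 1) * column 0 x := by
  have horbit : ∀ x : Fin 22, ∃ i : Fin 11, Z ^ i.val • (if 0 ∈ hexad x then 0 else 1) = x := by
    decide +kernel
  have hZS (x : Fin 22) : S (Z • x) = S x := by
    obtain ⟨c, hc⟩ := hZ
    have hpow : (Z : Perm (Fin 22)) ^ 11 = 1 := by decide +kernel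
    have h11 : (11 : ℕ) • c = 0 := by
      simpa [hpow] using pow_apply_eq_add_nsmul hc 11 0
    have hodd : ∀ c : ZMod 2, (11 : ℕ) • c = 0 → c = 0 := by decide
    exact (hc x).trans (by rw [hodd c h11, add_zero])
  obtain ⟨i, hi⟩ := horbit x
  rw [← hi, apply_pow_smul_eq hZS, hi, column]
  split_ifs <;> ring

theorem isCommutatorIn_of_column_dotProduct_eq_zero (hρ : ρ = Z⁻¹ * β⁻¹ * Z * β)
    (hu : ∑ x, u x = 0) (hcol : column 0 ⬝ᵥ u = 0) :
    IsCommutatorIn evenSignedM11 (shear u ρ) :=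
  isCommutatorIn_evenSignedM11_of_pair hρ fun _ hZ _ =>
    dotProduct_eq_zero_of_affine (eq_affine_column_zero hZ) hu hcol

/-- `σ` maps some points of the support of `column 0` inside and some outside of it. -/
abbrev SplitsColumn (σ : M11) : Prop :=
  (∃ x, column 0 x = 1 ∧ column 0 (σ • x) = 1) ∧ ∃ x, column 0 x = 1 ∧ column 0 (σ • x) = 0

theorem isCommutatorIn_of_splitsColumn (hρ : ρ = Z⁻¹ * β⁻¹ * Z * β) (hu : ∑ x, u x = 0)
    (hβ : SplitsColumn β) : IsCommutatorIn evenSignedM11 (shear u ρ) := by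
  refine isCommutatorIn_evenSignedM11_of_pair hρ fun S hZ ⟨c, hc⟩ => ?_
  have hS := eq_affine_column_zero hZ
  obtain ⟨⟨x, hx, hβx⟩, y, hy, hβy⟩ := hβ
  have hin : S (β • x) = S x + c := hc x
  have hout : S (β • y) = S y + c := hc y
  rw [hS, hS x, hβx, hx, left_eq_add] at hin
  rw [hS, hS y, hβy, hy, hin, mul_zero, mul_one, add_zero, add_zero, left_eq_add] at hout
  refine dotProduct_eq_zero_of_affine (c := S 1) (d := 0) (T := 0) (fun x => ?_) hu
    (zero_dotProduct u)
  rw [hS, hout, zero_mul, zero_mul]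

section NonInvolution

/-- Pairs `(w, q)` such that the elements `w Z⁻¹ q⁻¹ Z q w⁻¹` realise all possible actions on the
blocks `2`, `0`, `9`, `6` of an element of `M11` that maps `2` to `0`, `0` to `9`, and `9` to `6`
or `2`. -/
def commutatorTable : List (M11 × M11) :=
  [(B⁻¹ * A⁻¹ * B * A⁻¹ * B⁻¹, A), (A ^ 2 * B ^ 2, B ^ 2), (B * A * B⁻¹, A * B⁻¹ ^ 2),
   (B⁻¹ * A⁻¹, A⁻¹ ^ 2 * B⁻¹ ^ 2), (B * A⁻¹ ^ 2 * B * A⁻¹ ^ 2, B), (B * A⁻¹ ^ 2 * B, B⁻¹),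
   (B ^ 2 * A⁻¹ * B⁻¹ * A * B⁻¹, B * A⁻¹), (B * A ^ 2, A⁻¹ ^ 2 * B * A),
   (A⁻¹ * B ^ 2 * A⁻¹ * B⁻¹, A⁻¹ * B⁻¹ * A * B⁻¹), (A⁻¹ * B⁻¹ * A * B⁻¹, B⁻¹ ^ 2 * A),
   (B⁻¹ ^ 2 * A⁻¹ * B⁻¹ * A⁻¹, A⁻¹ * B⁻¹ * A * B⁻¹), (A⁻¹ * B⁻¹ * A, B * A⁻¹ * B),
   (B * A ^ 2 * B * A⁻¹ ^ 2, A⁻¹ * B⁻¹ * A * B⁻¹), (A⁻¹ * B * A⁻¹ * B⁻¹ * A, B⁻¹ ^ 2 * A⁻¹),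
   (A ^ 2 * B ^ 2, A⁻¹ ^ 2 * B⁻¹), (A ^ 2, A⁻¹ * B⁻¹ * A * B⁻¹)]

theorem exists_mem_commutatorTable {τ : M11} (h2 : τ • (2 : Fin 11) = 0)
    (h0 : τ • (0 : Fin 11) = 9) (h9 : τ • (9 : Fin 11) = 6 ∨ τ • (9 : Fin 11) = 2) :
    ∃ p ∈ commutatorTable, τ = p.1 * (Z⁻¹ * p.2⁻¹ * Z * p.2) * p.1⁻¹ := by
  have hrow : ∀ c ∈ [6, 2], ∀ d : Fin 11, d ∉ [0, 9, c] → ∃ p ∈ commutatorTable,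
      (p.1 * (Z⁻¹ * p.2⁻¹ * Z * p.2) * p.1⁻¹) • (2 : Fin 11) = 0 ∧
      (p.1 * (Z⁻¹ * p.2⁻¹ * Z * p.2) * p.1⁻¹) • (0 : Fin 11) = 9 ∧
      (p.1 * (Z⁻¹ * p.2⁻¹ * Z * p.2) * p.1⁻¹) • (9 : Fin 11) = c ∧
      (p.1 * (Z⁻¹ * p.2⁻¹ * Z * p.2) * p.1⁻¹) • (6 : Fin 11) = d := by decide +kernel
  have h6 : τ • (6 : Fin 11) ∉ [0, 9, τ • (9 : Fin 11)] := by
    have hne {x : Fin 11} (hx : 6 ≠ x) : τ • (6 : Fin 11) ≠ τ • x :=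
      (smul_left_cancel_iff τ).not.2 hx
    simp only [List.mem_cons, List.not_mem_nil, or_false, not_or]
    exact ⟨h2 ▸ hne (by decide), h0 ▸ hne (by decide), hne (by decide)⟩
  obtain ⟨p, hp, hp2, hp0, hp9, hp6⟩ := hrow _ (by simpa using h9) _ h6
  exact ⟨p, hp, eq_of_smul_quadruple_eq (a := 2) (b := 0) (c := 9) (d := 6) (by decide)
    (h2.trans hp2.symm) (h0.trans hp0.symm) hp9.symm hp6.symm⟩

theorem splitsColumn_of_mem_commutatorTable : ∀ p ∈ commutatorTable, SplitsColumn p.2 := by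
  decide +kernel

theorem exists_conj_of_smul_smul_ne {σ : M11} {a : Fin 11} (ha : σ • σ • a ≠ a) :
    ∃ g : M11, (g * σ * g⁻¹) • (2 : Fin 11) = 0 ∧ (g * σ * g⁻¹) • (0 : Fin 11) = 9 ∧
      ((g * σ * g⁻¹) • (9 : Fin 11) = 6 ∨ (g * σ * g⁻¹) • (9 : Fin 11) = 2) := by
  have hab : a ≠ σ • a := fun h => ha (by rw [← h, ← h])
  have hbc : σ • a ≠ σ • σ • a := fun h => hab (smul_left_cancel σ h)
  by_cases hd : σ • σ • σ • a = a
  · obtain ⟨g, ga, gb, gc⟩ := exists_smul_triple_eq hab (Ne.symm ha) hbc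
    exact ⟨g, conj_smul_eq ga gb rfl, conj_smul_eq gb gc rfl, Or.inr (conj_smul_eq gc ga hd)⟩
  · have hnodup : [a, σ • a, σ • σ • a, σ • σ • σ • a].Nodup := by
      simp [hab, Ne.symm ha, Ne.symm hd]
    obtain ⟨g, ga, gb, gc, gd⟩ := exists_smul_quadruple_eq hnodup
    exact ⟨g, conj_smul_eq ga gb rfl, conj_smul_eq gb gc rfl, Or.inl (conj_smul_eq gc gd rfl)⟩

theorem isCommutatorIn_of_smul_smul_ne (hu : ∑ x, u x = 0) {a : Fin 11} (ha : ρ • ρ • a ≠ a) :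
    IsCommutatorIn evenSignedM11 (shear u ρ) := by
  obtain ⟨g, h2, h0, h9⟩ := exists_conj_of_smul_smul_ne ha
  obtain ⟨⟨w, q⟩, hp, hτ⟩ := exists_mem_commutatorTable h2 h0 h9
  refine isCommutatorIn_evenSignedM11_of_conj (w⁻¹ * g) (isCommutatorIn_of_splitsColumn (β := q)
    ?_ ?_ (splitsColumn_of_mem_commutatorTable _ hp))
  · calc w⁻¹ * g * ρ * (w⁻¹ * g)⁻¹ = w⁻¹ * (g * ρ * g⁻¹) * w := by group
      _ = Z⁻¹ * q⁻¹ * Z * q := by rw [hτ]; group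
  · exact (sum_smul_eq _ u).trans hu

end NonInvolution

section Involution

/-- The second commutator factor of `T`. -/
def Q₀ : M11 := A * B * A * B

/-- An involution, exchanging the blocks `0` and `4` as well as the blocks `1` and `10`. -/
def T : M11 := Z⁻¹ * Q₀⁻¹ * Z * Q₀

/-- An element of the centralizer of `T`, permuting cyclically the four points of the design that
are fixed by `T`. -/
def D : M11 := A⁻¹ * B ^ 2 * A⁻¹ * B

/-- An element of the centralizer of `T`, permuting cyclically the three blocks fixed by `T`. -/
def E : M11 := A⁻¹ * B⁻¹ * A * B⁻¹ ^ 2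

/-- Together with `B⁻¹`, it has commutator `T` and generates a group with orbits the block `8` and
its complement. -/
def Q₈ : M11 := B⁻¹ * A⁻¹ ^ 2 * B ^ 2 * A⁻¹

/-- The indicator of the block labelled `k`. -/
def blockIndicator (k : Fin 11) (x : Fin 22) : ZMod 2 := if block x = k then 1 else 0

theorem commute_D_T : Commute D T := by
  unfold Commute SemiconjBy
  decide +kernel

theorem commute_E_T : Commute E T := by
  unfold Commute SemiconjBy
  decide +kernel

theorem eq_affine_blockIndicator_eight {S : Fin 22 → ZMod 2}
    (hB : ((B⁻¹ : M11) : Perm (Fin 22)) ∈ shiftStabilizer S)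
    (hQ : (Q₈ : Perm (Fin 22)) ∈ shiftStabilizer S) (x : Fin 22) :
    S x = S 0 + (S 16 - S 0) * blockIndicator 8 x := by
  have horbit : ∀ x : Fin 22, ∃ i j l : Fin 10,
      ((B⁻¹) ^ i.val * Q₈ ^ j.val * (B⁻¹) ^ l.val) • (if block x = 8 then 16 else 0) = x := by
    decide +kernel
  have hBS (x : Fin 22) : S (B⁻¹ • x) = S x :=
    apply_eq_of_mem_shiftStabilizer hB (x₀ := 16) (by decide +kernel) x
  have hQS (x : Fin 22) : S (Q₈ • x) = S x :=
    apply_eq_of_mem_shiftStabilizer hQ (x₀ := 6) (by decide +kernel) x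
  obtain ⟨i, j, l, hx⟩ := horbit x
  rw [← hx, mul_smul, mul_smul, apply_pow_smul_eq hBS, apply_pow_smul_eq hQS,
    apply_pow_smul_eq hBS, ← mul_smul, ← mul_smul, hx, blockIndicator]
  split_ifs <;> ring

theorem isCommutatorIn_of_blockIndicator_dotProduct_eq_zero (hu : ∑ x, u x = 0)
    (hblock : blockIndicator 8 ⬝ᵥ u = 0) : IsCommutatorIn evenSignedM11 (shear u T) :=
  isCommutatorIn_evenSignedM11_of_pair (α := B⁻¹) (β := Q₈) (by decide +kernel) fun _ hB hQ =>
    dotProduct_eq_zero_of_affine (eq_affine_blockIndicator_eight hB hQ) hu hblock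

-- The four columns and the three blocks fixed by `T` add up to a constant function.
theorem exists_column_or_blockIndicator_dotProduct_eq_zero (hu : ∑ x, u x = 0) :
    (∃ i : Fin 4, (fun x => column 0 (D ^ i.val • x)) ⬝ᵥ u = 0) ∨
      ∃ i : Fin 3, (fun x => blockIndicator 8 (E ^ i.val • x)) ⬝ᵥ u = 0 := by
  by_contra! hne
  have hone : ∀ a : ZMod 2, a ≠ 0 → a = 1 := by decide
  have hconst : ∀ x, ∑ i : Fin 4, column 0 (D ^ i.val • x) +
      ∑ i : Fin 3, blockIndicator 8 (E ^ i.val • x) = 1 := by decide +kernel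
  have hsum : ∑ i : Fin 4, (fun x => column 0 (D ^ i.val • x)) ⬝ᵥ u +
      ∑ i : Fin 3, (fun x => blockIndicator 8 (E ^ i.val • x)) ⬝ᵥ u = ∑ x, u x := by
    rw [← sum_dotProduct, ← sum_dotProduct, ← add_dotProduct]
    refine Finset.sum_congr rfl fun x _ => ?_
    rw [Pi.add_apply, Finset.sum_apply, Finset.sum_apply, hconst, one_mul]
  rw [hu, Finset.sum_congr rfl fun i _ => hone _ (hne.1 i),
    Finset.sum_congr rfl fun i _ => hone _ (hne.2 i)] at hsum
  revert hsum
  decide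

theorem isCommutatorIn_shear_T (hu : ∑ x, u x = 0) : IsCommutatorIn evenSignedM11 (shear u T) := by
  have hconj {g : M11} (hg : Commute g T)
      (h : IsCommutatorIn evenSignedM11 (shear (fun x => u (g⁻¹ • x)) T)) :
      IsCommutatorIn evenSignedM11 (shear u T) :=
    isCommutatorIn_evenSignedM11_of_conj g (by rwa [hg.eq, mul_inv_cancel_right])
  have hsum (g : M11) : ∑ x, u (g⁻¹ • x) = 0 := (sum_smul_eq _ u).trans hu
  rcases exists_column_or_blockIndicator_dotProduct_eq_zero hu with ⟨i, hi⟩ | ⟨i, hi⟩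
  · refine hconj (commute_D_T.pow_left i) (isCommutatorIn_of_column_dotProduct_eq_zero rfl
      (hsum _) ?_)
    rwa [dotProduct_comp_inv_smul]
  · refine hconj (commute_E_T.pow_left i)
      (isCommutatorIn_of_blockIndicator_dotProduct_eq_zero (hsum _) ?_)
    rwa [dotProduct_comp_inv_smul]

theorem exists_conj_eq_T (hρ : ρ ≠ 1) (hinv : ∀ a : Fin 11, ρ • ρ • a = a) :
    ∃ g : M11, g * ρ * g⁻¹ = T := by
  have hmoved {a b c d : Fin 11} (h : [a, b, c, d].Nodup) : ∃ x ∈ [a, b, c, d], ρ • x ≠ x := by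
    by_contra! hfix
    have hone {x : Fin 11} (hx : x ∈ [a, b, c, d]) : ρ • x = (1 : M11) • x := by
      rw [hfix x hx, one_smul]
    exact hρ (eq_of_smul_quadruple_eq h (hone (by simp)) (hone (by simp)) (hone (by simp))
      (hone (by simp)))
  have hothers : ∀ a b : Fin 11, ∃ i : Fin 11, [i, i + 1, i + 2, i + 3].Nodup ∧
      ∀ x ∈ [i, i + 1, i + 2, i + 3], x ≠ a ∧ x ≠ b := by decide +kernel
  obtain ⟨a, -, ha⟩ := hmoved (a := 0) (b := 1) (c := 2) (d := 3) (by decide)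
  obtain ⟨i, hi, hne⟩ := hothers a (ρ • a)
  obtain ⟨c, hmem, hc⟩ := hmoved hi
  obtain ⟨hca, hcb⟩ := hne c hmem
  have hda : a ≠ ρ • c := fun h => hcb (by rw [h, hinv])
  have hnodup : [a, ρ • a, c, ρ • c].Nodup := by
    simp [ha.symm, hca.symm, hda, hcb.symm, hc.symm]
  obtain ⟨g, g0, g4, g1, g10⟩ := exists_smul_quadruple_eq_quadruple hnodup
    (show [0, 4, 1, 10].Nodup by decide)
  refine ⟨g, eq_of_smul_quadruple_eq (a := 0) (b := 4) (c := 1) (d := 10) (by decide) ?_ ?_ ?_ ?_⟩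
  · exact (conj_smul_eq g0 g4 rfl).trans (by decide +kernel)
  · exact (conj_smul_eq g4 g0 (hinv a)).trans (by decide +kernel)
  · exact (conj_smul_eq g1 g10 rfl).trans (by decide +kernel)
  · exact (conj_smul_eq g10 g1 (hinv c)).trans (by decide +kernel)

end Involution

theorem isCommutatorIn_shear_of_perm_ne_one (hρ : ρ ≠ 1) (hu : ∑ x, u x = 0) :
    IsCommutatorIn evenSignedM11 (shear u ρ) := by
  by_cases hinv : ∀ a : Fin 11, ρ • ρ • a = a
  · obtain ⟨g, hg⟩ := exists_conj_eq_T hρ hinv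
    refine isCommutatorIn_evenSignedM11_of_conj g ?_
    rw [hg]
    exact isCommutatorIn_shear_T ((sum_smul_eq _ u).trans hu)
  · push Not at hinv
    obtain ⟨a, ha⟩ := hinv
    exact isCommutatorIn_of_smul_smul_ne hu ha

section BaseGroup

theorem isCommutatorIn_shear_one_of_column {j : Fin 12} (hu : ∑ x, u x = 0)
    (hj : column j ⬝ᵥ u = 0) : IsCommutatorIn evenSignedM11 (shear u 1) := by
  have htrans : ∀ j : Fin 12, ∃ i l m : Fin 5,
      ∀ x, column 0 ((A ^ i.val * B ^ l.val * A ^ m.val) • x) = column j x := by decide +kernel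
  obtain ⟨i, l, m, hcol⟩ := htrans j
  refine isCommutatorIn_evenSignedM11_of_conj (ρ := 1) (A ^ i.val * B ^ l.val * A ^ m.val)
    (isCommutatorIn_of_column_dotProduct_eq_zero (β := 1) (by group)
      ((sum_smul_eq _ u).trans hu) ?_)
  rwa [dotProduct_comp_inv_smul, funext hcol]

theorem apply_flip_eq_of_column_dotProduct_eq_one (hu : ∑ x, u x = 0)
    (hcol : ∀ j, column j ⬝ᵥ u = 1) (x : Fin 22) : u (flip x) = u x := by
  have hcolumns : ∀ x y, ∑ j ∈ hexad x, column j y =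
      1 + (Pi.single x 1 + Pi.single (flip x) 1 : Fin 22 → ZMod 2) y := by decide +kernel
  have hcard : ∀ x, ∑ _j ∈ hexad x, (1 : ZMod 2) = 0 := by decide +kernel
  have hsum : (∑ j ∈ hexad x, column j) ⬝ᵥ u = u x + u (flip x) := by
    rw [show ∑ j ∈ hexad x, column j = 1 + (Pi.single x 1 + Pi.single (flip x) 1) from
      funext fun y => by rw [Finset.sum_apply, hcolumns]; rfl]
    rw [add_dotProduct, one_dotProduct, hu, add_dotProduct, single_one_dotProduct,
      single_one_dotProduct, zero_add]
  rw [sum_dotProduct, Finset.sum_congr rfl fun j _ => hcol j, hcard] at hsum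
  exact (CharTwo.add_eq_zero.1 hsum.symm).symm

theorem sum_eq_sum_blocks {k : Type*} [AddCommMonoid k] (f : Fin 22 → k) :
    ∑ x, f x = ∑ b, (f (evenPoint b) + f (flip (evenPoint b))) := by
  have heven : ∀ b : Fin 11, finProdFinEquiv (b, (0 : Fin 2)) = evenPoint b := by decide +kernel
  have hodd : ∀ b : Fin 11, finProdFinEquiv (b, (1 : Fin 2)) = flip (evenPoint b) := by
    decide +kernel
  rw [← Equiv.sum_comp (finProdFinEquiv (m := 11) (n := 2)) f, Fintype.sum_prod_type]
  simp only [Fin.sum_univ_two, heven, hodd]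

/-- An element of order 8, which fixes the block `1`, exchanges the blocks `3` and `4` and permutes
the other eight blocks cyclically. -/
def R : M11 := B * A * B ^ 2

theorem add_flip_eq_of_R_mem {S : Fin 22 → ZMod 2}
    (hR : (R : Perm (Fin 22)) ∈ shiftStabilizer S) {b : Fin 11} (h1 : b ≠ 1) :
    S (evenPoint b) + S (flip (evenPoint b)) =
      if b = 3 ∨ b = 4 then 0 else S 0 + S (flip 0) := by
  have hflip : ∀ b : Fin 11, b = 3 ∨ b = 4 → flip (evenPoint b) = R ^ 2 • evenPoint b := by
    decide +kernel
  have hcycle : ∀ b : Fin 11, b ≠ 1 → ¬(b = 3 ∨ b = 4) → ∃ i : Fin 8,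
      block (R ^ i.val • 0) = b := by decide +kernel
  obtain ⟨c, hc⟩ := hR
  have hpow (n : ℕ) (x : Fin 22) : S (R ^ n • x) = S x + n • c := pow_apply_eq_add_nsmul hc n x
  split_ifs with h34
  · rw [hflip b h34, hpow, CharTwo.two_nsmul, add_zero, CharTwo.add_self_eq_zero]
  · obtain ⟨i, hi⟩ := hcycle b h1 h34
    have hpair : S (R ^ i.val • 0) + S (flip (R ^ i.val • 0)) = S 0 + S (flip 0) := by
      rw [← smul_flip, hpow, hpow, add_add_add_comm, CharTwo.add_self_eq_zero, add_zero]
    rcases block_eq_block_iff.1 ((block_evenPoint b).trans hi.symm) with h | h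
    · rwa [h]
    · rw [h, add_comm, ← hpair]
      congr 2
      exact flip.left_inv _

theorem isCommutatorIn_shear_comp_block {f : Fin 11 → ZMod 2} (hf : ∑ b, f b = 1) (h1 : f 1 = 0)
    (h3 : f 3 = 0) (h4 : f 4 = 1) : IsCommutatorIn evenSignedM11 (shear (f ∘ block) 1) := by
  refine isCommutatorIn_evenSignedM11_of_pair (ρ := 1) (α := R) (β := 1) (by group)
    fun S hR _ => ?_
  have hblock : ∀ b, block (flip (evenPoint b)) = b := by decide +kernel
  have hterm (b : Fin 11) : (S (evenPoint b) + S (flip (evenPoint b))) * f b =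
      (S 0 + S (flip 0)) * f b + if b = 4 then S 0 + S (flip 0) else 0 := by
    by_cases hb1 : b = 1
    · simp [hb1, h1]
    rw [add_flip_eq_of_R_mem hR hb1]
    rcases eq_or_ne b 3 with rfl | hb3
    · simp [h3]
    rcases eq_or_ne b 4 with rfl | hb4
    · simp [h4, CharTwo.add_self_eq_zero]
    · simp [hb3, hb4]
  rw [dotProduct, sum_eq_sum_blocks]
  simp only [Function.comp_apply, block_evenPoint, hblock, ← add_mul, hterm]
  rw [Finset.sum_add_distrib, ← Finset.mul_sum, hf]
  simp [CharTwo.add_self_eq_zero]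

theorem exists_ne_of_sum_eq_one {X : Type*} [Fintype X] (hX : Odd (Fintype.card X))
    {f : X → ZMod 2} (hf : ∑ x, f x = 1) (hne : f ≠ 1) :
    ∃ a b c, a ≠ b ∧ f a = 0 ∧ f b = 0 ∧ f c = 1 := by
  classical
  have hzero : ∀ t : ZMod 2, t ≠ 1 → t = 0 := by decide
  obtain ⟨a, ha⟩ := Function.ne_iff.1 hne
  obtain ⟨c, hc⟩ : ∃ c, f c = 1 := by
    by_contra! h
    simp [fun b => hzero _ (h b)] at hf
  by_contra! h
  have hone (b : X) (hb : b ∈ Finset.univ.erase a) : f b = 1 := by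
    by_contra hb'
    exact h a b c (Finset.ne_of_mem_erase hb).symm (hzero _ ha) (hzero _ hb') hc
  rw [← Finset.add_sum_erase _ _ (Finset.mem_univ a), hzero _ ha, Finset.sum_congr rfl hone,
    Finset.sum_const, Finset.card_erase_of_mem (Finset.mem_univ a), Finset.card_univ, zero_add,
    nsmul_one, ZMod.natCast_eq_one_iff_odd] at hf
  exact Nat.not_odd_iff_even.2 (hX.tsub_odd odd_one) hf

theorem isCommutatorIn_shear_one_of_ne_one (hu : ∑ x, u x = 0) (hne : u ≠ 1) :
    IsCommutatorIn evenSignedM11 (shear u 1) := by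
  by_cases hcol : ∃ j, column j ⬝ᵥ u = 0
  · obtain ⟨j, hj⟩ := hcol
    exact isCommutatorIn_shear_one_of_column hu hj
  have hone : ∀ t : ZMod 2, t ≠ 0 → t = 1 := by decide
  replace hcol (j : Fin 12) : column j ⬝ᵥ u = 1 := hone _ fun h => hcol ⟨j, h⟩
  have hflip := apply_flip_eq_of_column_dotProduct_eq_one hu hcol
  obtain ⟨f, rfl⟩ : ∃ f : Fin 11 → ZMod 2, u = f ∘ block := by
    refine ⟨u ∘ evenPoint, funext fun x => ?_⟩
    rcases block_eq_block_iff.1 (block_evenPoint (block x)) with h | h <;> simp [h, hflip]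
  have hf : ∑ b, f b = 1 := by
    have hmeet : ∀ b, column 0 (evenPoint b) + column 0 (flip (evenPoint b)) = 1 := by
      decide +kernel
    rw [← hcol 0, dotProduct, sum_eq_sum_blocks]
    refine Finset.sum_congr rfl fun b _ => ?_
    rw [hflip, Function.comp_apply, block_evenPoint, ← add_mul, hmeet, one_mul]
  obtain ⟨a, b, c, hab, ha, hb, hc⟩ := exists_ne_of_sum_eq_one (by decide) hf
    (by rintro rfl; exact hne rfl)
  have hac : a ≠ c := by rintro rfl; simp [ha] at hc
  have hbc : b ≠ c := by rintro rfl; simp [hb] at hc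
  obtain ⟨g, ga, gb, gc⟩ := exists_smul_triple_eq_triple (a := 1) (b := 3) (c := 4) (by decide)
    (by decide) (by decide) hab hac hbc
  refine isCommutatorIn_evenSignedM11_of_conj (ρ := 1) g⁻¹ ?_
  have hcomp : (fun x => (f ∘ block) (g⁻¹⁻¹ • x)) = (fun b => f (g • b)) ∘ block := by
    ext x
    rw [inv_inv, Function.comp_apply, block_smul, Function.comp_apply]
  rw [mul_one, mul_inv_cancel, hcomp]
  exact isCommutatorIn_shear_comp_block ((sum_smul_eq g f).trans hf) (by rw [ga, ha])
    (by rw [gb, hb]) (by rw [gc, hc])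

end BaseGroup
end Commutators

/-! ### The noncommutator -/

section Noncommutator

/-- The pairs of a block and a set of two other blocks. -/
def flags : SubMulAction M11 (Fin 11 × Finset (Fin 11)) where
  carrier := {p | p.2.card = 2 ∧ p.1 ∉ p.2}
  smul_mem' σ p hp := by
    simpa [Finset.card_smul_finset, Finset.smul_mem_smul_finset_iff] using hp

theorem card_flags : Nat.card flags = 495 := by
  change Nat.card {p : Fin 11 × Finset (Fin 11) // p.2.card = 2 ∧ p.1 ∉ p.2} = 495
  rw [Nat.card_eq_fintype_card]
  decide +kernel

/-- An involution which, together with `R`, generates the stabilizer of the block `1` and of the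
pair of blocks `{3, 4}`, a Sylow 2-subgroup. -/
def V : M11 := A * B⁻¹ * A⁻¹ * B * A

theorem exists_eq_R_pow_mul_V_pow {σ : M11} (h1 : σ • (1 : Fin 11) = 1)
    (h34 : σ • ({3, 4} : Finset (Fin 11)) = {3, 4}) :
    ∃ (i : Fin 8) (j : Fin 2), σ = R ^ i.val * V ^ j.val := by
  have himage : ∀ b ∈ ({3, 4} : Finset (Fin 11)), ∀ c ∈ ({3, 4} : Finset (Fin 11)), b ≠ c →
      ∀ d : Fin 11, d ∉ [1, b, c] → ∃ (i : Fin 8) (j : Fin 2),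
        (R ^ i.val * V ^ j.val) • (1 : Fin 11) = 1 ∧ (R ^ i.val * V ^ j.val) • (3 : Fin 11) = b ∧
        (R ^ i.val * V ^ j.val) • (4 : Fin 11) = c ∧
          (R ^ i.val * V ^ j.val) • (0 : Fin 11) = d := by decide +kernel
  have hmem {x : Fin 11} (hx : x ∈ ({3, 4} : Finset (Fin 11))) :
      σ • x ∈ ({3, 4} : Finset (Fin 11)) := h34 ▸ Finset.smul_mem_smul_finset hx
  have hne {x y : Fin 11} (hxy : x ≠ y) : σ • x ≠ σ • y := (smul_left_cancel_iff σ).not.2 hxy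
  have h0 : σ • (0 : Fin 11) ∉ [1, σ • (3 : Fin 11), σ • (4 : Fin 11)] := by
    simp only [List.mem_cons, List.not_mem_nil, or_false, not_or]
    exact ⟨h1 ▸ hne (by decide), hne (by decide), hne (by decide)⟩
  obtain ⟨i, j, hi1, hi3, hi4, hi0⟩ := himage _ (hmem (by decide)) _ (hmem (by decide))
    (hne (by decide)) _ h0
  exact ⟨i, j, eq_of_smul_quadruple_eq (a := 1) (b := 3) (c := 4) (d := 0) (by decide)
    (h1.trans hi1.symm) hi3.symm hi4.symm hi0.symm⟩

theorem exponents_eq_zero_or_exists_fixed_point : ∀ (i i' : Fin 8) (j j' : Fin 2),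
    (R ^ i.val * V ^ j.val) * (R ^ i'.val * V ^ j'.val) =
      (R ^ i'.val * V ^ j'.val) * (R ^ i.val * V ^ j.val) →
    (j = 0 ∧ j' = 0) ∨ ∃ x : Fin 22, (R ^ i.val * V ^ j.val) • x = x ∧
      (R ^ i'.val * V ^ j'.val) • x = x := by decide +kernel

theorem exists_R_mem_shiftStabilizer :
    ∃ S : Fin 22 → ZMod 2, (R : Perm (Fin 22)) ∈ shiftStabilizer S ∧ ∑ x, S x = 1 := by
  refine ⟨fun x => if x ∈ [2, 8, 9, 10, 11, 12, 13, 14, 15, 18, 19] then 1 else 0, ⟨1, ?_⟩, ?_⟩ <;>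
    decide +kernel

theorem exists_mem_shiftStabilizer_of_stabilizes {σ τ : M11} (h : Commute σ τ)
    (hσ1 : σ • (1 : Fin 11) = 1) (hσ : σ • ({3, 4} : Finset (Fin 11)) = {3, 4})
    (hτ1 : τ • (1 : Fin 11) = 1) (hτ : τ • ({3, 4} : Finset (Fin 11)) = {3, 4}) :
    ∃ S : Fin 22 → ZMod 2, (σ : Perm (Fin 22)) ∈ shiftStabilizer S ∧
      (τ : Perm (Fin 22)) ∈ shiftStabilizer S ∧ ∑ x, S x = 1 := by
  obtain ⟨i, j, rfl⟩ := exists_eq_R_pow_mul_V_pow hσ1 hσ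
  obtain ⟨i', j', rfl⟩ := exists_eq_R_pow_mul_V_pow hτ1 hτ
  rcases exponents_eq_zero_or_exists_fixed_point i i' j j' h.eq with ⟨rfl, rfl⟩ | ⟨x, hx, hx'⟩
  · obtain ⟨S, hR, hS⟩ := exists_R_mem_shiftStabilizer
    have hpow (n : ℕ) : ((R ^ n * V ^ (0 : Fin 2).val : M11) : Perm (Fin 22)) ∈
        shiftStabilizer S := by
      simpa using pow_mem hR n
    exact ⟨S, hpow i, hpow i', hS⟩
  · exact ⟨Pi.single x 1, single_mem_shiftStabilizer hx 1, single_mem_shiftStabilizer hx' 1,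
      by simp⟩

theorem exists_mem_shiftStabilizer_of_pow_two_pow_eq_one {σ τ : M11} {k : ℕ} (h : Commute σ τ)
    (hσ : σ ^ 2 ^ k = 1) (hτ : τ ^ 2 ^ k = 1) :
    ∃ S : Fin 22 → ZMod 2, (σ : Perm (Fin 22)) ∈ shiftStabilizer S ∧
      (τ : Perm (Fin 22)) ∈ shiftStabilizer S ∧ ∑ x, S x = 1 := by
  obtain ⟨⟨⟨a, s⟩, hs, ha⟩, hfix⟩ :=
    (isPGroup_zpowers_sup_zpowers h hσ hτ).nonempty_fixed_point_of_prime_not_dvd_card flags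
      (by rw [card_flags]; decide)
  obtain ⟨b, c, hbc, rfl⟩ := Finset.card_eq_two.1 hs
  simp only [Finset.mem_insert, Finset.mem_singleton, not_or] at ha
  obtain ⟨g, ga, gb, gc⟩ := exists_smul_triple_eq_triple ha.1 ha.2 hbc (a' := 1) (b' := 3)
    (c' := 4) (by decide) (by decide) (by decide)
  have hg34 : g • ({b, c} : Finset (Fin 11)) = {3, 4} := by
    rw [Finset.smul_finset_insert, Finset.smul_finset_singleton, gb, gc]
  have hconj {π : M11} (hπ : π ∈ Subgroup.zpowers σ ⊔ Subgroup.zpowers τ) :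
      (g * π * g⁻¹) • (1 : Fin 11) = 1 ∧
        (g * π * g⁻¹) • ({3, 4} : Finset (Fin 11)) = {3, 4} := by
    have hflag := congrArg Subtype.val (hfix ⟨π, hπ⟩)
    exact ⟨conj_smul_eq ga ga (congrArg Prod.fst hflag),
      conj_smul_eq hg34 hg34 (congrArg Prod.snd hflag)⟩
  have hσg := hconj (Subgroup.mem_sup_left (Subgroup.mem_zpowers σ))
  have hτg := hconj (Subgroup.mem_sup_right (Subgroup.mem_zpowers τ))
  obtain ⟨S, hσS, hτS, hS⟩ := exists_mem_shiftStabilizer_of_stabilizes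
    ((Commute.conj_iff g).2 h) hσg.1 hσg.2 hτg.1 hτg.2
  have hback {π : M11} (hπ : ((g * π * g⁻¹ : M11) : Perm (Fin 22)) ∈ shiftStabilizer S) :
      (π : Perm (Fin 22)) ∈ shiftStabilizer (S ∘ (g : Perm (Fin 22))) := by
    simpa [mul_assoc] using comp_mem_shiftStabilizer (τ := (g : Perm (Fin 22))) hπ
  exact ⟨_, hback hσS, hback hτS, (sum_smul_eq g S).trans hS⟩

-- The powers with exponent the odd part of the group order have 2-power order.
theorem exists_mem_shiftStabilizer_of_commute {σ τ : M11} (h : Commute σ τ) :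
    ∃ S : Fin 22 → ZMod 2, (σ : Perm (Fin 22)) ∈ shiftStabilizer S ∧
      (τ : Perm (Fin 22)) ∈ shiftStabilizer S ∧ ∑ x, S x = 1 := by
  obtain ⟨k, m, hm, hcard⟩ := Nat.exists_eq_two_pow_mul_odd (n := Nat.card M11) Nat.card_pos.ne'
  have hpow (π : M11) : (π ^ m) ^ 2 ^ k = 1 := by
    rw [← pow_mul, mul_comm, ← hcard, pow_card_eq_one']
  obtain ⟨S, hσ, hτ, hS⟩ := exists_mem_shiftStabilizer_of_pow_two_pow_eq_one (h.pow_pow m m)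
    (hpow σ) (hpow τ)
  obtain ⟨S', hσ', hτ', hS'⟩ := exists_mem_shiftStabilizer_of_pow_mem
    (h.map M11.subtype) hσ hτ
  refine ⟨S', hσ', hτ', ?_⟩
  rw [hS', hS, nsmul_one, nsmul_eq_mul, ← Nat.cast_mul, ZMod.natCast_eq_one_iff_odd]
  exact hm.mul hm

theorem not_isCommutatorIn_shear_one_one :
    ¬ IsCommutatorIn evenSignedM11 (shear (fun _ => 1) 1) := by
  rw [isCommutatorIn_zeroSumShears_iff]
  rintro ⟨α, hα, β, hβ, hcomm, hS⟩
  rw [eq_inv_mul_inv_mul_mul_iff, mul_one] at hcomm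
  obtain ⟨S, hαS, hβS, hsum⟩ := exists_mem_shiftStabilizer_of_commute
    (σ := ⟨α, hα⟩) (τ := ⟨β, hβ⟩) (Subtype.ext hcomm.symm)
  have := hS S hαS hβS
  simp [dotProduct, hsum] at this

end Noncommutator

/-! ### Identification with the zero-sum wreath product -/

section Identification

/-- The labels `2i + 1` and `2i + 2` correspond to `(i, 0)` and `(i, 1)`; the label `44` is
`0 : Fin 44`. -/
def pointEquiv : Fin 44 ≃ Fin 22 × ZMod 2 where
  toFun x := (⟨(x + 43) % 44 / 2, by lia⟩, (⟨(x + 43) % 44 % 2, by lia⟩ : Fin 2))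
  invFun p := ⟨(2 * (p.1 : ℕ) + (show Fin 2 from p.2 : ℕ) + 1) % 44, Nat.mod_lt _ (by simp)⟩
  left_inv := by unfold Function.LeftInverse; decide +kernel
  right_inv := by unfold Function.RightInverse Function.LeftInverse; decide +kernel

theorem permCongrHom_eq_shear {g : Perm (Fin 44)} {v : Fin 22 → ZMod 2} {σ : Perm (Fin 22)}
    (h : ∀ p, pointEquiv (g (pointEquiv.symm p)) = (σ p.1, p.2 + v p.1)) :
    pointEquiv.permCongrHom g = shear v σ :=
  Equiv.ext h

theorem permCongrHom_g1 :
    pointEquiv.permCongrHom g1 = shear (Pi.single 0 1 - Pi.single 21 1) 1 :=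
  permCongrHom_eq_shear (by decide +kernel)

theorem permCongrHom_g2 :
    pointEquiv.permCongrHom g2 = shear (Pi.single 0 1 - Pi.single 10 1) 1 :=
  permCongrHom_eq_shear (by decide +kernel)

theorem permCongrHom_g3 : pointEquiv.permCongrHom g3 = shear 0 A :=
  permCongrHom_eq_shear (by decide +kernel)

theorem permCongrHom_g4 :
    pointEquiv.permCongrHom g4 = shear (Pi.single 1 1 - Pi.single 2 1) B :=
  permCongrHom_eq_shear (by decide +kernel)

/-- `GMacHale` as a group of permutations of `Fin 22 × ZMod 2`. -/
def imageGMacHale : Subgroup (Perm (Fin 22 × ZMod 2)) :=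
  GMacHale.map pointEquiv.permCongrHom.toMonoidHom

theorem imageGMacHale_eq_closure :
    imageGMacHale = Subgroup.closure {shear (Pi.single 0 1 - Pi.single 21 1) 1,
      shear (Pi.single 0 1 - Pi.single 10 1) 1, shear 0 A,
      shear (Pi.single 1 1 - Pi.single 2 1) B} := by
  rw [imageGMacHale, GMacHale, MonoidHom.map_closure]
  simp only [Set.image_insert_eq, Set.image_singleton, MulEquiv.toMonoidHom_eq_coe,
    MonoidHom.coe_coe, permCongrHom_g1, permCongrHom_g2, permCongrHom_g3, permCongrHom_g4]

theorem imageGMacHale_le : imageGMacHale ≤ evenSignedM11 := by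
  rw [imageGMacHale_eq_closure, Subgroup.closure_le]
  simp only [Set.insert_subset_iff, Set.singleton_subset_iff, SetLike.mem_coe,
    shear_mem_zeroSumShears]
  simp [A.2, B.2, M11.one_mem]

theorem exists_shear_mem_imageGMacHale (σ : M11) : ∃ v, shear v σ ∈ imageGMacHale := by
  induction σ using M11_induction with
  | hA => exact ⟨0, imageGMacHale_eq_closure ▸ Subgroup.subset_closure (by simp)⟩
  | hB =>
    exact ⟨Pi.single 1 1 - Pi.single 2 1, imageGMacHale_eq_closure ▸
      Subgroup.subset_closure (by simp)⟩
  | one => exact ⟨0, shear_zero_one (X := Fin 22) (R := ZMod 2) ▸ imageGMacHale.one_mem⟩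
  | mul σ τ hσ hτ =>
    obtain ⟨⟨v, hv⟩, ⟨w, hw⟩⟩ := hσ, hτ
    exact ⟨_, shear_mul_shear v w σ τ ▸ imageGMacHale.mul_mem hv hw⟩
  | inv σ hσ =>
    obtain ⟨v, hv⟩ := hσ
    exact ⟨_, shear_inv v (σ : Perm (Fin 22)) ▸ imageGMacHale.inv_mem hv⟩

theorem linked_iff_of_zmod_two {X : Type*} [DecidableEq X] {K : Subgroup (Perm (X × ZMod 2))}
    {i j : X} : Linked K i j ↔ shear (Pi.single i 1 - Pi.single j 1) 1 ∈ K := by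
  refine ⟨fun h => h 1, fun h r => ?_⟩
  have hr : ∀ r : ZMod 2, r = 0 ∨ r = 1 := by decide
  rcases hr r with rfl | rfl
  · simp [shear_zero_one, K.one_mem]
  · exact h

theorem linked_smul {i j : Fin 22} (h : Linked imageGMacHale i j) (σ : M11) :
    Linked imageGMacHale (σ • i) (σ • j) := by
  obtain ⟨v, hv⟩ := exists_shear_mem_imageGMacHale σ
  exact h.map hv

-- `(A ^ 2 * B⁻¹) ^ 2` fixes `0` and maps `21` to `A • 0` and `10` to `B • 0`.
theorem linked_smul_zero (σ : M11) : Linked imageGMacHale (σ • 0) 0 := by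
  have hgen {i : Fin 22} (h : shear (Pi.single 0 1 - Pi.single i 1) 1 ∈ imageGMacHale) :
      Linked imageGMacHale ((A ^ 2 * B⁻¹) ^ 2 • i) 0 := by
    have hfix : (A ^ 2 * B⁻¹) ^ 2 • (0 : Fin 22) = 0 := by decide +kernel
    have := linked_smul (linked_iff_of_zmod_two.2 h).symm ((A ^ 2 * B⁻¹) ^ 2)
    rwa [hfix] at this
  induction σ using M11_induction with
  | hA =>
    rw [show A • (0 : Fin 22) = (A ^ 2 * B⁻¹) ^ 2 • 21 by decide +kernel]
    exact hgen (imageGMacHale_eq_closure ▸ Subgroup.subset_closure (by simp))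
  | hB =>
    rw [show B • (0 : Fin 22) = (A ^ 2 * B⁻¹) ^ 2 • 10 by decide +kernel]
    exact hgen (imageGMacHale_eq_closure ▸ Subgroup.subset_closure (by simp))
  | one => exact linked_iff_of_zmod_two.2 (by simp [shear_zero_one, imageGMacHale.one_mem])
  | mul σ τ hσ hτ => exact mul_smul σ τ (0 : Fin 22) ▸ (linked_smul hτ σ).trans hσ
  | inv σ hσ => simpa using (linked_smul hσ σ⁻¹).symm

theorem imageGMacHale_eq : imageGMacHale = evenSignedM11 := by
  refine le_antisymm imageGMacHale_le (zeroSumShears_le (x₀ := 0) imageGMacHale_le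
    (fun σ hσ => exists_shear_mem_imageGMacHale ⟨σ, hσ⟩) fun x => ?_)
  obtain ⟨σ, rfl⟩ := MulAction.exists_smul_eq M11 0 x
  exact linked_smul_zero σ

/-- The isomorphism of `GMacHale` with the zero-sum part of `ZMod 2 ≀ M11`. -/
noncomputable def equivEvenSignedM11 : GMacHale ≃* evenSignedM11 :=
  (pointEquiv.permCongrHom.subgroupMap GMacHale).trans
    (MulEquiv.subgroupCongr imageGMacHale_eq)

end Identification

section Main

/-- `t` is both the unique noncommutator and the unique nonidentity central element. -/
structure IsNoncommutatorCenter {H : Type*} [Group H] (t : H) : Prop where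
  commutator_iff (x : H) : (∃ a b, x = a⁻¹ * b⁻¹ * a * b) ↔ x ≠ t
  ne_one : t ≠ 1
  mem_center_iff (z : H) : z ∈ Subgroup.center H ↔ z = 1 ∨ z = t

theorem IsNoncommutatorCenter.map {H H' : Type*} [Group H] [Group H'] {t : H}
    (ht : IsNoncommutatorCenter t) (e : H ≃* H') : IsNoncommutatorCenter (e t) where
  commutator_iff x := by
    obtain ⟨x, rfl⟩ := e.surjective x
    rw [e.injective.ne_iff, ← ht.commutator_iff]
    simp only [e.surjective.exists, ← map_inv, ← map_mul, e.injective.eq_iff]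
  ne_one := by simpa using ht.ne_one
  mem_center_iff z := by
    obtain ⟨z, rfl⟩ := e.surjective z
    rw [e.injective.eq_iff, map_eq_one_iff e e.injective, ← ht.mem_center_iff]
    exact MulEquivClass.apply_mem_center_iff e

theorem isCommutatorIn_evenSignedM11_iff {g : Perm (Fin 22 × ZMod 2)} (hg : g ∈ evenSignedM11) :
    IsCommutatorIn evenSignedM11 g ↔ g ≠ shear (fun _ => 1) 1 := by
  refine ⟨?_, fun hne => ?_⟩
  · rintro h rfl
    exact not_isCommutatorIn_shear_one_one h
  obtain ⟨u, ρ, hu, hρ, rfl⟩ := hg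
  rcases eq_or_ne ρ 1 with rfl | hρ1
  · exact isCommutatorIn_shear_one_of_ne_one hu (by rintro rfl; exact hne rfl)
  · exact isCommutatorIn_shear_of_perm_ne_one (ρ := ⟨ρ, hρ⟩)
      (by simpa [Subtype.ext_iff] using hρ1) hu

theorem isNoncommutatorCenter_shear_one_one
    (ht : shear (fun _ => 1) 1 ∈ evenSignedM11) :
    IsNoncommutatorCenter (⟨shear (fun _ => 1) 1, ht⟩ : evenSignedM11) where
  commutator_iff x := by
    rw [← isCommutatorIn_coe, isCommutatorIn_evenSignedM11_iff x.2, ne_eq, ne_eq, Subtype.ext_iff]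
  ne_one h := by
    have hshear : shear (fun _ => 1) 1 = shear (0 : Fin 22 → ZMod 2) 1 :=
      (congrArg Subtype.val h).trans shear_zero_one.symm
    exact one_ne_zero (congrFun (shear_inj.1 hshear).1 0)
  mem_center_iff z := by
    rw [Subgroup.mem_center_iff]
    refine ⟨fun hz => ?_, ?_⟩
    · obtain ⟨c, hc⟩ := exists_eq_shear_const_one_of_forall_commute (by simp) z.2
        fun g hg => (congrArg Subtype.val (hz ⟨g, hg⟩)).symm
      have h01 : ∀ c : ZMod 2, c = 0 ∨ c = 1 := by decide
      rcases h01 c with rfl | rfl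
      · exact Or.inl (Subtype.ext (hc.trans shear_zero_one))
      · exact Or.inr (Subtype.ext hc)
    · rintro (rfl | rfl) ⟨_, v, σ, -, -, rfl⟩
      · simp
      · exact Subtype.ext (commute_shear_const_one 1 v σ).symm.eq

theorem exists_isNoncommutatorCenter_GMacHale : ∃ t : GMacHale, IsNoncommutatorCenter t :=
  ⟨_, (isNoncommutatorCenter_shear_one_one
    (shear_mem_zeroSumShears.2 ⟨by decide, M11.one_mem⟩)).map equivEvenSignedM11.symm⟩

end Main

end MacHale

/-- The unique noncommutator of the group `G_MacHale` is its unique nonidentity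
central element. -/
theorem stmt_15 :
    ∃ t : GMacHale,
      (¬ ∃ a b : GMacHale, t = a⁻¹ * b⁻¹ * a * b) ∧
      (∀ x : GMacHale, (¬ ∃ a b : GMacHale, x = a⁻¹ * b⁻¹ * a * b) → x = t) ∧
      t ∈ Subgroup.center GMacHale ∧ t ≠ 1 ∧
      ∀ z ∈ Subgroup.center GMacHale, z ≠ 1 → z = t := by
  obtain ⟨t, ht⟩ := MacHale.exists_isNoncommutatorCenter_GMacHale
  refine ⟨t, ?_, ?_, ?_, ht.ne_one, ?_⟩
  · rw [ht.commutator_iff]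
    exact fun h => h rfl
  · exact fun x hx => not_ne_iff.1 ((ht.commutator_iff x).not.1 hx)
  · exact (ht.mem_center_iff t).2 (Or.inr rfl)
  · exact fun z hz hz1 => ((ht.mem_center_iff z).1 hz).resolve_left hz1
end
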